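/- arXiv:math/0409586 — 6 statements merged into one kernel-verified Lean document; each statement's English description precedes it below -/
import Mathlib

section
/- Strong Jordan separation, separation part: Let f : S¹ → S² be a continuous map, and let I(f) = {p ∈ S¹ : f⁻¹({f(p)}) = {p}} be its set of injective points. If I(f) contains a nonempty open subset of S¹, then the complement S² \ f(S¹) is not connected (i.e. f(S¹) separates S² into at least two connected components). -/
open Metric Set

noncomputable section

/-- The unit circle in the Euclidean plane. -/
def circleS : Set (EuclideanSpace ℝ (Fin 2)) := Metric.sphere 0 1

/-- The unit sphere in Euclidean 3-space. -/
def sphereS : Set (EuclideanSpace ℝ (Fin 3)) := Metric.sphere 0 1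

/-- The set of injective points of `f : S¹ → S²`: points `p` of the circle such that the only
point of the circle mapping to `f p` is `p` itself. -/
def injPts (f : EuclideanSpace ℝ (Fin 2) → EuclideanSpace ℝ (Fin 3)) :
    Set (EuclideanSpace ℝ (Fin 2)) :=
  {p | p ∈ circleS ∧ ∀ q ∈ circleS, f q = f p → q = p}

open Topology unitInterval

lemma sj_log_homotopy {Z : Type*} [TopologicalSpace Z] (H : I × Z → ℂ) (hH : Continuous H)
    (h0 : ∀ p, H p ≠ 0) (h1 : ∀ z, H (0, z) = 1) :
    ∃ L : Z → ℂ, Continuous L ∧ ∀ z, Complex.exp (L z) = H (1, z) := by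
  have cov := Complex.isCoveringMap_exp
  let H' : C(I × Z, {z : ℂ // z ≠ 0}) := ⟨fun p => ⟨H p, h0 p⟩, by fun_prop⟩
  have hz : ∀ a, H' (0, a) =
      (fun z : ℂ ↦ (⟨_, z.exp_ne_zero⟩ : {z : ℂ // z ≠ 0})) ((ContinuousMap.const Z (0 : ℂ)) a) := by
    intro a
    apply Subtype.ext
    simp [H', h1]
  refine ⟨fun z => cov.liftHomotopy H' (ContinuousMap.const Z (0 : ℂ)) hz (1, z), by fun_prop, ?_⟩
  intro z
  have := congr_fun (cov.liftHomotopy_lifts H' (ContinuousMap.const Z (0 : ℂ)) hz) (1, z)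
  exact congrArg Subtype.val this

lemma sj_log_unique {Z : Type*} [TopologicalSpace Z] {S : Set Z} (hS : IsPreconnected S)
    {L₁ L₂ : Z → ℂ} (h1 : ContinuousOn L₁ S) (h2 : ContinuousOn L₂ S)
    (he : ∀ z ∈ S, Complex.exp (L₁ z) = Complex.exp (L₂ z)) :
    ∃ c, Complex.exp c = 1 ∧ ∀ z ∈ S, L₁ z = L₂ z + c := by
  rcases S.eq_empty_or_nonempty with rfl | ⟨a, ha⟩
  · exact ⟨0, by simp, by simp⟩
  have hc : Complex.exp (L₁ a - L₂ a) = 1 := by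
    rw [Complex.exp_sub, he a ha, div_self (Complex.exp_ne_zero _)]
  refine ⟨L₁ a - L₂ a, hc, ?_⟩
  refine Complex.isCoveringMap_exp.eqOn_of_comp_eqOn hS h1
    (g₂ := fun z => L₂ z + (L₁ a - L₂ a)) (by fun_prop) ?_ ha (by ring)
  intro z hz
  apply Subtype.ext
  simp only [Function.comp]
  rw [Complex.exp_add, hc, mul_one, he z hz]

lemma sj_no_log (L : ℂ → ℂ) (hL : ContinuousOn L {0}ᶜ) (he : ∀ z ≠ 0, Complex.exp (L z) = z) :
    False := by
  obtain ⟨c, -, hc⟩ := sj_log_unique (S := (univ : Set ℝ)) isPreconnected_univ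
    (L₁ := fun t : ℝ => L (Complex.exp (t * Complex.I))) (L₂ := fun t : ℝ => t * Complex.I)
    (hL.comp (by fun_prop) (fun t _ => Complex.exp_ne_zero _)) (by fun_prop)
    (fun t _ => he _ (Complex.exp_ne_zero _))
  have a := hc 0 trivial
  have b := hc (2 * Real.pi) trivial
  simp only [Complex.ofReal_mul, Complex.ofReal_ofNat, Complex.exp_two_pi_mul_I, Complex.ofReal_zero,
    zero_mul, Complex.exp_zero] at a b
  rw [a] at b
  have : (2 * Real.pi * Complex.I : ℂ) = 0 := by linear_combination -b
  simp [Real.pi_ne_zero] at this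

def sjVal (p : OnePoint ℂ) : ℂ := p.elim 0 id
def sjInv (p : OnePoint ℂ) : ℂ := p.elim 0 (fun z => z⁻¹)

lemma sjVal_cont : ContinuousOn sjVal {OnePoint.infty}ᶜ := by
  intro p hp
  apply ContinuousAt.continuousWithinAt
  induction p using OnePoint.rec with
  | infty => simp at hp
  | coe z => 
    rw [OnePoint.continuousAt_coe]
    exact continuousAt_id

lemma sjInv_cont : ContinuousOn sjInv {((0 : ℂ) : OnePoint ℂ)}ᶜ := by
  intro p hp
  apply ContinuousAt.continuousWithinAt
  induction p using OnePoint.rec with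
  | infty =>
    rw [OnePoint.continuousAt_infty', Filter.coclosedCompact_eq_cocompact,
      ← Metric.cobounded_eq_cocompact]
    exact Filter.tendsto_inv₀_cobounded
  | coe z => 
    rw [OnePoint.continuousAt_coe]
    exact continuousAt_inv₀ (by simpa using hp)

lemma sj_arc (γ : I → OnePoint ℂ) (hγ : Continuous γ) (h0 : γ 0 = ((0 : ℂ) : OnePoint ℂ))
    (h1 : γ 1 = OnePoint.infty) (h0' : ∀ t, t ≠ 0 → γ t ≠ ((0 : ℂ) : OnePoint ℂ))
    (h1' : ∀ t, t ≠ 1 → γ t ≠ OnePoint.infty) :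
    ∃ L : ℂ → ℂ, ContinuousOn L {z : ℂ | (z : OnePoint ℂ) ∉ range γ} ∧
      ∀ z : ℂ, (z : OnePoint ℂ) ∉ range γ → Complex.exp (L z) = z := by
  let Z := {z : ℂ | (z : OnePoint ℂ) ∉ range γ}
  let a : I → I := fun t => ⟨t / 2, by constructor <;> linarith [t.2.1, t.2.2]⟩
  let b : I → I := fun t => ⟨1 - t / 2, by constructor <;> linarith [t.2.1, t.2.2]⟩
  have ha : Continuous a := by fun_prop
  have hb : Continuous b := by fun_prop
  have ha1 : ∀ t, γ (a t) ≠ OnePoint.infty := fun t => h1' _ (by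
    intro h; have := congrArg Subtype.val h; simp [a] at this; linarith [t.2.1, t.2.2])
  have hb0 : ∀ t, γ (b t) ≠ ((0 : ℂ) : OnePoint ℂ) := fun t => h0' _ (by
    intro h; have := congrArg Subtype.val h; simp [b] at this; linarith [t.2.1, t.2.2])
  have hab : b 1 = a 1 := by apply Subtype.ext; simp [a, b]; norm_num
  have ha0 : a 0 = 0 := by apply Subtype.ext; simp [a]
  have hb1 : b 0 = 1 := by apply Subtype.ext; simp [b]
  have hZ0 : ∀ z : Z, (z : ℂ) ≠ 0 := fun z hz => z.2 ⟨0, by rw [h0, hz]⟩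
  have hva : Continuous fun t => sjVal (γ (a t)) :=
    sjVal_cont.comp_continuous (by fun_prop) (fun t => ha1 t)
  have hvb : Continuous fun t => sjInv (γ (b t)) :=
    sjInv_cont.comp_continuous (by fun_prop) (fun t => hb0 t)
  have hval : ∀ p : OnePoint ℂ, p ≠ OnePoint.infty → ((sjVal p : ℂ) : OnePoint ℂ) = p := by
    intro p hp
    induction p using OnePoint.rec with
    | infty => simp at hp
    | coe z => rfl
  obtain ⟨L1, hL1, e1⟩ := sj_log_homotopy (Z := Z)
    (fun p => (p.2 - sjVal (γ (a p.1))) / p.2)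
    (by
      refine Continuous.div ?_ (by fun_prop) (fun p => hZ0 p.2)
      exact (by fun_prop : Continuous fun p : I × Z => (p.2 : ℂ)).sub (hva.comp continuous_fst))
    (by
      rintro ⟨t, z⟩
      refine div_ne_zero (fun h => ?_) (hZ0 z)
      refine z.2 ⟨a t, ?_⟩
      rw [← hval _ (ha1 t), ← sub_eq_zero.1 h])
    (by
      intro z
      simp only [ha0, h0]
      have : sjVal ((0 : ℂ) : OnePoint ℂ) = 0 := rfl
      rw [this, sub_zero, div_self (hZ0 z)])
  obtain ⟨L2, hL2, e2⟩ := sj_log_homotopy (Z := Z)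
    (fun p => 1 - p.2 * sjInv (γ (b p.1)))
    (by
      refine continuous_const.sub (Continuous.mul (by fun_prop) (hvb.comp continuous_fst)))
    (by
      rintro ⟨t, z⟩ h
      refine z.2 ⟨b t, ?_⟩
      have h' := hb0 t
      simp only at h
      generalize γ (b t) = p at h h'
      induction p using OnePoint.rec with
      | infty => simp [sjInv] at h
      | coe w =>
        have hw : w ≠ 0 := by simpa using h'
        simp only [sjInv, OnePoint.elim_some] at h
        congr 1
        field_simp at h
        linear_combination h)
    (by
      intro z
      simp [hb1, h1, sjInv])
  set w := sjVal (γ (a 1)) with hw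
  have hγw : γ (a 1) = (w : OnePoint ℂ) := (hval _ (ha1 1)).symm
  have hw0 : w ≠ 0 := by
    intro h
    apply hb0 1
    rw [hab, hγw, h]
  have e : ∀ z : Z, Complex.exp (L2 z - L1 z + Complex.log (-w)) = z := by
    intro z
    rw [Complex.exp_add, Complex.exp_sub, e1, e2, Complex.exp_log (neg_ne_zero.2 hw0), hab, hγw]
    have : sjInv (w : OnePoint ℂ) = w⁻¹ := rfl
    have hv : sjVal (w : OnePoint ℂ) = w := rfl
    have hz := hZ0 z
    have hzw : (z : ℂ) - w ≠ 0 := fun h => z.2 ⟨a 1, by rw [hγw, sub_eq_zero.1 h]⟩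
    simp only [this, hv]
    field_simp
    ring
  classical
  refine ⟨fun z => if h : z ∈ Z then L2 ⟨z, h⟩ - L1 ⟨z, h⟩ + Complex.log (-w) else 0, ?_, ?_⟩
  · rw [continuousOn_iff_continuous_domRestrict]
    have : Continuous fun z : Z => L2 z - L1 z + Complex.log (-w) := by fun_prop
    convert! this using 2 with z
    exact dif_pos z.2
  · intro z hz
    have hz' : z ∈ Z := hz
    simp only [hz', dif_pos]
    exact e ⟨z, hz'⟩

lemma sj_plane (γ₁ γ₂ : I → OnePoint ℂ) (hγ₁ : Continuous γ₁) (hγ₂ : Continuous γ₂)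
    (h0 : γ₁ 0 = ((0 : ℂ) : OnePoint ℂ))
    (h1 : γ₁ 1 = OnePoint.infty) (h0' : ∀ t, t ≠ 0 → γ₁ t ≠ ((0 : ℂ) : OnePoint ℂ))
    (h1' : ∀ t, t ≠ 1 → γ₁ t ≠ OnePoint.infty)
    (k0 : γ₂ 0 = ((0 : ℂ) : OnePoint ℂ))
    (k1 : γ₂ 1 = OnePoint.infty) (k0' : ∀ t, t ≠ 0 → γ₂ t ≠ ((0 : ℂ) : OnePoint ℂ))
    (k1' : ∀ t, t ≠ 1 → γ₂ t ≠ OnePoint.infty)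
    (hdisj : ∀ p, p ∈ range γ₁ → p ∈ range γ₂ → p = ((0 : ℂ) : OnePoint ℂ) ∨ p = OnePoint.infty)
    (hconn : IsPreconnected (range γ₁ ∪ range γ₂)ᶜ) : False := by
  obtain ⟨L1, c1, e1⟩ := sj_arc γ₁ hγ₁ h0 h1 h0' h1'
  obtain ⟨L2, c2, e2⟩ := sj_arc γ₂ hγ₂ k0 k1 k0' k1'
  set O1 := {z : ℂ | (z : OnePoint ℂ) ∉ range γ₁} with hO1
  set O2 := {z : ℂ | (z : OnePoint ℂ) ∉ range γ₂} with hO2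
  have o1 : IsOpen O1 := (isCompact_range hγ₁).isClosed.isOpen_compl.preimage OnePoint.continuous_coe
  have o2 : IsOpen O2 := (isCompact_range hγ₂).isClosed.isOpen_compl.preimage OnePoint.continuous_coe
  have hc : IsPreconnected (O1 ∩ O2) := by
    rw [← OnePoint.isOpenEmbedding_coe.isInducing.isPreconnected_image]
    convert! hconn using 1
    ext p
    constructor
    · rintro ⟨z, ⟨hz1, hz2⟩, rfl⟩ h
      exact h.elim hz1 hz2
    · intro h
      induction p using OnePoint.rec with
      | infty => exact (h (Or.inl ⟨1, h1⟩)).elim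
      | coe z => exact ⟨z, ⟨fun q => h (Or.inl q), fun q => h (Or.inr q)⟩, rfl⟩
  obtain ⟨c, hc1, hc2⟩ := sj_log_unique hc (c1.mono inter_subset_left) (c2.mono inter_subset_right)
    (fun z hz => by rw [e1 z hz.1, e2 z hz.2])
  have cover : ∀ z : ℂ, z ≠ 0 → z ∈ O1 ∨ z ∈ O2 := by
    intro z hz
    by_contra! h
    rcases hdisj z (not_not.1 h.1) (not_not.1 h.2) with h | h
    · exact hz (by simpa using h)
    · exact OnePoint.coe_ne_infty z h
  classical
  refine sj_no_log (fun z => if z ∈ O1 then L1 z else L2 z + c) ?_ ?_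
  · intro z hz
    apply ContinuousAt.continuousWithinAt
    rcases cover z hz with h | h
    · refine (c1.continuousAt (o1.mem_nhds h)).congr ?_
      filter_upwards [o1.mem_nhds h] with y hy
      rw [if_pos hy]
    · refine ((c2.continuousAt (o2.mem_nhds h)).add_const c).congr ?_
      filter_upwards [o2.mem_nhds h] with y hy
      split_ifs with h'
      · rw [hc2 y ⟨h', hy⟩]
      · rfl
  · intro z hz
    split_ifs with h'
    · exact e1 z h'
    · rw [Complex.exp_add, hc1, mul_one, e2 z ((cover z hz).resolve_left h')]

lemma sj_homeo (a b : sphere (0 : EuclideanSpace ℝ (Fin 3)) 1) (hab : a ≠ b) :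
    ∃ H : OnePoint ℂ ≃ₜ sphere (0 : EuclideanSpace ℝ (Fin 3)) 1,
      H ((0 : ℂ) : OnePoint ℂ) = a ∧ H OnePoint.infty = b := by
  have hb : ‖(b : EuclideanSpace ℝ (Fin 3))‖ = 1 := by simp
  have : Fact (Module.finrank ℝ (EuclideanSpace ℝ (Fin 3)) = 2 + 1) := ⟨by simp⟩
  have hfin : Module.finrank ℝ (Submodule.span ℝ {(b : EuclideanSpace ℝ (Fin 3))})ᗮ = 2 :=
    Submodule.finrank_orthogonal_span_singleton (by
      intro h; rw [h] at hb; simp at hb)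
  let φ : ℂ ≃L[ℝ] (Submodule.span ℝ {(b : EuclideanSpace ℝ (Fin 3))})ᗮ :=
    ContinuousLinearEquiv.ofFinrankEq (by rw [hfin, Complex.finrank_real_complex])
  have hr : range (stereographic hb).symm = {b}ᶜ := range_stereographic_symm hb b.2
  obtain ⟨x, hx⟩ : a ∈ range (stereographic hb).symm := by rw [hr]; exact hab
  let ψ : ℂ ≃ₜ (Submodule.span ℝ {(b : EuclideanSpace ℝ (Fin 3))})ᗮ :=
    φ.toHomeomorph.trans (Homeomorph.addRight x)
  have hemb : IsEmbedding ((stereographic hb).symm ∘ ψ) :=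
    (isOpenEmbedding_stereographic_symm hb).isEmbedding.comp ψ.isEmbedding
  have hrange : range ((stereographic hb).symm ∘ ψ) = {b}ᶜ := by
    rw [ψ.surjective.range_comp, hr]
  refine ⟨OnePoint.equivOfIsEmbeddingOfRangeEq b _ hemb hrange, ?_, ?_⟩
  · rw [OnePoint.equivOfIsEmbeddingOfRangeEq_apply_coe]
    simp [ψ, hx]
  · simp

def sjCirc (θ : ℝ) : EuclideanSpace ℝ (Fin 2) := !₂[Real.cos θ, Real.sin θ]

lemma sjCirc_cont : Continuous sjCirc := by
  unfold sjCirc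
  apply (PiLp.continuous_toLp 2 _).comp
  apply continuous_pi
  intro i
  fin_cases i
  · exact Real.continuous_cos
  · exact Real.continuous_sin

lemma sjCirc_mem (θ : ℝ) : sjCirc θ ∈ circleS := by
  simp [circleS, sjCirc, EuclideanSpace.norm_eq]

lemma sjCirc_inj {α β : ℝ} (h : sjCirc α = sjCirc β) : ∃ n : ℤ, α - β = n * (2 * Real.pi) := by
  have hc : Real.cos α = Real.cos β := by simpa [sjCirc] using congrArg (fun v => v 0) h
  have hs : Real.sin α = Real.sin β := by simpa [sjCirc] using congrArg (fun v => v 1) h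
  have : Real.cos (α - β) = 1 := by
    rw [Real.cos_sub, hc, hs]; nlinarith [Real.sin_sq_add_cos_sq β]
  obtain ⟨n, hn⟩ := (Real.cos_eq_one_iff _).1 this
  exact ⟨n, hn.symm⟩

lemma sjCirc_surj (x : ℝ) {p : EuclideanSpace ℝ (Fin 2)} (hp : p ∈ circleS) :
    ∃ θ, x ≤ θ ∧ θ < x + 2 * Real.pi ∧ sjCirc θ = p := by
  have h1 : p 0 ^ 2 + p 1 ^ 2 = 1 := by
    have : ‖p‖ = 1 := by simpa [circleS] using hp
    have h2 := EuclideanSpace.real_norm_sq_eq p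
    rw [this, Fin.sum_univ_two] at h2
    linarith
  have hn : ‖(⟨p 0, p 1⟩ : ℂ)‖ = 1 := by
    rw [← sq_eq_sq₀ (norm_nonneg _) zero_le_one, ← Complex.normSq_eq_norm_sq, Complex.normSq_mk]
    linarith
  have hz : (⟨p 0, p 1⟩ : ℂ) ≠ 0 := by
    intro h; rw [h] at hn; simp at hn
  set φ := Complex.arg ⟨p 0, p 1⟩ with hφ
  have hcos : Real.cos φ = p 0 := by rw [hφ, Complex.cos_arg hz, hn]; simp
  have hsin : Real.sin φ = p 1 := by rw [hφ, Complex.sin_arg, hn]; simp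
  have hmem := toIcoMod_mem_Ico Real.two_pi_pos x φ
  refine ⟨toIcoMod Real.two_pi_pos x φ, hmem.1, hmem.2, ?_⟩
  have hm : toIcoMod Real.two_pi_pos x φ = φ - toIcoDiv Real.two_pi_pos x φ * (2 * Real.pi) := by
    rw [toIcoMod, zsmul_eq_mul]
  ext i
  fin_cases i
  · change Real.cos (toIcoMod Real.two_pi_pos x φ) = p 0
    rw [hm, Real.cos_sub_int_mul_two_pi, hcos]
  · change Real.sin (toIcoMod Real.two_pi_pos x φ) = p 1
    rw [hm, Real.sin_sub_int_mul_two_pi, hsin]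

lemma sj_small {x : ℝ} {n : ℤ} (h : x = n * (2 * Real.pi)) (h1 : -(2 * Real.pi) < x)
    (h2 : x < 2 * Real.pi) : x = 0 := by
  have hp := Real.two_pi_pos
  have a : (-1 : ℝ) < n := by nlinarith
  have b : (n : ℝ) < 1 := by nlinarith
  have a' : -1 < n := by exact_mod_cast a
  have b' : n < 1 := by exact_mod_cast b
  obtain rfl : n = 0 := by omega
  simpa using h

/-- **Strong Jordan separation, separation part.**  If `f : S¹ → S²` is continuous and its set
of injective points contains a nonempty (relatively) open subset of `S¹`, then `S² \ f(S¹)` is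
not connected. -/
theorem strong_jordan_separation_separates
    (f : EuclideanSpace ℝ (Fin 2) → EuclideanSpace ℝ (Fin 3))
    (hf : ContinuousOn f circleS) (hmaps : MapsTo f circleS sphereS)
    (U : Set (EuclideanSpace ℝ (Fin 2))) (hUne : U.Nonempty) (hUI : U ⊆ injPts f)
    (hUopen : ∃ V, IsOpen V ∧ U = V ∩ circleS) :
    ¬ IsPreconnected (sphereS \ f '' circleS) := by
  intro hpre
  obtain ⟨V, hV, rfl⟩ := hUopen
  obtain ⟨p, hpV, hpc⟩ := hUne
  obtain ⟨θ₀, -, -, rfl⟩ := sjCirc_surj 0 hpc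
  have hpi := Real.pi_gt_three
  obtain ⟨ε, hε, hball⟩ := Metric.isOpen_iff.1 (hV.preimage sjCirc_cont) θ₀ hpV
  obtain ⟨δ, hδ0, hδε, hδ1⟩ : ∃ δ : ℝ, 0 < δ ∧ δ < ε ∧ δ < 1 :=
    ⟨min ε 1 / 2, by positivity, by linarith [min_le_left ε 1], by linarith [min_le_right ε 1]⟩
  let F : ℝ → sphere (0 : EuclideanSpace ℝ (Fin 3)) 1 :=
    fun θ => ⟨f (sjCirc θ), hmaps (sjCirc_mem θ)⟩
  have hF : Continuous F :=
    (hf.comp_continuous sjCirc_cont sjCirc_mem).subtype_mk _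
  have key : ∀ α β, θ₀ ≤ α → α ≤ θ₀ + δ → F β = F α → ∃ n : ℤ, β - α = n * (2 * Real.pi) := by
    intro α β h1 h2 h
    have hα : sjCirc α ∈ V := hball (by
      rw [Metric.mem_ball, Real.dist_eq, abs_lt]; constructor <;> linarith)
    exact sjCirc_inj ((hUI ⟨hα, sjCirc_mem α⟩).2 _ (sjCirc_mem β) (congrArg Subtype.val h))
  have hper : F (θ₀ + 1 * (δ - 2 * Real.pi)) = F (θ₀ + δ) := by
    apply Subtype.ext
    change f _ = f _
    congr 1
    have : θ₀ + 1 * (δ - 2 * Real.pi) = θ₀ + δ - 2 * Real.pi := by ring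
    rw [this, sjCirc, sjCirc, Real.cos_sub_two_pi, Real.sin_sub_two_pi]
  have hab : F θ₀ ≠ F (θ₀ + δ) := by
    intro h
    obtain ⟨n, hn⟩ := key _ _ (by linarith) le_rfl h
    have := sj_small hn (by linarith) (by linarith)
    linarith
  obtain ⟨H, H0, H1⟩ := sj_homeo _ _ hab
  have s0 : H.symm (F θ₀) = ((0 : ℂ) : OnePoint ℂ) := by rw [← H0]; simp
  have s1 : H.symm (F (θ₀ + δ)) = OnePoint.infty := by rw [← H1]; simp
  have q0 : ∀ {x}, H.symm x = ((0 : ℂ) : OnePoint ℂ) → x = F θ₀ := by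
    intro x h; exact H.symm.injective (h.trans s0.symm)
  have q1 : ∀ {x}, H.symm x = OnePoint.infty → x = F (θ₀ + δ) := by
    intro x h; exact H.symm.injective (h.trans s1.symm)
  refine sj_plane (fun t => H.symm (F (θ₀ + t * δ)))
    (fun t => H.symm (F (θ₀ + t * (δ - 2 * Real.pi)))) (by fun_prop) (by fun_prop)
    (by simp [s0]) (by simp [s1]) ?_ ?_ (by simp [s0])
    (by
      change H.symm (F (θ₀ + 1 * (δ - 2 * Real.pi))) = _
      rw [hper, s1]) ?_ ?_ ?_ ?_
  · rintro ⟨t, ht0, ht1⟩ hne h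
    obtain ⟨n, hn⟩ := key _ _ le_rfl (by linarith) (q0 h)
    have := sj_small hn (by simp only; nlinarith) (by simp only; nlinarith)
    apply hne
    apply Subtype.ext
    change t = 0
    simp only [add_sub_cancel_left, mul_eq_zero] at this
    exact this.resolve_right hδ0.ne'
  · rintro ⟨t, ht0, ht1⟩ hne h
    obtain ⟨n, hn⟩ := key _ _ (by linarith) le_rfl (q1 h)
    have := sj_small hn (by simp only; nlinarith) (by simp only; nlinarith)
    apply hne
    apply Subtype.ext
    change t = 1
    simp only at this
    have h3 : (t - 1) * δ = 0 := by linarith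
    linarith [(mul_eq_zero.1 h3).resolve_right hδ0.ne']
  · rintro ⟨t, ht0, ht1⟩ hne h
    obtain ⟨n, hn⟩ := key _ _ le_rfl (by linarith) (q0 h)
    have := sj_small hn (by simp only; nlinarith) (by simp only; nlinarith)
    apply hne
    apply Subtype.ext
    change t = 0
    simp only [add_sub_cancel_left, mul_eq_zero] at this
    exact this.resolve_right (by linarith)
  · rintro ⟨t, ht0, ht1⟩ hne h
    obtain ⟨n, hn⟩ := key _ _ (by linarith) le_rfl (q1 h)
    simp only at hn
    have hn' : (1 - t) * (2 * Real.pi - δ) = ((n + 1 : ℤ) : ℝ) * (2 * Real.pi) := by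
      push_cast; linarith
    have := sj_small hn' (by nlinarith) (by nlinarith)
    apply hne
    apply Subtype.ext
    change t = 1
    linarith [(mul_eq_zero.1 this).resolve_right (by linarith)]
  · rintro _ ⟨⟨t, ht0, ht1⟩, rfl⟩ ⟨⟨s, hs0, hs1⟩, h⟩
    have h' := H.symm.injective h
    simp only at h'
    obtain ⟨n, hn⟩ := key _ _ (by nlinarith) (by nlinarith) h'
    have hx : s * (2 * Real.pi - δ) + t * δ = ((-n : ℤ) : ℝ) * (2 * Real.pi) := by
      push_cast; linarith
    have a1 : 0 ≤ s * (2 * Real.pi - δ) := mul_nonneg hs0 (by linarith)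
    have a2 : s * (2 * Real.pi - δ) ≤ 2 * Real.pi - δ := mul_le_of_le_one_left (by linarith) hs1
    have a3 : 0 ≤ t * δ := mul_nonneg ht0 hδ0.le
    have a4 : t * δ ≤ δ := mul_le_of_le_one_left hδ0.le ht1
    simp only
    by_cases hlt : s * (2 * Real.pi - δ) + t * δ < 2 * Real.pi
    · left
      have := sj_small hx (by linarith) hlt
      have h0 : t * δ = 0 := by linarith
      rw [h0, add_zero, s0]
    · right
      have h0 : t * δ = δ := by linarith
      rw [h0, s1]
  · have hc : IsPreconnected (range F)ᶜ := by
      rw [← IsInducing.subtypeVal.isPreconnected_image]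
      convert! hpre using 1
      ext x
      constructor
      · rintro ⟨y, hy, rfl⟩
        refine ⟨y.2, ?_⟩
        rintro ⟨q, hq, hqy⟩
        obtain ⟨θ, -, -, rfl⟩ := sjCirc_surj 0 hq
        exact hy ⟨θ, Subtype.ext hqy⟩
      · rintro ⟨hx, hx'⟩
        refine ⟨⟨x, hx⟩, ?_, rfl⟩
        rintro ⟨θ, hθ⟩
        exact hx' ⟨sjCirc θ, sjCirc_mem θ, congrArg Subtype.val hθ⟩
    convert! hc.image H.symm H.symm.continuous.continuousOn using 1
    rw [image_compl_eq H.symm.bijective]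
    congr 1
    ext y
    constructor
    · rintro (⟨t, rfl⟩ | ⟨t, rfl⟩)
      · exact ⟨_, ⟨_, rfl⟩, rfl⟩
      · exact ⟨_, ⟨_, rfl⟩, rfl⟩
    · rintro ⟨_, ⟨θ, rfl⟩, rfl⟩
      obtain ⟨θ', h1, h2, h3⟩ := sjCirc_surj (θ₀ + δ - 2 * Real.pi) (sjCirc_mem θ)
      have hFF : F θ = F θ' := by
        apply Subtype.ext
        change f _ = f _
        rw [h3]
      rw [hFF]
      rcases le_total θ₀ θ' with h | h
      · left
        refine ⟨⟨(θ' - θ₀) / δ, div_nonneg (by linarith) hδ0.le,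
          (div_le_one hδ0).2 (by linarith)⟩, ?_⟩
        simp only
        congr 2
        field_simp
        ring
      · right
        have hd : 0 < 2 * Real.pi - δ := by linarith
        have hd' : δ - 2 * Real.pi ≠ 0 := by linarith
        refine ⟨⟨(θ₀ - θ') / (2 * Real.pi - δ), div_nonneg (by linarith) hd.le,
          (div_le_one hd).2 (by linarith)⟩, ?_⟩
        simp only
        congr 2
        have := hd.ne'
        field_simp
        ring
end
end

section
/- Strong Jordan separation, two-component part: Let f : S¹ → S² be a continuous map whose set of injective points I(f) = {p ∈ S¹ : f⁻¹({f(p)}) = {p}} contains a nonempty open subset U of S¹, and let q ∈ U, p := f(q). Then there are precisely two connected components of S² \ f(S¹) which contain p in their closure. -/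
open Metric Set

noncomputable section

/-- `C` is a connected component of the set `A` (with its subspace topology). -/
def IsCompOf (C A : Set (EuclideanSpace ℝ (Fin 3))) : Prop :=
  ∃ x ∈ A, C = connectedComponentIn A x

theorem sj_homLog {Y : Type*} [TopologicalSpace Y] (H : unitInterval × Y → ℂ) (hH : Continuous H)
    (h0 : ∀ x, H x ≠ 0) (f : Y → ℂ) (hf : Continuous f)
    (hf0 : ∀ y, Complex.exp (f y) = H (0, y)) :
    ∃ L : unitInterval × Y → ℂ, Continuous L ∧ ∀ x, Complex.exp (L x) = H x := by
  let H' : C(unitInterval × Y, {z : ℂ // z ≠ 0}) := ⟨fun x => ⟨H x, h0 x⟩, by fun_prop⟩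
  have e : ∀ a, H' (0, a) = (fun z : ℂ ↦ (⟨_, z.exp_ne_zero⟩ : {z : ℂ // z ≠ 0})) ((⟨f, hf⟩ : C(Y, ℂ)) a) := by
    intro a
    apply Subtype.ext
    simp [H', hf0]
  refine ⟨Complex.isCoveringMap_exp.liftHomotopy H' ⟨f, hf⟩ e, ContinuousMap.continuous _, ?_⟩
  intro x
  have := congrFun (Complex.isCoveringMap_exp.liftHomotopy_lifts H' ⟨f, hf⟩ e) x
  exact congrArg Subtype.val this

theorem sj_pathLog (r : ℝ → ℂ) (hr : ContinuousOn r (Icc 0 1)) (h0 : ∀ t ∈ Icc (0:ℝ) 1, r t ≠ 0) :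
    ∃ l : ℝ → ℂ, ContinuousOn l (Icc 0 1) ∧ ∀ t ∈ Icc (0:ℝ) 1, Complex.exp (l t) = r t := by
  have hr' : Continuous (fun t : unitInterval => r t) := by
    exact hr.domRestrict
  obtain ⟨L, hL, hL'⟩ := sj_homLog (Y := Unit) (fun x => r x.1) (hr'.comp continuous_fst)
    (fun x => h0 _ x.1.2) (fun _ => Complex.log (r 0)) continuous_const
    (fun _ => by simpa using Complex.exp_log (h0 0 (by simp)))
  refine ⟨fun t => L (projIcc 0 1 zero_le_one t, ()), ?_, ?_⟩
  · exact (hL.comp (by fun_prop)).continuousOn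
  · intro t ht
    rw [hL']
    simp [projIcc_of_mem _ ht]

theorem sj_planeLog (F : ℂ → ℂ) (hF : Continuous F) (h0 : ∀ z, F z ≠ 0) :
    ∃ L : ℂ → ℂ, Continuous L ∧ ∀ z, Complex.exp (L z) = F z := by
  obtain ⟨L, hL, hL'⟩ := sj_homLog (Y := ℂ) (fun x => F ((x.1 : ℝ) * x.2)) (by fun_prop)
    (fun x => h0 _) (fun _ => Complex.log (F 0)) continuous_const
    (fun _ => by simpa using Complex.exp_log (h0 0))
  refine ⟨fun z => L (1, z), by fun_prop, fun z => by rw [hL']; simp⟩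

theorem sj_const {X : Type*} [TopologicalSpace X] {W : Set X} (hW : IsPreconnected W) (h : X → ℂ)
    (hh : ContinuousOn h W) (c : ℂ) (hc : ∀ x ∈ W, Complex.exp (h x) = c) :
    ∀ x ∈ W, ∀ y ∈ W, h x = h y := by
  intro x hx y hy
  have hc0 : c ≠ 0 := by rw [← hc x hx]; exact Complex.exp_ne_zero _
  have hd : IsDiscrete (Complex.exp ⁻¹' {c}) := ⟨(Complex.isCoveringMapOn_exp c hc0).1⟩
  exact hW.constant_of_mapsTo (T := Complex.exp ⁻¹' {c}) hd hh (fun z hz => hc z hz) hx hy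

theorem sj_noLog (a : ℂ) (R : ℝ) (hR : 0 < R) (m : ℤ) (F : ℂ → ℂ)
    (hF : ContinuousOn F (sphere a R))
    (h : ∀ z ∈ sphere a R, Complex.exp (F z) = (z - a) ^ m) : m = 0 := by
  have hs : ∀ t : ℝ, a + R * Complex.exp (t * Complex.I) ∈ sphere a R := by
    intro t
    simp [Complex.norm_exp_ofReal_mul_I, abs_of_pos hR]
  have hc : Continuous (fun t : ℝ => F (a + R * Complex.exp (t * Complex.I)) - m * (t * Complex.I)) := by
    refine Continuous.sub ?_ (by fun_prop)
    exact hF.comp_continuous (by fun_prop) hs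
  have := sj_const (W := univ) isPreconnected_univ _ hc.continuousOn ((R:ℂ) ^ m) (by
    intro t _
    rw [Complex.exp_sub, h _ (hs t), Complex.exp_int_mul]
    simp only [add_sub_cancel_left]
    rw [mul_zpow]
    exact mul_div_cancel_right₀ _ (zpow_ne_zero _ (Complex.exp_ne_zero _))) 0 trivial (2 * Real.pi) trivial
  simp only [Complex.ofReal_zero, zero_mul, Complex.exp_zero, mul_one, mul_zero, sub_zero,
    Complex.ofReal_mul, Complex.ofReal_ofNat, Complex.exp_two_pi_mul_I] at this
  have h2 : (m : ℂ) * (2 * Real.pi * Complex.I) = 0 := by linear_combination this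
  have h3 := (mul_eq_zero.1 h2).resolve_right Complex.two_pi_I_ne_zero
  exact_mod_cast h3

theorem sj_mult (K C : Set ℂ) (hC : IsOpen C) (hb : Bornology.IsBounded C) (hfr : frontier C ⊆ K)
    (a : ℂ) (ha : a ∈ C) (R : ℂ → ℂ) (hR : ContinuousOn R (closure C))
    (hR0 : ∀ z ∈ closure C, R z ≠ 0) (m : ℤ) (g : ℂ → ℂ) (hg : Continuous g)
    (h : ∀ z ∈ K, Complex.exp (g z) = (z - a) ^ m * R z) : m = 0 := by
  classical
  have hF : Continuous (C.piecewise (fun z => Complex.exp (g z) / R z) (fun z => (z - a) ^ m)) := by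
    refine continuous_piecewise ?_ ?_ ?_
    · intro z hz
      rw [h z (hfr hz)]
      exact mul_div_cancel_right₀ _ (hR0 z (frontier_subset_closure hz))
    · exact (Complex.continuous_exp.comp hg).continuousOn.div hR hR0
    · rw [hC.isClosed_compl.closure_eq]
      refine ContinuousOn.zpow₀ (by fun_prop) m ?_
      intro z hz
      left
      intro e
      rw [sub_eq_zero] at e
      exact hz (e ▸ ha)
  obtain ⟨L, hL, hL'⟩ := sj_planeLog _ hF (by
    intro z
    by_cases hz : z ∈ C
    · rw [piecewise_eq_of_mem _ _ _ hz]
      exact div_ne_zero (Complex.exp_ne_zero _) (hR0 z (subset_closure hz))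
    · rw [piecewise_eq_of_notMem _ _ _ hz]
      refine zpow_ne_zero _ ?_
      intro e
      rw [sub_eq_zero] at e
      exact hz (e ▸ ha))
  obtain ⟨r, hr, hr'⟩ := hb.subset_ball_lt 0 a
  refine sj_noLog a r hr m L hL.continuousOn ?_
  intro z hz
  rw [hL', piecewise_eq_of_notMem]
  intro hzC
  exact (hr' hzC).ne hz

theorem sj_descend (g l : ℝ → ℂ) (hg : ContinuousOn g (Icc 0 1)) (hl : ContinuousOn l (Icc 0 1))
    (h : ∀ s ∈ Icc (0:ℝ) 1, ∀ t ∈ Icc (0:ℝ) 1, g s = g t → l s = l t) :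
    ∃ G : ℂ → ℂ, Continuous G ∧ ∀ t ∈ Icc (0:ℝ) 1, G (g t) = l t := by
  let K : Set ℂ := g '' Icc 0 1
  have hK : IsClosed K := (isCompact_Icc.image_of_continuousOn hg).isClosed
  let gg : C(unitInterval, K) := ⟨fun t => ⟨g t, t, t.2, rfl⟩, by
    exact Continuous.subtype_mk hg.domRestrict _⟩
  have hq : Topology.IsQuotientMap gg := by
    refine Topology.IsQuotientMap.of_surjective_continuous ?_ gg.continuous
    rintro ⟨_, t, ht, rfl⟩
    exact ⟨⟨t, ht⟩, rfl⟩
  let G0 : C(K, ℂ) := hq.lift ⟨fun t => l t, hl.domRestrict⟩ (by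
    intro s t e
    exact h s s.2 t t.2 (congrArg Subtype.val e))
  obtain ⟨G, hG⟩ := ContinuousMap.exists_restrict_eq hK G0
  refine ⟨G, G.continuous, fun t ht => ?_⟩
  have h1 : G0 (gg ⟨t, ht⟩) = l t := by
    exact congrArg (fun f => f ⟨t, ht⟩) (hq.lift_comp ⟨fun t => l t, hl.domRestrict⟩ (by
      intro s t e
      exact h s s.2 t t.2 (congrArg Subtype.val e)))
  rw [← h1, ← hG]
  rfl

theorem sj_slit (a b z : ℂ) (hzb : z ≠ b) (h : z ∉ segment ℝ a b) :
    (z - a) / (z - b) ∈ Complex.slitPlane := by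
  rw [Complex.mem_slitPlane_iff]
  by_contra hcon
  push Not at hcon
  obtain ⟨h1, h2⟩ := hcon
  apply h
  set w := (z - a) / (z - b) with hw
  have hwr : w = (w.re : ℂ) := by
    apply Complex.ext <;> simp [h2]
  have hb : z - b ≠ 0 := sub_ne_zero.2 hzb
  have e : z - a = w.re * (z - b) := by
    rw [← hwr, hw, div_mul_cancel₀ _ hb]
  set x := w.re
  have hx : 0 < 1 - x := by linarith
  have hx' : (1 - x : ℂ) ≠ 0 := by exact_mod_cast hx.ne'
  refine ⟨1 / (1 - x), -x / (1 - x), by positivity, div_nonneg (by linarith) hx.le, by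
    rw [← add_div, ← sub_eq_add_neg, div_self hx.ne'], ?_⟩
  simp only [Complex.real_smul]
  push_cast
  field_simp
  linear_combination -e

theorem sj_jump (g : ℝ → ℂ) (hg : ContinuousOn g (Icc 0 1)) (h01 : g 0 = g 1) (δ : ℝ) (hδ : 0 < δ)
    (D : Set ℂ) (hD : Convex ℝ D) (hgD : ∀ t ∈ Icc δ (1 - δ), g t ∉ D) (a b : ℂ) (ha : a ∈ D)
    (hb : b ∈ D) (haK : a ∉ g '' Icc 0 1) (hbK : b ∉ g '' Icc 0 1) :
    ∃ l : ℝ → ℂ, ContinuousOn l (Icc 0 1) ∧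
      (∀ t ∈ Icc (0:ℝ) 1, Complex.exp (l t) = (g t - a) / (g t - b)) ∧
      (∃ n : ℤ, l 1 - l 0 = n * (2 * Real.pi * Complex.I)) ∧
      ∀ s ∈ Icc δ (1 - δ), ∀ t ∈ Icc δ (1 - δ), g s = g t → l s = l t := by
  have ha0 : ∀ t ∈ Icc (0:ℝ) 1, g t - a ≠ 0 := fun t ht e => haK ⟨t, ht, sub_eq_zero.1 e⟩
  have hb0 : ∀ t ∈ Icc (0:ℝ) 1, g t - b ≠ 0 := fun t ht e => hbK ⟨t, ht, sub_eq_zero.1 e⟩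
  have hrc : ContinuousOn (fun t => (g t - a) / (g t - b)) (Icc 0 1) :=
    (hg.sub continuousOn_const).div (hg.sub continuousOn_const) hb0
  obtain ⟨l, hl, hl'⟩ := sj_pathLog _ hrc (fun t ht => div_ne_zero (ha0 t ht) (hb0 t ht))
  refine ⟨l, hl, hl', ?_, ?_⟩
  · have : Complex.exp (l 1) = Complex.exp (l 0) := by
      rw [hl' 1 (by simp), hl' 0 (by simp), h01]
    obtain ⟨n, hn⟩ := Complex.exp_eq_exp_iff_exists_int.1 this
    exact ⟨n, by rw [hn]; ring⟩
  · have hsub : Icc δ (1 - δ) ⊆ Icc (0:ℝ) 1 := Icc_subset_Icc hδ.le (by linarith)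
    have hsl : ∀ t ∈ Icc δ (1 - δ), (g t - a) / (g t - b) ∈ Complex.slitPlane := by
      intro t ht
      refine sj_slit _ _ _ (sub_ne_zero.1 (hb0 t (hsub ht))) ?_
      intro hseg
      exact hgD t ht (hD.segment_subset ha hb hseg)
    have := sj_const (W := Icc δ (1 - δ)) isPreconnected_Icc
      (fun t => l t - Complex.log ((g t - a) / (g t - b)))
      ((hl.mono hsub).sub ((hrc.mono hsub).clog hsl)) 1 (by
        intro t ht
        have ht' := hsub ht
        rw [Complex.exp_sub, Complex.exp_log (div_ne_zero (ha0 t ht') (hb0 t ht')), hl' t ht']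
        exact div_self (div_ne_zero (ha0 t ht') (hb0 t ht')))
    intro s hs t ht e
    have h2 := this s hs t ht
    simp only [e] at h2
    linear_combination h2

theorem sj_comp_closure (K : Set ℂ) (hK : IsClosed K) (a : ℂ) :
    closure (connectedComponentIn Kᶜ a) ⊆ connectedComponentIn Kᶜ a ∪ K := by
  intro z hz
  by_cases hzK : z ∈ K
  · exact Or.inr hzK
  left
  have ho : IsOpen (connectedComponentIn Kᶜ z) := hK.isOpen_compl.connectedComponentIn
  obtain ⟨w, hw1, hw2⟩ := mem_closure_iff.1 hz _ ho (mem_connectedComponentIn hzK)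
  rw [connectedComponentIn_eq hw2, ← connectedComponentIn_eq hw1]
  exact mem_connectedComponentIn hzK

theorem sj_outer (r : ℝ) (hr : 0 < r) : IsPreconnected {z : ℂ | r < ‖z‖} := by
  have : {z : ℂ | r < ‖z‖} = (fun x : ℝ × ℝ => (x.1 : ℂ) * Complex.exp (x.2 * Complex.I)) ''
      (Ioi r ×ˢ univ) := by
    ext z
    constructor
    · intro hz
      exact ⟨(‖z‖, z.arg), ⟨hz, trivial⟩, Complex.norm_mul_exp_arg_mul_I z⟩
    · rintro ⟨⟨s, t⟩, ⟨hs, -⟩, rfl⟩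
      simp only [mem_Ioi] at hs
      simp [Complex.norm_exp_ofReal_mul_I, abs_of_pos (hr.trans hs), hs]
  rw [this]
  exact (isPreconnected_Ioi.prod isPreconnected_univ).image _ (by fun_prop)

theorem sj_bdd (K : Set ℂ) (hK : IsCompact K) (a b : ℂ)
    (hab : b ∉ connectedComponentIn Kᶜ a) (hb : b ∉ K) :
    Bornology.IsBounded (connectedComponentIn Kᶜ a) ∨
      Bornology.IsBounded (connectedComponentIn Kᶜ b) := by
  obtain ⟨r, hr, hr'⟩ := hK.isBounded.subset_ball_lt 0 0
  have key : ∀ c, Bornology.IsBounded (connectedComponentIn Kᶜ c) ∨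
      {z : ℂ | r < ‖z‖} ⊆ connectedComponentIn Kᶜ c := by
    intro c
    by_cases h : ∃ z ∈ connectedComponentIn Kᶜ c, r < ‖z‖
    · right
      obtain ⟨z, hz, hz'⟩ := h
      rw [connectedComponentIn_eq hz]
      refine (sj_outer r hr).subset_connectedComponentIn hz' ?_
      intro w hw hwK
      have := hr' hwK
      simp at this hw
      linarith
    · left
      push Not at h
      refine (isBounded_closedBall (x := (0:ℂ)) (r := r)).subset ?_
      intro z hz
      simpa using h z hz
  rcases key a with h | h
  · exact Or.inl h
  rcases key b with h' | h'
  · exact Or.inr h'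
  exfalso
  have hz : ((r + 1 : ℝ) : ℂ) ∈ {z : ℂ | r < ‖z‖} := by
    simp only [mem_ofPred_eq, Complex.norm_real, Real.norm_eq_abs]
    rw [abs_of_pos (by linarith)]
    linarith
  apply hab
  rw [connectedComponentIn_eq (h hz), ← connectedComponentIn_eq (h' hz)]
  exact mem_connectedComponentIn hb

theorem sj_mult3 (K : Set ℂ) (hK : IsCompact K) (a b c : ℂ) (ha : a ∉ K) (hb : b ∉ K) (hc : c ∉ K)
    (hab : b ∉ connectedComponentIn Kᶜ a) (hac : c ∉ connectedComponentIn Kᶜ a)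
    (hbd : Bornology.IsBounded (connectedComponentIn Kᶜ a)) (x y w : ℤ) (G : ℂ → ℂ)
    (hG : Continuous G)
    (h : ∀ z ∈ K, Complex.exp (G z) = (z - a) ^ x * ((z - b) ^ y * (z - c) ^ w)) : x = 0 := by
  have hcl := sj_comp_closure K hK.isClosed a
  have ho : IsOpen (connectedComponentIn Kᶜ a) := hK.isClosed.isOpen_compl.connectedComponentIn
  have hb' : ∀ z ∈ closure (connectedComponentIn Kᶜ a), z - b ≠ 0 := by
    intro z hz e
    rw [sub_eq_zero] at e
    subst e
    exact (hcl hz).elim hab hb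
  have hc' : ∀ z ∈ closure (connectedComponentIn Kᶜ a), z - c ≠ 0 := by
    intro z hz e
    rw [sub_eq_zero] at e
    subst e
    exact (hcl hz).elim hac hc
  refine sj_mult K _ ho hbd ?_ a (mem_connectedComponentIn ha)
    (fun z => (z - b) ^ y * (z - c) ^ w) ?_ ?_ x G hG h
  · intro z hz
    rw [ho.frontier_eq] at hz
    exact (hcl hz.1).resolve_left hz.2
  · exact (ContinuousOn.zpow₀ (by fun_prop) y (fun z hz => Or.inl (hb' z hz))).mul
      (ContinuousOn.zpow₀ (by fun_prop) w (fun z hz => Or.inl (hc' z hz)))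
  · intro z hz
    exact mul_ne_zero (zpow_ne_zero _ (hb' z hz)) (zpow_ne_zero _ (hc' z hz))

theorem sj_upper (g : ℝ → ℂ) (hg : ContinuousOn g (Icc 0 1)) (h01 : g 0 = g 1) (δ : ℝ) (hδ : 0 < δ)
    (hinj : ∀ s ∈ Icc (0:ℝ) 1, ∀ t ∈ Icc (0:ℝ) 1, g s = g t → s = t ∨ (s = 0 ∧ t = 1) ∨
      (s = 1 ∧ t = 0) ∨ (s ∈ Icc δ (1 - δ) ∧ t ∈ Icc δ (1 - δ)))
    (D : Set ℂ) (hD : Convex ℝ D) (hgD : ∀ t ∈ Icc δ (1 - δ), g t ∉ D) (a b c : ℂ) (ha : a ∈ D)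
    (hb : b ∈ D) (hc : c ∈ D) (haK : a ∉ g '' Icc 0 1) (hbK : b ∉ g '' Icc 0 1)
    (hcK : c ∉ g '' Icc 0 1) :
    b ∈ connectedComponentIn (g '' Icc 0 1)ᶜ a ∨ c ∈ connectedComponentIn (g '' Icc 0 1)ᶜ a ∨
      c ∈ connectedComponentIn (g '' Icc 0 1)ᶜ b := by
  by_contra hcon
  push Not at hcon
  obtain ⟨hab, hac, hbc⟩ := hcon
  set K := g '' Icc 0 1 with hKdef
  have hK : IsCompact K := isCompact_Icc.image_of_continuousOn hg
  have symm : ∀ u v, u ∉ K → v ∉ connectedComponentIn Kᶜ u → u ∉ connectedComponentIn Kᶜ v := by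
    intro u v hu hv hu'
    have hvK : v ∈ Kᶜ := by
      by_contra hvK
      rw [connectedComponentIn_eq_empty hvK] at hu'
      exact hu'
    apply hv
    rw [← connectedComponentIn_eq hu']
    exact mem_connectedComponentIn hvK
  have hba := symm _ _ haK hab
  have hca := symm _ _ haK hac
  have hcb := symm _ _ hbK hbc
  obtain ⟨l, hl, hl1, ⟨k, hk⟩, hl2⟩ := sj_jump g hg h01 δ hδ D hD hgD a b ha hb haK hbK
  obtain ⟨l', hl', hl1', ⟨k', hk'⟩, hl2'⟩ := sj_jump g hg h01 δ hδ D hD hgD a c ha hc haK hcK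
  obtain ⟨x, y, hxy, hne⟩ : ∃ x y : ℤ, x * k + y * k' = 0 ∧ (x ≠ 0 ∨ y ≠ 0) := by
    by_cases h : k = 0
    · exact ⟨1, 0, by simp [h], by simp⟩
    · exact ⟨k', -k, by ring, by simp [h]⟩
  have hxyC : (x : ℂ) * k + y * k' = 0 := by exact_mod_cast hxy
  obtain ⟨G, hG, hG'⟩ := sj_descend g (fun t => x * l t + y * l' t) hg
    ((hl.const_smul (x:ℂ)).add (hl'.const_smul (y:ℂ))) (by
      intro s hs t ht e
      rcases hinj s hs t ht e with h | ⟨h, h'⟩ | ⟨h, h'⟩ | ⟨h, h'⟩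
      · rw [h]
      · subst h h'
        linear_combination (-(x:ℂ)) * hk - y * hk' - (2 * Real.pi * Complex.I) * hxyC
      · subst h h'
        linear_combination ((x:ℂ)) * hk + y * hk' + (2 * Real.pi * Complex.I) * hxyC
      · simp only [hl2 s h t h' e, hl2' s h t h' e])
  have hGK : ∀ z ∈ K, Complex.exp (G z) = (z - a) ^ (x + y) * ((z - b) ^ (-x) * (z - c) ^ (-y)) := by
    rintro _ ⟨t, ht, rfl⟩
    have ha0 : g t - a ≠ 0 := fun e => haK ⟨t, ht, sub_eq_zero.1 e⟩
    rw [hG' t ht, Complex.exp_add, Complex.exp_int_mul, Complex.exp_int_mul, hl1 t ht, hl1' t ht,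
      div_zpow, div_zpow, zpow_add₀ ha0, zpow_neg, zpow_neg]
    ring
  have hA : Bornology.IsBounded (connectedComponentIn Kᶜ a) → x + y = 0 := fun h =>
    sj_mult3 K hK a b c haK hbK hcK hab hac h _ _ _ G hG hGK
  have hB : Bornology.IsBounded (connectedComponentIn Kᶜ b) → -x = 0 := fun h =>
    sj_mult3 K hK b a c hbK haK hcK hba hbc h (-x) (x + y) (-y) G hG (fun z hz => by
      rw [hGK z hz]; ring)
  have hC : Bornology.IsBounded (connectedComponentIn Kᶜ c) → -y = 0 := fun h =>
    sj_mult3 K hK c a b hcK haK hbK hca hcb h (-y) (x + y) (-x) G hG (fun z hz => by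
      rw [hGK z hz]; ring)
  have h1 := sj_bdd K hK a b hab hbK
  have h2 := sj_bdd K hK a c hac hcK
  have h3 := sj_bdd K hK b c hbc hcK
  have h1' := h1.imp hA hB
  have h2' := h2.imp hA hC
  have h3' := h3.imp hB hC
  omega

theorem sj_chart (v : EuclideanSpace ℝ (Fin 3)) (hv : v ∈ sphereS) :
    ∃ (φ : EuclideanSpace ℝ (Fin 3) → ℂ) (ψ : ℂ → EuclideanSpace ℝ (Fin 3)),
      ContinuousOn φ (sphereS \ {v}) ∧ Continuous ψ ∧ (∀ z, ψ z ∈ sphereS \ {v}) ∧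
      (∀ z, φ (ψ z) = z) ∧ ∀ x ∈ sphereS \ {v}, ψ (φ x) = x := by
  classical
  have : Fact (Module.finrank ℝ (EuclideanSpace ℝ (Fin 3)) = 2 + 1) := ⟨by simp⟩
  let e := stereographic' 2 (⟨v, hv⟩ : sphere (0 : EuclideanSpace ℝ (Fin 3)) 1)
  let i : EuclideanSpace ℝ (Fin 2) ≃L[ℝ] ℂ := Complex.orthonormalBasisOneI.repr.symm.toContinuousLinearEquiv
  have hsrc : e.source = {⟨v, hv⟩}ᶜ := stereographic'_source _
  have htgt : e.target = univ := stereographic'_target _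
  refine ⟨fun x => if h : x ∈ sphereS then i (e ⟨x, h⟩) else 0, fun z => (e.symm (i.symm z) : _),
    ?_, ?_, ?_, ?_, ?_⟩
  · rw [continuousOn_iff_continuous_domRestrict]
    have h1 : Continuous (fun x : ↥(sphereS \ {v}) => i (e ⟨x.1, x.2.1⟩)) := by
      refine i.continuous.comp ?_
      refine e.continuousOn.comp_continuous (f := fun x : ↥(sphereS \ {v}) => (⟨x.1, x.2.1⟩ : sphere (0 : EuclideanSpace ℝ (Fin 3)) 1)) (by fun_prop) ?_
      intro x
      rw [hsrc]
      intro h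
      exact x.2.2 (congrArg Subtype.val h)
    convert h1 using 2 with x
    simp [x.2.1]
  · refine continuous_subtype_val.comp ?_
    refine e.continuousOn_symm.comp_continuous i.symm.continuous ?_
    intro x; rw [htgt]; trivial
  · intro z
    have h : e.symm (i.symm z) ∈ e.source := e.map_target (by rw [htgt]; trivial)
    refine ⟨(e.symm (i.symm z)).2, ?_⟩
    rw [hsrc] at h
    intro h'
    exact h (Subtype.ext h')
  · intro z
    have h : (e.symm (i.symm z)).1 ∈ sphereS := (e.symm (i.symm z)).2
    have h2 : e (e.symm (i.symm z)) = i.symm z := e.right_inv (by rw [htgt]; trivial)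
    simp only [h, dite_true, Subtype.coe_eta, h2]
    simp
  · intro x hx
    have h2 : e.symm (e ⟨x, hx.1⟩) = ⟨x, hx.1⟩ := e.left_inv (by
      rw [hsrc]; intro h; exact hx.2 (congrArg Subtype.val h))
    simp [hx.1, h2]

theorem sj_rayLog (γ : ℝ → ℂ) (hγ : ContinuousOn γ (Ico 0 1))
    (hinf : Filter.Tendsto (fun t => ‖γ t‖) (nhdsWithin 1 (Ico 0 1)) Filter.atTop) (Y : Set ℂ)
    (hY : ∀ t ∈ Ico (0:ℝ) 1, γ t ∉ Y) :
    ∃ L : ℂ → ℂ, ContinuousOn L Y ∧ ∀ z ∈ Y, Complex.exp (L z) = z - γ 0 := by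
  classical
  obtain ⟨T, hT0, hT1, hT⟩ : ∃ T : ℝ, 0 ≤ T ∧ T < 1 ∧ ∀ t, T ≤ t → t < 1 → 1 ≤ ‖γ t‖ := by
    have h := hinf.eventually (Filter.eventually_ge_atTop (1:ℝ))
    rw [eventually_nhdsWithin_iff, Metric.eventually_nhds_iff] at h
    obtain ⟨ε, hε, h⟩ := h
    refine ⟨max 0 (1 - ε / 2), le_max_left _ _, max_lt one_pos (by linarith), ?_⟩
    intro t ht ht1
    have h1 := (le_max_left _ _).trans ht
    have h2 := (le_max_right _ _).trans ht
    refine h ?_ ⟨h1, ht1⟩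
    rw [Real.dist_eq, abs_lt]
    constructor <;> linarith
  have hT' : γ T ≠ 0 := by
    intro h
    have := hT T le_rfl hT1
    rw [h] at this
    norm_num at this
  let k : ℝ → ℂ := fun t => if t < 1 then (γ t)⁻¹ else 0
  have hk : ContinuousOn k (Icc T 1) := by
    intro t ht
    rcases lt_or_eq_of_le ht.2 with h | h
    · have h1 : ContinuousWithinAt (fun t => (γ t)⁻¹) (Icc T 1) t := by
        refine ContinuousWithinAt.inv₀ ?_ ?_
        · have h2 := hγ t ⟨hT0.trans ht.1, h⟩
          have h3 : ContinuousWithinAt γ (Icc T 1 ∩ Iio 1) t := h2.mono (by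
            rintro s ⟨hs, hs'⟩
            exact ⟨hT0.trans hs.1, hs'⟩)
          exact (continuousWithinAt_inter (Iio_mem_nhds h)).1 h3
        · intro h0
          have := hT t ht.1 h
          rw [h0] at this
          norm_num at this
      refine h1.congr_of_eventuallyEq ?_ (by simp [k, h])
      filter_upwards [mem_nhdsWithin_of_mem_nhds (Iio_mem_nhds h)] with s hs
      have : s < 1 := hs
      simp [k, this]
    · subst h
      rw [Metric.continuousWithinAt_iff]
      intro ε hε
      have h := hinf.eventually (Filter.eventually_gt_atTop (ε⁻¹))
      rw [eventually_nhdsWithin_iff, Metric.eventually_nhds_iff] at h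
      obtain ⟨η, hη, h⟩ := h
      refine ⟨η, hη, ?_⟩
      intro s hs hsd
      by_cases hs1 : s < 1
      · have := h hsd ⟨hT0.trans hs.1, hs1⟩
        simp only [k, hs1, lt_irrefl, if_true, if_false, dist_zero_right, norm_inv]
        exact inv_lt_of_inv_lt₀ hε this
      · simp [k, hs1, hε]
  have hp1 : Continuous (fun s : unitInterval => k (1 - s * (1 - T))) := by
    refine hk.comp_continuous (by fun_prop) ?_
    intro s
    have h1 := s.2.1
    have h2 := s.2.2
    constructor <;> nlinarith
  obtain ⟨L2, hL2, hL2'⟩ := sj_homLog (Y := Y) (fun x => 1 - x.2.1 * k (1 - x.1 * (1 - T)))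
    (by
      refine continuous_const.sub (Continuous.mul (by fun_prop) ?_)
      exact hp1.comp continuous_fst)
    (by
      rintro ⟨s, z⟩
      have h1 := s.2.1
      have h2 := s.2.2
      simp only
      set t : ℝ := 1 - s * (1 - T)
      have ht : T ≤ t := by simp only [t]; nlinarith
      by_cases ht1 : t < 1
      · have h0 : γ t ≠ 0 := by
          intro h0
          have := hT t ht ht1
          rw [h0] at this
          norm_num at this
        simp only [k, ht1, if_true]
        intro e
        apply hY t ⟨hT0.trans ht, ht1⟩
        have : z.1 = γ t := by
          field_simp at e
          linear_combination -e
        exact this ▸ z.2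
      · simp [k, ht1])
    (fun _ => 0) continuous_const (by intro y; simp [k])
  have hp2 : Continuous (fun s : unitInterval => γ ((1 - s) * T)) := by
    refine hγ.comp_continuous (by fun_prop) ?_
    intro s
    have h1 := s.2.1
    have h2 := s.2.2
    constructor <;> nlinarith
  obtain ⟨L1, hL1, hL1'⟩ := sj_homLog (Y := Y) (fun x => x.2.1 - γ ((1 - x.1) * T))
    (by
      refine Continuous.sub (by fun_prop) ?_
      exact hp2.comp continuous_fst)
    (by
      rintro ⟨s, z⟩ e
      have h1 := s.2.1
      have h2 := s.2.2
      apply hY ((1 - s) * T) ⟨by nlinarith, by nlinarith⟩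
      rw [← sub_eq_zero.1 e]
      exact z.2)
    (fun z => L2 (1, z) + Complex.log (-γ T)) (by fun_prop) (by
      intro z
      rw [Complex.exp_add, hL2', Complex.exp_log (neg_ne_zero.2 hT')]
      simp only [k, Icc.coe_one, one_mul, sub_sub_cancel, hT1, if_true, Icc.coe_zero, sub_zero]
      field_simp
      ring)
  refine ⟨fun z => if h : z ∈ Y then L1 (1, ⟨z, h⟩) else 0, ?_, ?_⟩
  · rw [continuousOn_iff_continuous_domRestrict]
    have h1 : Continuous (fun z : Y => L1 (1, z)) := by fun_prop
    convert h1 using 2 with z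
    simp
  · intro z hz
    simp [hz, hL1']

theorem sj_rayLog' (v : EuclideanSpace ℝ (Fin 3)) (φ : EuclideanSpace ℝ (Fin 3) → ℂ)
    (ψ : ℂ → EuclideanSpace ℝ (Fin 3))
    (hφ : ContinuousOn φ (sphereS \ {v})) (hψ : Continuous ψ) (hψs : ∀ z, ψ z ∈ sphereS \ {v})
    (hφψ : ∀ z, φ (ψ z) = z) (hψφ : ∀ x ∈ sphereS \ {v}, ψ (φ x) = x)
    (α : ℝ → EuclideanSpace ℝ (Fin 3)) (hα : ContinuousOn α (Icc 0 1))
    (hαs : ∀ t ∈ Icc (0:ℝ) 1, α t ∈ sphereS) (h1 : α 1 = v) (hv : ∀ t ∈ Ico (0:ℝ) 1, α t ≠ v) :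
    ∃ L : ℂ → ℂ, ContinuousOn L {z | ψ z ∉ α '' Icc 0 1} ∧
      ∀ z, ψ z ∉ α '' Icc 0 1 → Complex.exp (L z) = z - φ (α 0) := by
  have hm : ∀ t ∈ Ico (0:ℝ) 1, α t ∈ sphereS \ {v} := fun t ht => ⟨hαs t (Ico_subset_Icc_self ht), hv t ht⟩
  refine sj_rayLog (fun t => φ (α t)) (hφ.comp (hα.mono Ico_subset_Icc_self) hm) ?_ _ ?_
  · rw [Filter.tendsto_atTop]
    intro R
    have hcl : IsClosed (ψ '' closedBall 0 R) := ((isCompact_closedBall _ _).image hψ).isClosed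
    have hvn : (ψ '' closedBall 0 R)ᶜ ∈ nhds (α 1) := by
      refine hcl.isOpen_compl.mem_nhds ?_
      rintro ⟨z, -, hz⟩
      exact (hψs z).2 (hz.trans h1)
    have ht := ((hα 1 (by simp)).mono Ico_subset_Icc_self).eventually hvn
    filter_upwards [ht, self_mem_nhdsWithin] with t ht ht'
    by_contra hcon
    push Not at hcon
    exact ht ⟨φ (α t), by simpa using hcon.le, hψφ _ (hm t ht')⟩
  · intro t ht h
    apply h
    rw [hψφ _ (hm t ht)]
    exact ⟨t, Ico_subset_Icc_self ht, rfl⟩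

theorem sj_lower (g : ℝ → EuclideanSpace ℝ (Fin 3)) (hg : ContinuousOn g (Icc 0 1))
    (hgs : ∀ t ∈ Icc (0:ℝ) 1, g t ∈ sphereS) (h01 : g 0 = g 1) (τ : ℝ) (hτ0 : 0 < τ) (hτ1 : τ < 1)
    (hinj : ∀ s ∈ Icc (0:ℝ) τ, ∀ t ∈ Icc τ 1, g s = g t → (s = τ ∧ t = τ) ∨ (s = 0 ∧ t = 1))
    (E : Set (EuclideanSpace ℝ (Fin 3))) (hE : IsOpen E) (hpE : g 0 ∈ E)
    (W : Set (EuclideanSpace ℝ (Fin 3))) (hW : IsPreconnected W)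
    (hWK : W ⊆ sphereS \ g '' Icc 0 1) (hEW : (sphereS \ g '' Icc 0 1) ∩ E ⊆ W) : False := by
  classical
  have hτm : τ ∈ Icc (0:ℝ) 1 := ⟨hτ0.le, hτ1.le⟩
  obtain ⟨φ, ψ, hφ, hψ, hψs, hφψ, hψφ⟩ := sj_chart (g τ) (hgs τ hτm)
  have eA : (fun t => g (t * τ)) '' Icc 0 1 = g '' Icc 0 τ := by
    ext x
    constructor
    · rintro ⟨t, ht, rfl⟩
      exact ⟨t * τ, ⟨by nlinarith [ht.1], by nlinarith [ht.2]⟩, rfl⟩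
    · rintro ⟨t, ht, rfl⟩
      refine ⟨t / τ, ⟨div_nonneg ht.1 hτ0.le, (div_le_one hτ0).2 ht.2⟩, ?_⟩
      simp only
      rw [div_mul_cancel₀ _ hτ0.ne']
  have h1τ : 0 < 1 - τ := by linarith
  have eB : (fun t => g (1 - t * (1 - τ))) '' Icc 0 1 = g '' Icc τ 1 := by
    ext x
    constructor
    · rintro ⟨t, ht, rfl⟩
      exact ⟨1 - t * (1 - τ), ⟨by nlinarith [ht.2], by nlinarith [ht.1]⟩, rfl⟩
    · rintro ⟨t, ht, rfl⟩
      refine ⟨(1 - t) / (1 - τ), ⟨div_nonneg (by linarith [ht.2]) h1τ.le,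
        (div_le_one h1τ).2 (by linarith [ht.1])⟩, ?_⟩
      simp only
      rw [div_mul_cancel₀ _ h1τ.ne']
      congr 1
      ring
  obtain ⟨LA, hLA, hLA'⟩ := sj_rayLog' (g τ) φ ψ hφ hψ hψs hφψ hψφ (fun t => g (t * τ))
    (hg.comp (by fun_prop) (fun t ht => ⟨by nlinarith [ht.1], by nlinarith [ht.2]⟩))
    (fun t ht => hgs _ ⟨by nlinarith [ht.1], by nlinarith [ht.2]⟩) (by simp) (by
      intro t ht e
      rcases hinj (t * τ) ⟨by nlinarith [ht.1], by nlinarith [ht.2]⟩ τ ⟨le_rfl, hτ1.le⟩ e with h | h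
      · nlinarith [ht.2, h.1]
      · linarith [h.2])
  obtain ⟨LB, hLB, hLB'⟩ := sj_rayLog' (g τ) φ ψ hφ hψ hψs hφψ hψφ (fun t => g (1 - t * (1 - τ)))
    (hg.comp (by fun_prop) (fun t ht => ⟨by nlinarith [ht.2], by nlinarith [ht.1]⟩))
    (fun t ht => hgs _ ⟨by nlinarith [ht.2], by nlinarith [ht.1]⟩) (by simp) (by
      intro t ht e
      rcases hinj τ ⟨hτ0.le, le_rfl⟩ (1 - t * (1 - τ)) ⟨by nlinarith [ht.2], by nlinarith [ht.1]⟩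
        e.symm with h | h
      · nlinarith [ht.2, h.2]
      · linarith [h.1])
  rw [eA] at hLA hLA'
  rw [eB] at hLB hLB'
  simp only [zero_mul, sub_zero] at hLA' hLB'
  rw [← h01] at hLB'
  have hAK : g '' Icc 0 τ ⊆ g '' Icc 0 1 := image_mono (Icc_subset_Icc_right hτ1.le)
  have hBK : g '' Icc τ 1 ⊆ g '' Icc 0 1 := image_mono (Icc_subset_Icc_left hτ0.le)
  have hABK : g '' Icc 0 1 ⊆ g '' Icc 0 τ ∪ g '' Icc τ 1 := by
    rw [← image_union, Icc_union_Icc_eq_Icc hτ0.le hτ1.le]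
  have hAc : IsClosed (g '' Icc 0 τ) := (isCompact_Icc.image_of_continuousOn
    (hg.mono (Icc_subset_Icc_right hτ1.le))).isClosed
  have hBc : IsClosed (g '' Icc τ 1) := (isCompact_Icc.image_of_continuousOn
    (hg.mono (Icc_subset_Icc_left hτ0.le))).isClosed
  have hWv : W ⊆ sphereS \ {g τ} := by
    intro x hx
    refine ⟨(hWK hx).1, ?_⟩
    rintro rfl
    exact (hWK hx).2 ⟨τ, hτm, rfl⟩
  have hpv : g 0 ≠ g τ := by
    intro e
    rcases hinj 0 ⟨le_rfl, hτ0.le⟩ τ ⟨le_rfl, hτ1.le⟩ e with h | h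
    · linarith [h.1]
    · linarith [h.2]
  have hp : ψ (φ (g 0)) = g 0 := hψφ _ ⟨hgs 0 (by simp), hpv⟩
  have hW' : IsPreconnected (φ '' W) := hW.image _ (hφ.mono hWv)
  have hW'K : ∀ z ∈ φ '' W, ψ z ∉ g '' Icc 0 1 := by
    rintro _ ⟨x, hx, rfl⟩
    rw [hψφ _ (hWv hx)]
    exact (hWK hx).2
  obtain ⟨c, hc, hcW⟩ : ∃ c : ℂ, Complex.exp c = 1 ∧ ∀ z ∈ φ '' W, LA z = LB z + c := by
    have hexp : ∀ z ∈ φ '' W, Complex.exp (LA z - LB z) = 1 := by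
      intro z hz
      have h1 := hLA' z (fun h => hW'K z hz (hAK h))
      have h2 := hLB' z (fun h => hW'K z hz (hBK h))
      rw [Complex.exp_sub, h1, h2]
      refine div_self ?_
      rw [← h1]
      exact Complex.exp_ne_zero _
    have := sj_const hW' (fun z => LA z - LB z) ((hLA.mono (fun z hz h => hW'K z hz (hAK h))).sub
      (hLB.mono (fun z hz h => hW'K z hz (hBK h)))) 1 hexp
    rcases (φ '' W).eq_empty_or_nonempty with h | ⟨w, hw⟩
    · exact ⟨0, by simp, by rw [h]; simp⟩
    · refine ⟨LA w - LB w, hexp w hw, fun z hz => ?_⟩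
      linear_combination this z hz w hw
  have hEo : ψ ⁻¹' E ∈ nhds (φ (g 0)) := (hE.preimage hψ).mem_nhds (by rw [mem_preimage, hp]; exact hpE)
  obtain ⟨ε, hε, hεE⟩ := Metric.nhds_basis_closedBall.mem_iff.1 hEo
  have hdis : ∀ z ∈ sphere (φ (g 0)) ε, ψ z ∈ g '' Icc 0 τ → ψ z ∉ g '' Icc τ 1 := by
    rintro z hz ⟨s, hs, es⟩ ⟨t, ht, et⟩
    rcases hinj s hs t ht (es.trans et.symm) with h | h
    · rw [h.1] at es
      exact (hψs z).2 es.symm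
    · rw [h.1] at es
      have : z = φ (g 0) := by rw [es, hφψ]
      rw [this] at hz
      simp at hz
      exact hε.ne hz
  have hglue : ∀ z ∈ sphere (φ (g 0)) ε, ψ z ∉ g '' Icc 0 τ → ψ z ∉ g '' Icc τ 1 →
      LA z = LB z + c := by
    intro z hz hA hB
    apply hcW
    refine ⟨ψ z, hEW ⟨⟨(hψs z).1, fun h => (hABK h).elim hA hB⟩, ?_⟩, hφψ z⟩
    exact hεE (sphere_subset_closedBall hz)
  have := sj_noLog (φ (g 0)) ε hε 1 (fun z => if ψ z ∉ g '' Icc 0 τ then LA z else LB z + c) (by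
    intro z hz
    by_cases hA : ψ z ∈ g '' Icc 0 τ
    · have hB := hdis z hz hA
      have hn : {z | ψ z ∉ g '' Icc τ 1} ∈ nhds z := (hBc.isOpen_compl.preimage hψ).mem_nhds hB
      have hcont : ContinuousAt (fun z => LB z + c) z := (hLB.continuousAt hn).add continuousAt_const
      refine hcont.continuousWithinAt.congr_of_eventuallyEq ?_ (by simp only [not_not.2 hA, if_false])
      filter_upwards [mem_nhdsWithin_of_mem_nhds hn, self_mem_nhdsWithin] with w hw hw'
      by_cases hwA : ψ w ∈ g '' Icc 0 τ
      · simp only [not_not.2 hwA, if_false]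
      · simp only [hwA, not_false_eq_true, if_true]
        exact hglue w hw' hwA hw
    · have hn : {z | ψ z ∉ g '' Icc 0 τ} ∈ nhds z := (hAc.isOpen_compl.preimage hψ).mem_nhds hA
      refine (hLA.continuousAt hn).continuousWithinAt.congr_of_eventuallyEq ?_
        (by simp only [hA, not_false_eq_true, if_true])
      filter_upwards [mem_nhdsWithin_of_mem_nhds hn] with w hw
      exact if_pos hw) (by
    intro z hz
    rw [zpow_one]
    by_cases hA : ψ z ∈ g '' Icc 0 τ
    · simp only [not_not.2 hA, if_false]
      rw [Complex.exp_add, hc, mul_one]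
      exact hLB' z (hdis z hz hA)
    · simp only [hA, not_false_eq_true, if_true]
      exact hLA' z hA)
  exact one_ne_zero this

theorem sj_upperS (g : ℝ → EuclideanSpace ℝ (Fin 3)) (hg : ContinuousOn g (Icc 0 1))
    (hgs : ∀ t ∈ Icc (0:ℝ) 1, g t ∈ sphereS) (h01 : g 0 = g 1) (δ : ℝ) (hδ : 0 < δ)
    (hinj : ∀ s ∈ Icc (0:ℝ) 1, ∀ t ∈ Icc (0:ℝ) 1, g s = g t → s = t ∨ (s = 0 ∧ t = 1) ∨
      (s = 1 ∧ t = 0) ∨ (s ∈ Icc δ (1 - δ) ∧ t ∈ Icc δ (1 - δ)))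
    (n : EuclideanSpace ℝ (Fin 3)) (hn : n ∈ sphereS \ g '' Icc 0 1) :
    ∃ E : Set (EuclideanSpace ℝ (Fin 3)), IsOpen E ∧ g 0 ∈ E ∧
      ∀ a ∈ (sphereS \ g '' Icc 0 1) ∩ E, ∀ b ∈ (sphereS \ g '' Icc 0 1) ∩ E,
      ∀ c ∈ (sphereS \ g '' Icc 0 1) ∩ E,
      connectedComponentIn (sphereS \ g '' Icc 0 1) a =
        connectedComponentIn (sphereS \ g '' Icc 0 1) b ∨
      connectedComponentIn (sphereS \ g '' Icc 0 1) a =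
        connectedComponentIn (sphereS \ g '' Icc 0 1) c ∨
      connectedComponentIn (sphereS \ g '' Icc 0 1) b =
        connectedComponentIn (sphereS \ g '' Icc 0 1) c := by
  obtain ⟨φ, ψ, hφ, hψ, hψs, hφψ, hψφ⟩ := sj_chart n hn.1
  have hm : ∀ t ∈ Icc (0:ℝ) 1, g t ∈ sphereS \ {n} := fun t ht =>
    ⟨hgs t ht, fun h => hn.2 ⟨t, ht, h⟩⟩
  have hsub : Icc δ (1 - δ) ⊆ Icc (0:ℝ) 1 := Icc_subset_Icc hδ.le (by linarith)
  have hφi : ∀ x ∈ sphereS \ {n}, ∀ y ∈ sphereS \ {n}, φ x = φ y → x = y := by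
    intro x hx y hy e
    rw [← hψφ x hx, ← hψφ y hy, e]
  have hγ : ContinuousOn (fun t => φ (g t)) (Icc 0 1) := hφ.comp hg hm
  have hBc : IsClosed ((fun t => φ (g t)) '' Icc δ (1 - δ)) :=
    (isCompact_Icc.image_of_continuousOn (hγ.mono hsub)).isClosed
  have hpB : φ (g 0) ∈ ((fun t => φ (g t)) '' Icc δ (1 - δ))ᶜ := by
    rintro ⟨t, ht, e⟩
    have e' := hφi _ (hm t (hsub ht)) _ (hm 0 (by simp)) e
    have h1 := ht.1
    have h2 := ht.2
    rcases hinj t (hsub ht) 0 (by simp) e' with h | h | h | h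
    · linarith
    · linarith [h.1]
    · linarith [h.1]
    · linarith [h.2.1]
  obtain ⟨r, hr, hrB⟩ := Metric.nhds_basis_ball.mem_iff.1 (hBc.isOpen_compl.mem_nhds hpB)
  have hnb := (hφ (g 0) (hm 0 (by simp))) (ball_mem_nhds (φ (g 0)) hr)
  obtain ⟨u, hu, hpu, hus⟩ := mem_nhdsWithin.1 hnb
  have hKn : ∀ a ∈ sphereS \ g '' Icc 0 1, a ≠ n → φ a ∉ (fun t => φ (g t)) '' Icc 0 1 := by
    rintro a ha han ⟨t, ht, e⟩
    exact ha.2 ⟨t, ht, hφi _ (hm t ht) a ⟨ha.1, han⟩ e⟩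
  have key : ∀ a ∈ sphereS \ g '' Icc 0 1, a ≠ n → ∀ b ∈ sphereS \ g '' Icc 0 1, b ≠ n →
      φ b ∈ connectedComponentIn ((fun t => φ (g t)) '' Icc 0 1)ᶜ (φ a) →
      connectedComponentIn (sphereS \ g '' Icc 0 1) a =
        connectedComponentIn (sphereS \ g '' Icc 0 1) b := by
    intro a ha han b hb hbn h
    apply connectedComponentIn_eq
    have hpre := (isPreconnected_connectedComponentIn (x := φ a)
      (F := ((fun t => φ (g t)) '' Icc 0 1)ᶜ)).image ψ hψ.continuousOn
    refine hpre.subset_connectedComponentIn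
      ⟨φ a, mem_connectedComponentIn (hKn a ha han), hψφ a ⟨ha.1, han⟩⟩ ?_
      ⟨φ b, h, hψφ b ⟨hb.1, hbn⟩⟩
    rintro _ ⟨z, hz, rfl⟩
    refine ⟨(hψs z).1, ?_⟩
    rintro ⟨t, ht, e⟩
    refine connectedComponentIn_subset _ _ hz ⟨t, ht, ?_⟩
    simp only
    rw [e, hφψ]
  refine ⟨u ∩ {n}ᶜ, hu.inter isOpen_compl_singleton, ⟨hpu, (hm 0 (by simp)).2⟩, ?_⟩
  intro a ha b hb c hc
  have hD : ∀ a ∈ (sphereS \ g '' Icc 0 1) ∩ (u ∩ {n}ᶜ), φ a ∈ ball (φ (g 0)) r :=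
    fun a ha => hus ⟨ha.2.1, ha.1.1, ha.2.2⟩
  have := sj_upper (fun t => φ (g t)) hγ (by simp only [h01]) δ hδ
    (fun s hs t ht e => hinj s hs t ht (hφi _ (hm s hs) _ (hm t ht) e))
    (ball (φ (g 0)) r) (convex_ball _ _) (fun t ht h => hrB h ⟨t, ht, rfl⟩) (φ a) (φ b) (φ c)
    (hD a ha) (hD b hb) (hD c hc) (hKn a ha.1 ha.2.2) (hKn b hb.1 hb.2.2) (hKn c hc.1 hc.2.2)
  rcases this with h | h | h
  · exact Or.inl (key a ha.1 ha.2.2 b hb.1 hb.2.2 h)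
  · exact Or.inr (Or.inl (key a ha.1 ha.2.2 c hc.1 hc.2.2 h))
  · exact Or.inr (Or.inr (key b hb.1 hb.2.2 c hc.1 hc.2.2 h))

theorem sj_curve (g : ℝ → EuclideanSpace ℝ (Fin 3)) (hg : ContinuousOn g (Icc 0 1))
    (hgs : ∀ t ∈ Icc (0:ℝ) 1, g t ∈ sphereS) (h01 : g 0 = g 1) (δ : ℝ) (hδ : 0 < δ)
    (hδ1 : δ < 1 / 2)
    (hinj : ∀ s ∈ Icc (0:ℝ) 1, ∀ t ∈ Icc (0:ℝ) 1, g s = g t → s = t ∨ (s = 0 ∧ t = 1) ∨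
      (s = 1 ∧ t = 0) ∨ (s ∈ Icc δ (1 - δ) ∧ t ∈ Icc δ (1 - δ))) :
    ∃ C₁ C₂ : Set (EuclideanSpace ℝ (Fin 3)), C₁ ≠ C₂ ∧
      IsCompOf C₁ (sphereS \ g '' Icc 0 1) ∧ g 0 ∈ closure C₁ ∧
      IsCompOf C₂ (sphereS \ g '' Icc 0 1) ∧ g 0 ∈ closure C₂ ∧
      ∀ C : Set (EuclideanSpace ℝ (Fin 3)),
        IsCompOf C (sphereS \ g '' Icc 0 1) → g 0 ∈ closure C → C = C₁ ∨ C = C₂ := by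
  have low := sj_lower g hg hgs h01 (δ / 2) (by linarith) (by linarith) (by
    intro s hs t ht e
    have hs1 := hs.1
    have hs2 := hs.2
    have ht1 := ht.1
    have ht2 := ht.2
    rcases hinj s ⟨hs1, by linarith⟩ t ⟨by linarith, ht2⟩ e with h | h | h | h
    · left; constructor <;> linarith
    · exact Or.inr h
    · linarith [h.1]
    · linarith [h.1.1])
  set A := sphereS \ g '' Icc 0 1 with hA
  have lowE : ∀ E, IsOpen E → g 0 ∈ E → ∃ a ∈ A ∩ E, ∃ b ∈ A ∩ E,
      connectedComponentIn A a ≠ connectedComponentIn A b := by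
    intro E hE hpE
    by_contra hcon
    push Not at hcon
    rcases (A ∩ E).eq_empty_or_nonempty with h | ⟨a, ha⟩
    · exact low E hE hpE ∅ isPreconnected_empty (empty_subset _) (by rw [h])
    · refine low E hE hpE (connectedComponentIn A a) isPreconnected_connectedComponentIn
        (connectedComponentIn_subset _ _) ?_
      intro b hb
      rw [hcon a ha b hb]
      exact mem_connectedComponentIn hb.1
  obtain ⟨n, hn, -⟩ := lowE univ isOpen_univ trivial
  obtain ⟨E, hE, hpE, hup⟩ := sj_upperS g hg hgs h01 δ hδ hinj n hn.1
  obtain ⟨a, ha, b, hb, hab⟩ := lowE E hE hpE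
  have two : ∀ c ∈ A ∩ E, connectedComponentIn A c = connectedComponentIn A a ∨
      connectedComponentIn A c = connectedComponentIn A b := by
    intro c hc
    rcases hup a ha b hb c hc with h | h | h
    · exact absurd h hab
    · exact Or.inl h.symm
    · exact Or.inr h.symm
  have hcl : g 0 ∈ closure (connectedComponentIn A a) ∧ g 0 ∈ closure (connectedComponentIn A b) := by
    have : ∀ F, IsOpen F → g 0 ∈ F → (F ∩ connectedComponentIn A a).Nonempty ∧
        (F ∩ connectedComponentIn A b).Nonempty := by
      intro F hF hpF
      obtain ⟨a', ha', b', hb', hab'⟩ := lowE (E ∩ F) (hE.inter hF) ⟨hpE, hpF⟩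
      have ma := mem_connectedComponentIn ha'.1
      have mb := mem_connectedComponentIn hb'.1
      rcases two a' ⟨ha'.1, ha'.2.1⟩ with h1 | h1 <;> rcases two b' ⟨hb'.1, hb'.2.1⟩ with h2 | h2
      · exact absurd (h1.trans h2.symm) hab'
      · exact ⟨⟨a', ha'.2.2, h1 ▸ ma⟩, ⟨b', hb'.2.2, h2 ▸ mb⟩⟩
      · exact ⟨⟨b', hb'.2.2, h2 ▸ mb⟩, ⟨a', ha'.2.2, h1 ▸ ma⟩⟩
      · exact absurd (h1.trans h2.symm) hab'
    exact ⟨mem_closure_iff.2 fun F hF h => (this F hF h).1,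
      mem_closure_iff.2 fun F hF h => (this F hF h).2⟩
  refine ⟨_, _, hab, ⟨a, ha.1, rfl⟩, hcl.1, ⟨b, hb.1, rfl⟩, hcl.2, ?_⟩
  rintro C ⟨x, hx, rfl⟩ hC
  obtain ⟨c, hcE, hc⟩ := mem_closure_iff.1 hC E hE hpE
  rw [connectedComponentIn_eq hc]
  exact two c ⟨connectedComponentIn_subset _ _ hc, hcE⟩

theorem sj_polar (x : EuclideanSpace ℝ (Fin 2)) (hx : x ∈ circleS) :
    ∃ θ : ℝ, x = !₂[Real.cos θ, Real.sin θ] := by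
  have h1 : x 0 ^ 2 + x 1 ^ 2 = 1 := by
    have : ‖x‖ = 1 := by simpa [circleS] using hx
    have h2 := EuclideanSpace.norm_sq_eq x
    rw [this] at h2
    simp [Fin.sum_univ_two] at h2
    linarith
  let z : ℂ := ⟨x 0, x 1⟩
  have hz : ‖z‖ = 1 := by
    rw [Complex.norm_eq_sqrt_sq_add_sq]
    simp [z, h1]
  have hz0 : z ≠ 0 := by
    intro h
    rw [h] at hz
    simp at hz
  refine ⟨z.arg, ?_⟩
  rw [Complex.cos_arg hz0, Complex.sin_arg, hz]
  ext i
  fin_cases i <;> simp [z]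

theorem sj_circ_mem (θ : ℝ) : !₂[Real.cos θ, Real.sin θ] ∈ circleS := by
  simp [circleS, EuclideanSpace.norm_eq]

theorem sj_circ_inj (θ η : ℝ) (h : (!₂[Real.cos θ, Real.sin θ] : EuclideanSpace ℝ (Fin 2)) = !₂[Real.cos η, Real.sin η]) :
    ∃ k : ℤ, θ - η = 2 * Real.pi * k := by
  have h0 := congrArg (fun x : EuclideanSpace ℝ (Fin 2) => x 0) h
  have h1 := congrArg (fun x : EuclideanSpace ℝ (Fin 2) => x 1) h
  simp at h0 h1
  exact Real.Angle.angle_eq_iff_two_pi_dvd_sub.1 (Real.Angle.cos_sin_inj h0 h1)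

theorem strong_jordan_separation_two_components
    (f : EuclideanSpace ℝ (Fin 2) → EuclideanSpace ℝ (Fin 3))
    (hf : ContinuousOn f circleS) (hmaps : MapsTo f circleS sphereS)
    (U : Set (EuclideanSpace ℝ (Fin 2))) (hUne : U.Nonempty) (hUI : U ⊆ injPts f)
    (hUopen : ∃ V, IsOpen V ∧ U = V ∩ circleS)
    (q : EuclideanSpace ℝ (Fin 2)) (hq : q ∈ U) :
    ∃ C₁ C₂ : Set (EuclideanSpace ℝ (Fin 3)), C₁ ≠ C₂ ∧
      IsCompOf C₁ (sphereS \ f '' circleS) ∧ f q ∈ closure C₁ ∧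
      IsCompOf C₂ (sphereS \ f '' circleS) ∧ f q ∈ closure C₂ ∧
      ∀ C : Set (EuclideanSpace ℝ (Fin 3)),
        IsCompOf C (sphereS \ f '' circleS) → f q ∈ closure C → C = C₁ ∨ C = C₂ := by
  obtain ⟨V, hV, rfl⟩ := hUopen
  obtain ⟨θ, hθ⟩ := sj_polar q hq.2
  let e : ℝ → EuclideanSpace ℝ (Fin 2) := fun t =>
    !₂[Real.cos (θ + 2 * Real.pi * t), Real.sin (θ + 2 * Real.pi * t)]
  have he : Continuous e := by
    simp only [e]
    fun_prop
  have hem : ∀ t, e t ∈ circleS := fun t => sj_circ_mem _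
  have he0 : e 0 = q := by simp [e, hθ]
  have hper : ∀ (t : ℝ) (k : ℤ), e (t + k) = e t := by
    intro t k
    have : θ + 2 * Real.pi * (t + k) = θ + 2 * Real.pi * t + k * (2 * Real.pi) := by ring
    simp only [e]
    rw [this, Real.cos_add_int_mul_two_pi, Real.sin_add_int_mul_two_pi]
  have heinj : ∀ s t, e s = e t → ∃ k : ℤ, s - t = k := by
    intro s t h
    obtain ⟨k, hk⟩ := sj_circ_inj _ _ h
    refine ⟨k, ?_⟩
    have hpi := Real.pi_pos
    have : 2 * Real.pi * (s - t - k) = 0 := by linear_combination hk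
    have h2 := (mul_eq_zero.1 this).resolve_left (by positivity)
    linarith
  have hsurj : e '' Icc 0 1 = circleS := by
    apply Subset.antisymm
    · rintro _ ⟨t, -, rfl⟩
      exact hem t
    · intro x hx
      obtain ⟨η, hη⟩ := sj_polar x hx
      refine ⟨Int.fract ((η - θ) / (2 * Real.pi)), ⟨Int.fract_nonneg _, (Int.fract_lt_one _).le⟩, ?_⟩
      have h1 := hper (Int.fract ((η - θ) / (2 * Real.pi))) ⌊(η - θ) / (2 * Real.pi)⌋
      rw [Int.fract_add_floor] at h1
      rw [← h1, hη]
      simp only [e]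
      have : θ + 2 * Real.pi * ((η - θ) / (2 * Real.pi)) = η := by
        have := Real.pi_pos
        field_simp
        ring
      rw [this]
  obtain ⟨ε, hε, hεV⟩ := Metric.isOpen_iff.1 (hV.preimage he) 0 (by
    rw [mem_preimage, he0]; exact hq.1)
  have hball : ∀ t : ℝ, |t| < ε → e t ∈ injPts f := by
    intro t ht
    exact hUI ⟨hεV (by simpa using ht), hem t⟩
  have hδ0 : 0 < min ε (1 / 4) := lt_min hε (by norm_num)
  have hI : ∀ t ∈ Icc (0:ℝ) 1, t ∉ Icc (min ε (1 / 4)) (1 - min ε (1 / 4)) → e t ∈ injPts f := by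
    intro t ht h
    have hle := min_le_left ε (1 / 4)
    by_cases h1 : t < min ε (1 / 4)
    · apply hball
      rw [abs_of_nonneg ht.1]
      linarith
    · have h2 : 1 - min ε (1 / 4) < t := by
        by_contra h2
        exact h ⟨not_lt.1 h1, not_lt.1 h2⟩
      have h3 := hper (t - 1) 1
      simp only [Int.cast_one, sub_add_cancel] at h3
      rw [h3]
      apply hball
      rw [abs_lt]
      constructor <;> linarith [ht.2]
  have hfin : ∀ s ∈ Icc (0:ℝ) 1, ∀ t ∈ Icc (0:ℝ) 1, e s = e t → s = t ∨ (s = 0 ∧ t = 1) ∨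
      (s = 1 ∧ t = 0) := by
    intro s hs t ht h
    obtain ⟨k, hk⟩ := heinj s t h
    have hk1 : (k : ℝ) ≤ 1 := by linarith [hs.2, ht.1]
    have hk2 : (-1 : ℝ) ≤ k := by linarith [hs.1, ht.2]
    have hk1' : k ≤ 1 := by exact_mod_cast hk1
    have hk2' : -1 ≤ k := by exact_mod_cast hk2
    have : k = -1 ∨ k = 0 ∨ k = 1 := by omega
    rcases this with h | h | h <;> rw [h] at hk <;> push_cast at hk
    · right; left; constructor <;> linarith [hs.1, ht.2]
    · left; linarith
    · right; right; constructor <;> linarith [hs.2, ht.1]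
  have main := sj_curve (fun t => f (e t)) (hf.comp he.continuousOn (fun t _ => hem t))
    (fun t _ => hmaps (hem t)) (by
      have := hper 0 1
      simp only [Int.cast_one, zero_add] at this
      simp only [this]) (min ε (1 / 4)) hδ0
    (lt_of_le_of_lt (min_le_right _ _) (by norm_num)) (by
      intro s hs t ht h
      by_cases h1 : s ∈ Icc (min ε (1 / 4)) (1 - min ε (1 / 4))
      · by_cases h2 : t ∈ Icc (min ε (1 / 4)) (1 - min ε (1 / 4))
        · exact Or.inr (Or.inr (Or.inr ⟨h1, h2⟩))
        · have := (hI t ht h2).2 (e s) (hem s) h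
          have := hfin s hs t ht this
          tauto
      · have := (hI s hs h1).2 (e t) (hem t) h.symm
        have := hfin s hs t ht this.symm
        tauto)
  have himg : (fun t => f (e t)) '' Icc 0 1 = f '' circleS := by
    rw [← hsurj, image_image]
  rw [himg] at main
  simp only [he0] at main
  exact main
end
end

section
/- Strong Jordan separation, extension part: Let f : S¹ → S² be a continuous map whose set of injective points I(f) = {p ∈ S¹ : f⁻¹({f(p)}) = {p}} contains a nonempty open subset U of S¹, let q ∈ U and p := f(q). If F : D² → S² is any continuous map whose restriction to S¹ = ∂D² equals f, then there exists a connected component C of S² \ f(S¹) such that p lies in the closure of C and C ⊆ F(D²). -/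
open Metric Set

noncomputable section

/-- The closed unit disk in the Euclidean plane. -/
def diskS : Set (EuclideanSpace ℝ (Fin 2)) := Metric.closedBall 0 1

theorem exists_log_of_continuous {E : Type*} [NormedAddCommGroup E] [NormedSpace ℝ E]
    {h : E → ℂ} (hc : Continuous h) (h0 : ∀ x, h x ≠ 0) :
    ∃ L : E → ℂ, Continuous L ∧ ∀ x, Complex.exp (L x) = h x := by
  rcases Complex.isCoveringMapOn_exp.existsUnique_continuousMap_lifts
    (⟨h, hc⟩ : C(E, ℂ)) (a₀ := 0) (e₀ := Complex.log (h 0)) (Complex.exp_log (h0 0))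
    (fun x ↦ h0 x) with ⟨L, ⟨-, hL⟩, -⟩
  exact ⟨L, L.continuous, fun x => congrFun hL x⟩

theorem exp_log_const {X : Type*} [TopologicalSpace X] {S : Set X} (hS : IsPreconnected S)
    {l m : X → ℂ} (hl : ContinuousOn l S) (hm : ContinuousOn m S)
    (he : ∀ x ∈ S, Complex.exp (l x) = Complex.exp (m x)) {x y : X} (hx : x ∈ S) (hy : y ∈ S) :
    l x - m x = l y - m y := by
  have key := Complex.isCoveringMap_exp.eqOn_of_comp_eqOn (g₁ := fun z => l z - m z)
    (g₂ := fun _ => l x - m x) hS (hl.sub hm) continuousOn_const ?_ hx rfl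
  · exact (key hy).symm
  · intro z hz
    simp only [Function.comp, Subtype.mk.injEq]
    rw [Complex.exp_sub, Complex.exp_sub, he z hz, he x hx, div_self (Complex.exp_ne_zero _),
      div_self (Complex.exp_ne_zero _)]

/-- continuous logarithm of `h` on `S` -/
def LogOn {X : Type*} [TopologicalSpace X] (h : X → ℂ) (S : Set X) : Prop :=
  ∃ L : X → ℂ, ContinuousOn L S ∧ ∀ z ∈ S, Complex.exp (L z) = h z

theorem glue_log {X : Type*} [TopologicalSpace X] {h l m : X → ℂ} {S T : Set X}
    (hS : IsClosed S) (hT : IsClosed T) (hl : ContinuousOn l S) (hm : ContinuousOn m T)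
    (el : ∀ z ∈ S, Complex.exp (l z) = h z) (em : ∀ z ∈ T, Complex.exp (m z) = h z)
    (hlm : ∀ z ∈ S, z ∈ T → l z = m z) : LogOn h (S ∪ T) := by
  classical
  refine ⟨fun z => if z ∈ S then l z else m z, ?_, ?_⟩
  · refine ContinuousOn.union_of_isClosed ?_ ?_ hS hT
    · exact hl.congr fun z hz => by simp [hz]
    · refine hm.congr fun z hz => ?_
      by_cases h' : z ∈ S
      · simp [h', hlm z h' hz]
      · simp [h']
  · rintro z hz
    by_cases h' : z ∈ S
    · simp [h', el z h']
    · simp [h', em z (hz.resolve_left h')]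

theorem glue_log_point {X : Type*} [TopologicalSpace X] {h : X → ℂ} {S T : Set X}
    (hS : IsClosed S) (hT : IsClosed T) (hl : LogOn h S) (hm : LogOn h T) (p : X)
    (hp : S ∩ T ⊆ {p}) : LogOn h (S ∪ T) := by
  obtain ⟨l, hl, el⟩ := hl
  obtain ⟨m, hm, em⟩ := hm
  by_cases hpp : p ∈ S ∧ p ∈ T
  · refine glue_log hS hT hl (m := fun z => m z + (l p - m p)) (hm.add continuousOn_const) el ?_ ?_
    · intro z hz
      rw [Complex.exp_add, Complex.exp_sub, el p hpp.1, em p hpp.2, em z hz, div_self, mul_one]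
      rw [← el p hpp.1]
      exact Complex.exp_ne_zero _
    · intro z h1 h2
      have : z = p := hp ⟨h1, h2⟩
      subst this
      ring
  · refine glue_log hS hT hl hm el em ?_
    intro z h1 h2
    have : z = p := hp ⟨h1, h2⟩
    subst this
    exact absurd ⟨h1, h2⟩ hpp

/-- transport of functions along an arc -/
theorem arc_transport {α : ℝ → ℂ} {a b : ℝ} (hα : ContinuousOn α (Icc a b))
    (hinj : InjOn α (Icc a b)) {l : ℝ → ℂ} (hl : ContinuousOn l (Icc a b)) :
    ∃ m : ℂ → ℂ, ContinuousOn m (α '' Icc a b) ∧ ∀ t ∈ Icc a b, m (α t) = l t := by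
  have hinv : ContinuousOn (Function.invFunOn α (Icc a b)) (α '' Icc a b) := by
    rw [continuousOn_iff_isClosed]
    intro t ht
    refine ⟨α '' (t ∩ Icc a b), ?_, ?_⟩
    · refine (IsCompact.image_of_continuousOn (isCompact_Icc.inter_left ht)
        (hα.mono inter_subset_right)).isClosed
    · ext z
      constructor
      · rintro ⟨hz, s, hs, rfl⟩
        rw [mem_preimage, hinj.leftInvOn_invFunOn hs] at hz
        exact ⟨⟨s, ⟨hz, hs⟩, rfl⟩, ⟨s, hs, rfl⟩⟩
      · rintro ⟨⟨s, ⟨hz, hs⟩, rfl⟩, -⟩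
        refine ⟨?_, ⟨s, hs, rfl⟩⟩
        rw [mem_preimage, hinj.leftInvOn_invFunOn hs]
        exact hz
  refine ⟨l ∘ Function.invFunOn α (Icc a b), hl.comp hinv ?_, ?_⟩
  · rintro z ⟨s, hs, rfl⟩
    rw [hinj.leftInvOn_invFunOn hs]
    exact hs
  · intro t ht
    simp [hinj.leftInvOn_invFunOn ht]

theorem Icc_log {a b : ℝ} (hab : a ≤ b) {h : ℝ → ℂ} (hc : ContinuousOn h (Icc a b))
    (h0 : ∀ t ∈ Icc a b, h t ≠ 0) : LogOn h (Icc a b) := by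
  obtain ⟨L, hL, eL⟩ := exists_log_of_continuous (h := fun t : ℝ => h (projIcc a b hab t))
    (hc.comp_continuous (by fun_prop) (fun t => (projIcc a b hab t).2))
    (fun t => h0 _ (projIcc a b hab t).2)
  refine ⟨L, hL.continuousOn, fun t ht => ?_⟩
  rw [eL, projIcc_of_mem hab ht]

theorem arc_log {α : ℝ → ℂ} {a b : ℝ} (hab : a ≤ b) (hα : ContinuousOn α (Icc a b))
    (hinj : InjOn α (Icc a b)) {h : ℂ → ℂ} (hc : ContinuousOn h (α '' Icc a b))
    (h0 : ∀ z ∈ α '' Icc a b, h z ≠ 0) : LogOn h (α '' Icc a b) := by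
  obtain ⟨l, hl, el⟩ := Icc_log hab (h := h ∘ α) (hc.comp hα (mapsTo_image _ _))
    (fun t ht => h0 _ ⟨t, ht, rfl⟩)
  obtain ⟨m, hm, em⟩ := arc_transport hα hinj hl
  refine ⟨m, hm, ?_⟩
  rintro _ ⟨t, ht, rfl⟩
  rw [em t ht, el t ht]; rfl

theorem slit_aux {w : ℂ} (hw : ‖w‖ < 1) : 1 - w ∈ Complex.slitPlane := by
  left
  have := (Complex.abs_re_le_norm w).trans_lt hw
  simp
  linarith [abs_lt.1 this]

/-- log of `(z-x)/(z-y)` off a ball containing `x,y`. -/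
theorem ball_compl_log {p x y : ℂ} {r : ℝ} (hx : x ∈ ball p r) (hy : y ∈ ball p r) :
    LogOn (fun z => (z - x) / (z - y)) (ball p r)ᶜ := by
  have main : ∀ x ∈ ball p r, ∀ z ∈ (ball p r)ᶜ, z - p ≠ 0 ∧ 1 - (x - p) / (z - p) ∈ Complex.slitPlane := by
    intro x hx z hz
    have hz' : r ≤ ‖z - p‖ := by simpa [dist_eq_norm] using hz
    have hx' : ‖x - p‖ < r := by simpa [dist_eq_norm] using hx
    have hpos : 0 < ‖z - p‖ := by linarith [norm_nonneg (x - p)]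
    refine ⟨norm_pos_iff.1 hpos, slit_aux ?_⟩
    rw [norm_div, div_lt_one hpos]
    linarith
  have cont : ∀ x ∈ ball p r, ContinuousOn (fun z => Complex.log (1 - (x - p) / (z - p))) (ball p r)ᶜ := by
    intro x hx
    refine ContinuousOn.clog ?_ (fun z hz => (main x hx z hz).2)
    refine continuousOn_const.sub (continuousOn_const.div (by fun_prop) fun z hz => (main x hx z hz).1)
  refine ⟨fun z => Complex.log (1 - (x - p) / (z - p)) - Complex.log (1 - (y - p) / (z - p)),
    (cont x hx).sub (cont y hy), ?_⟩
  intro z hz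
  have h1 := main x hx z hz
  have h2 := main y hy z hz
  rw [Complex.exp_sub, Complex.exp_log (Complex.slitPlane_ne_zero h1.2),
    Complex.exp_log (Complex.slitPlane_ne_zero h2.2)]
  have h3 := Complex.slitPlane_ne_zero h2.2
  have e1 : 1 - (x - p) / (z - p) = (z - x) / (z - p) := by field_simp [h1.1]; ring
  have e2 : 1 - (y - p) / (z - p) = (z - y) / (z - p) := by field_simp [h1.1]; ring
  rw [e1, e2, div_div_div_cancel_right₀ h1.1]

theorem no_ext {H : ℂ → ℂ} (hc : Continuous H) (h0 : ∀ z, H z ≠ 0) {x : ℂ} {R : ℝ}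
    (hR : ∀ z, R ≤ ‖z‖ → H z = z - x) : False := by
  obtain ⟨L, hL, eL⟩ := exists_log_of_continuous hc h0
  obtain ⟨ρ, hρ⟩ : ∃ ρ : ℝ, ρ = max R (‖x‖ + 1) := ⟨_, rfl⟩
  have hρ1 : R ≤ ρ := hρ ▸ le_max_left _ _
  have hρ2 : ‖x‖ + 1 ≤ ρ := hρ ▸ le_max_right _ _
  have hρ0 : 0 < ρ := by linarith [norm_nonneg x]
  let c : ℝ → ℂ := fun t => ρ * Complex.exp (t * Complex.I)
  have hcc : Continuous c := by fun_prop
  have hcn : ∀ t, ‖c t‖ = ρ := fun t => by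
    simp [c, Complex.norm_exp_ofReal_mul_I, abs_of_pos hρ0]
  have hc0 : ∀ t, c t ≠ 0 := fun t => by rw [← norm_pos_iff, hcn]; exact hρ0
  have hs : ∀ t, 1 - x / c t ∈ Complex.slitPlane := fun t => by
    apply slit_aux
    rw [norm_div, hcn, div_lt_one hρ0]; linarith
  have key := exp_log_const (S := univ) isPreconnected_univ
    (l := fun t : ℝ => L (c t) - Complex.log (1 - x / c t))
    (m := fun t : ℝ => Complex.log ρ + t * Complex.I)
    (Continuous.continuousOn ((hL.comp hcc).sub
      (Continuous.clog (continuous_const.sub (continuous_const.div hcc hc0)) hs)))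
    (by fun_prop) ?_ (mem_univ 0) (mem_univ (2 * Real.pi))
  · have : c 0 = c (2 * Real.pi) := by simp [c]
    simp only [this] at key
    have : (2 * Real.pi * Complex.I : ℂ) = 0 := by
      push_cast at key
      linear_combination key
    simp [Real.pi_ne_zero] at this
  · intro t _
    rw [Complex.exp_sub, Complex.exp_log (Complex.slitPlane_ne_zero (hs t)), eL,
      hR _ (by rw [hcn]; exact hρ1), Complex.exp_add,
      Complex.exp_log (by exact_mod_cast hρ0.ne'), div_eq_iff (Complex.slitPlane_ne_zero (hs t))]
    change c t - x = c t * _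
    field_simp [hc0 t]


theorem closure_comp {X : Type*} [TopologicalSpace X] [LocallyConnectedSpace X] {O : Set X}
    (hO : IsOpen O) {x z : X} (hz : z ∈ closure (connectedComponentIn O x)) (hzO : z ∈ O) :
    z ∈ connectedComponentIn O x := by
  have h1 : IsOpen (connectedComponentIn O z) := hO.connectedComponentIn
  obtain ⟨w, hw1, hw2⟩ := mem_closure_iff.1 hz _ h1 (mem_connectedComponentIn hzO)
  have e1 := connectedComponentIn_eq hw1
  have e2 := connectedComponentIn_eq hw2
  rw [e2, ← e1]
  exact mem_connectedComponentIn hzO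

theorem eil_bdd {K : Set ℂ} (hK : IsCompact K) {x y : ℂ} (hx : x ∉ K) (hy : y ∉ K)
    (h : LogOn (fun z => (z - x) / (z - y)) K)
    (hb : Bornology.IsBounded (connectedComponentIn Kᶜ x))
    (hyC : y ∉ connectedComponentIn Kᶜ x) : False := by
  classical
  obtain ⟨L, hL, eL⟩ := h
  obtain ⟨G, hG⟩ := ContinuousMap.exists_restrict_eq hK.isClosed
    (⟨K.domRestrict L, continuousOn_iff_continuous_domRestrict.1 hL⟩ : C(K, ℂ))
  have hG' : ∀ z ∈ K, G z = L z := fun z hz => congrArg (fun g : C(K, ℂ) => g ⟨z, hz⟩) hG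
  have hO : IsOpen Kᶜ := hK.isClosed.isOpen_compl
  have hCo : IsOpen (connectedComponentIn Kᶜ x) := hO.connectedComponentIn
  have hxC : x ∈ connectedComponentIn Kᶜ x := mem_connectedComponentIn hx
  obtain ⟨R, hR⟩ := hb.subset_closedBall 0
  refine no_ext (H := (connectedComponentIn Kᶜ x).piecewise
    (fun z => Complex.exp (G z) * (z - y)) (fun z => z - x)) (x := x) (R := R + 1) ?_ ?_ ?_
  · refine Continuous.piecewise ?_ (by fun_prop) (by fun_prop)
    intro z hz
    have hzK : z ∈ K := by
      by_contra hzK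
      have := closure_comp hO hz.1 hzK
      rw [hCo.frontier_eq] at hz
      exact hz.2 this
    have hzy : z - y ≠ 0 := sub_ne_zero.2 (fun e => hy (e ▸ hzK))
    rw [hG' z hzK, eL z hzK, div_mul_cancel₀ _ hzy]
  · intro z
    by_cases hz : z ∈ connectedComponentIn Kᶜ x
    · rw [piecewise_eq_of_mem _ _ _ hz]
      exact mul_ne_zero (Complex.exp_ne_zero _) (sub_ne_zero.2 fun e => hyC (e ▸ hz))
    · rw [piecewise_eq_of_notMem _ _ _ hz]
      exact sub_ne_zero.2 fun e => hz (e ▸ hxC)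
  · intro z hz
    rw [piecewise_eq_of_notMem]
    intro hz'
    have := hR hz'
    rw [mem_closedBall_zero_iff] at this
    linarith

theorem preconn_compl_ball {R : ℝ} : IsPreconnected (closedBall (0 : ℂ) R)ᶜ := by
  have : (closedBall (0 : ℂ) R)ᶜ =
      (fun v : ℝ × ℝ => (v.1 : ℂ) * Complex.exp (v.2 * Complex.I)) '' (Ioi R ×ˢ univ) := by
    ext z
    constructor
    · intro hz
      rw [mem_compl_iff, mem_closedBall_zero_iff, not_le] at hz
      exact ⟨(‖z‖, Complex.arg z), ⟨hz, mem_univ _⟩, Complex.norm_mul_exp_arg_mul_I z⟩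
    · rintro ⟨⟨a, b⟩, ⟨ha, -⟩, rfl⟩
      have ha' : R < a := ha
      rw [mem_compl_iff, mem_closedBall_zero_iff, not_le]
      simp only [norm_mul, Complex.norm_exp_ofReal_mul_I, mul_one, Complex.norm_real,
        Real.norm_eq_abs]
      exact ha'.trans_le (le_abs_self a)
  rw [this]
  exact ((isPreconnected_Ioi).prod isPreconnected_univ).image _ (by fun_prop)

theorem eil {K : Set ℂ} (hK : IsCompact K) {x y : ℂ} (hx : x ∉ K) (hy : y ∉ K)
    (h : LogOn (fun z => (z - x) / (z - y)) K) : y ∈ connectedComponentIn Kᶜ x := by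
  by_contra hn
  by_cases hbx : Bornology.IsBounded (connectedComponentIn Kᶜ x)
  · exact eil_bdd hK hx hy h hbx hn
  by_cases hby : Bornology.IsBounded (connectedComponentIn Kᶜ y)
  · refine eil_bdd hK hy hx ?_ hby ?_
    · obtain ⟨L, hL, eL⟩ := h
      refine ⟨fun z => - L z, hL.neg, fun z hz => ?_⟩
      rw [Complex.exp_neg, eL z hz, inv_div]
    · intro hh
      exact hn (connectedComponentIn_eq hh ▸ mem_connectedComponentIn hy)
  obtain ⟨R, hR⟩ := hK.isBounded.subset_closedBall 0
  have hR' : K ⊆ closedBall 0 |R| := hR.trans (closedBall_subset_closedBall (le_abs_self R))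
  have far : ∀ w, ¬ Bornology.IsBounded (connectedComponentIn Kᶜ w) →
      ∃ z ∈ connectedComponentIn Kᶜ w, z ∈ (closedBall (0 : ℂ) |R|)ᶜ := by
    intro w hw
    by_contra hc
    push Not at hc
    refine hw ((isBounded_closedBall (x := (0 : ℂ)) (r := |R|)).subset fun z hz => ?_)
    simpa using hc z hz
  obtain ⟨z, hz, hz'⟩ := far x hbx
  obtain ⟨w, hw, hw'⟩ := far y hby
  have := preconn_compl_ball.subset_connectedComponentIn hz'
    (compl_subset_compl.2 hR') hw'
  rw [← connectedComponentIn_eq hz] at this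
  rw [connectedComponentIn_eq this, ← connectedComponentIn_eq hw] at hn
  exact hn (mem_connectedComponentIn hy)

theorem adh {Q : Set ℂ} (hQ : IsCompact Q) {α : ℝ → ℂ} {a b : ℝ} (ha : a < 0) (hb : 0 < b)
    (hα : ContinuousOn α (Icc a b)) (hinj : InjOn α (Icc a b))
    (hQα : ∀ t ∈ Icc a b, α t ∈ Q → t = a ∨ t = b) {r : ℝ}
    (hS : ∀ z ∈ Q, z ∉ ball (α 0) r) {x : ℂ} (hx : x ∈ ball (α 0) r)
    (hxα : x ∉ α '' Icc a b) :
    α 0 ∈ closure (connectedComponentIn (Q ∪ α '' Icc a b)ᶜ x) := by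
  by_contra hn
  rw [Metric.mem_closure_iff] at hn
  push Not at hn
  obtain ⟨η, hη, hn⟩ := hn
  have hr : 0 < r := pos_of_mem_ball hx
  have h0 : (0 : ℝ) ∈ Icc a b := ⟨ha.le, hb.le⟩
  obtain ⟨δ, hδ, hδ'⟩ := Metric.continuousWithinAt_iff.1 (hα 0 h0) η hη
  obtain ⟨d, hd0, hdδ, hda, hdb⟩ : ∃ d : ℝ, 0 < d ∧ d < δ ∧ a < -d ∧ d < b := by
    refine ⟨min δ (min (-a) b) / 2, ?_, ?_, ?_, ?_⟩
    · have : 0 < min δ (min (-a) b) := lt_min hδ (lt_min (by linarith) hb)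
      linarith
    · linarith [min_le_left δ (min (-a) b)]
    · linarith [min_le_right δ (min (-a) b), min_le_left (-a) b]
    · linarith [min_le_right δ (min (-a) b), min_le_right (-a) b]
  have s1 : Icc a (-d) ⊆ Icc a b := Icc_subset_Icc le_rfl (by linarith)
  have s2 : Icc d b ⊆ Icc a b := Icc_subset_Icc (by linarith) le_rfl
  have c1 : IsCompact (α '' Icc a (-d)) := isCompact_Icc.image_of_continuousOn (hα.mono s1)
  have c2 : IsCompact (α '' Icc d b) := isCompact_Icc.image_of_continuousOn (hα.mono s2)
  have cK : IsCompact (α '' Icc a b) := isCompact_Icc.image_of_continuousOn hα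
  have xQ : x ∉ Q := fun h => hS x h hx
  have x1 : x ∉ α '' Icc a (-d) := fun h => hxα (image_mono s1 h)
  have x2 : x ∉ α '' Icc d b := fun h => hxα (image_mono s2 h)
  have pQ : α 0 ∉ Q := fun h => hS _ h (mem_ball_self hr)
  have p1 : α 0 ∉ α '' Icc a (-d) := by
    rintro ⟨t, ht, e⟩
    have := hinj (s1 ht) h0 e
    rw [this] at ht; linarith [ht.2]
  have p2 : α 0 ∉ α '' Icc d b := by
    rintro ⟨t, ht, e⟩
    have := hinj (s2 ht) h0 e
    rw [this] at ht; linarith [ht.1]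
  have lQ : LogOn (fun z => (z - x) / (z - α 0)) Q := by
    obtain ⟨L, hL, eL⟩ := ball_compl_log hx (mem_ball_self hr)
    have : Q ⊆ (ball (α 0) r)ᶜ := fun z hz => hS z hz
    exact ⟨L, hL.mono this, fun z hz => eL z (this hz)⟩
  have larc : ∀ A : Set ℂ, x ∉ A → α 0 ∉ A →
      ContinuousOn (fun z => (z - x) / (z - α 0)) A ∧ ∀ z ∈ A, (z - x) / (z - α 0) ≠ 0 := by
    intro A h1 h2
    have e1 : ∀ z ∈ A, z - x ≠ 0 := fun z hz => sub_ne_zero.2 fun e => h1 (e ▸ hz)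
    have e2 : ∀ z ∈ A, z - α 0 ≠ 0 := fun z hz => sub_ne_zero.2 fun e => h2 (e ▸ hz)
    exact ⟨ContinuousOn.div (by fun_prop) (by fun_prop) e2,
      fun z hz => div_ne_zero (e1 z hz) (e2 z hz)⟩
  have l1 := arc_log hda.le (hα.mono s1) (hinj.mono s1) (larc _ x1 p1).1 (larc _ x1 p1).2
  have l2 := arc_log hdb.le (hα.mono s2) (hinj.mono s2) (larc _ x2 p2).1 (larc _ x2 p2).2
  have lA := glue_log_point hQ.isClosed c1.isClosed lQ l1 (α a) (by
    rintro _ ⟨h, t, ht, rfl⟩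
    rcases hQα t (s1 ht) h with rfl | rfl
    · rfl
    · linarith [ht.2])
  have lL := glue_log_point (hQ.union c1).isClosed c2.isClosed lA l2 (α b) (by
    rintro _ ⟨h, t, ht, rfl⟩
    rcases h with h | ⟨s, hs, e⟩
    · rcases hQα t (s2 ht) h with rfl | rfl
      · linarith [ht.1]
      · rfl
    · have := hinj (s1 hs) (s2 ht) e
      rw [this] at hs
      linarith [hs.2, ht.1])
  have hpx := eil ((hQ.union c1).union c2) (x := x) (y := α 0)
    (by simp only [mem_union, not_or]; exact ⟨⟨xQ, x1⟩, x2⟩)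
    (by simp only [mem_union, not_or]; exact ⟨⟨pQ, p1⟩, p2⟩) lL
  set K := Q ∪ α '' Icc a b with hKdef
  set L := Q ∪ α '' Icc a (-d) ∪ α '' Icc d b with hLdef
  have hKc : IsCompact K := hQ.union cK
  have hxK : x ∈ Kᶜ := by
    simp only [hKdef, mem_compl_iff, mem_union, not_or]; exact ⟨xQ, hxα⟩
  have hCo : IsOpen (connectedComponentIn Kᶜ x) := hKc.isClosed.isOpen_compl.connectedComponentIn
  have hsub : connectedComponentIn Lᶜ x ⊆ connectedComponentIn Kᶜ x := by
    refine isPreconnected_connectedComponentIn.subset_left_of_subset_union hCo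
      (isClosed_closure (s := connectedComponentIn Kᶜ x)).isOpen_compl ?_ ?_ ?_
    · exact disjoint_compl_right.mono_left subset_closure |>.mono_right le_rfl
    · intro z hz
      by_contra hc
      simp only [mem_union, mem_compl_iff, not_or, not_not] at hc
      have hzK : z ∈ K := by
        by_contra hzK
        exact hc.1 (closure_comp hKc.isClosed.isOpen_compl hc.2 hzK)
      have hzL : z ∉ L := connectedComponentIn_subset _ _ hz
      simp only [hLdef, mem_union, not_or] at hzL
      rcases hzK with h | ⟨t, ht, rfl⟩
      · exact hzL.1.1 h
      · have t1 : -d < t := by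
          by_contra h; exact hzL.1.2 ⟨t, ⟨ht.1, not_lt.1 h⟩, rfl⟩
        have t2 : t < d := by
          by_contra h; exact hzL.2 ⟨t, ⟨not_lt.1 h, ht.2⟩, rfl⟩
        have : dist (α t) (α 0) < η := hδ' ht (by
          rw [Real.dist_eq, sub_zero]; exact (abs_lt.2 ⟨t1, t2⟩).trans hdδ)
        obtain ⟨w, hw, hw'⟩ := mem_closure_iff.1 hc.2 (ball (α 0) η) isOpen_ball this
        have := hn w hw'
        rw [mem_ball, dist_comm] at hw
        linarith
    · refine ⟨x, mem_connectedComponentIn ?_, mem_connectedComponentIn hxK⟩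
      simp only [hLdef, mem_compl_iff, mem_union, not_or]; exact ⟨⟨xQ, x1⟩, x2⟩
  exact connectedComponentIn_subset _ _ (hsub hpx) (Or.inr ⟨0, h0, rfl⟩)


theorem slit_aux' {w : ℂ} (hw : ‖w‖ ≤ 1) (h1 : w ≠ 1) : 1 - w ∈ Complex.slitPlane := by
  by_cases him : w.im = 0
  · left
    have h2 := (Complex.abs_re_le_norm w).trans hw
    have h3 : w.re ≠ 1 := fun e => h1 (Complex.ext e him)
    have h4 : w.re < 1 := lt_of_le_of_ne (abs_le.1 h2).2 h3
    simpa using h4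
  · right
    simpa using him

theorem no_cross {γ β : ℝ → ℂ} (hγ : Continuous γ) (hβ : Continuous β) (nγ : ∀ s, ‖γ s‖ ≤ 1)
    (nβ : ∀ t, ‖β t‖ ≤ 1) {a b : ℝ} {u : ℂ} (hu : ‖u‖ = 1) (hui : u.im ≠ 0)
    (g0 : γ 0 = 1) (g1 : γ 1 = -1) (ba : β a = u⁻¹) (bb : β b = u)
    (hne : ∀ s t, γ s ≠ β t) : False := by
  have hu0 : u ≠ 0 := by rw [← norm_pos_iff, hu]; exact one_pos
  obtain ⟨L, hL, eL⟩ := exists_log_of_continuous (E := ℝ × ℝ) (h := fun v => γ v.1 - β v.2)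
    (by fun_prop) (fun v => sub_ne_zero.2 (hne _ _))
  have gen : ∀ (w : ℝ → ℂ) (k : ℂ) (v : ℝ → ℝ × ℝ), Continuous w → Continuous v → k ≠ 0 →
      (∀ t, ‖w t‖ ≤ 1) → (∀ t, γ (v t).1 - β (v t).2 = k * (1 - w t)) → ∀ c d,
      L (v d) - L (v c) = Complex.log (1 - w d) - Complex.log (1 - w c) := by
    intro w k v hw hv hk hn he c d
    have hs : ∀ t, 1 - w t ∈ Complex.slitPlane := by
      intro t
      refine slit_aux' (hn t) fun e => hne (v t).1 (v t).2 ?_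
      have := he t
      rw [e, sub_self, mul_zero] at this
      exact sub_eq_zero.1 this
    have := exp_log_const (S := univ) isPreconnected_univ
      (l := fun t => L (v t)) (m := fun t => Complex.log k + Complex.log (1 - w t))
      (hL.comp hv).continuousOn
      (Continuous.continuousOn (continuous_const.add (Continuous.clog (by fun_prop) hs)))
      (by
        intro t _
        rw [eL, Complex.exp_add, Complex.exp_log hk,
          Complex.exp_log (Complex.slitPlane_ne_zero (hs t)), he])
      (mem_univ c) (mem_univ d)
    linear_combination -this
  have e1 := gen β 1 (fun t => (0, t)) hβ (by fun_prop) one_ne_zero nβ (by simp [g0]) a b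
  have e2 := gen (fun s => γ s * u⁻¹) (-u) (fun s => (s, b)) (by fun_prop) (by fun_prop)
    (neg_ne_zero.2 hu0) (by simpa [hu] using nγ) (by
      intro t; simp only [bb]; field_simp; ring) 0 1
  have e3 := gen (fun t => - β t) (-1) (fun t => (1, t)) (by fun_prop) (by fun_prop) (by simp)
    (by simpa using nβ) (by intro t; simp only [g1]; ring) a b
  have e4 := gen (fun s => γ s * u) (-u⁻¹) (fun s => (s, a)) (by fun_prop) (by fun_prop)
    (neg_ne_zero.2 (inv_ne_zero hu0)) (by simpa [hu] using nγ) (by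
      intro t; simp only [ba]; field_simp; ring) 0 1
  simp only [g0, g1, ba, bb, one_mul, neg_mul, sub_neg_eq_add] at e1 e2 e3 e4
  have key : Complex.log (1 - u) - Complex.log (1 - u⁻¹) =
      Complex.log (1 + u) - Complex.log (1 + u⁻¹) := by
    linear_combination (e1 + e2 - e3 - e4) / (-2)
  have key' := congrArg Complex.im key
  simp only [Complex.sub_im, Complex.log_im] at key'
  have hinv : (u⁻¹).im = - u.im := by
    rw [Complex.inv_im, Complex.normSq_eq_norm_sq, hu]; simp
  rcases lt_or_gt_of_ne hui with h | h
  · have a1 : 0 ≤ Complex.arg (1 - u) := Complex.arg_nonneg_iff.2 (by simp; linarith)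
    have a2 : Complex.arg (1 - u⁻¹) < 0 := Complex.arg_neg_iff.2 (by simp only [Complex.sub_im, hinv, Complex.one_im]; linarith)
    have a3 : Complex.arg (1 + u) < 0 := Complex.arg_neg_iff.2 (by simp; linarith)
    have a4 : 0 ≤ Complex.arg (1 + u⁻¹) := Complex.arg_nonneg_iff.2 (by simp only [Complex.add_im, hinv, Complex.one_im]; linarith)
    linarith
  · have a1 : Complex.arg (1 - u) < 0 := Complex.arg_neg_iff.2 (by simp; linarith)
    have a2 : 0 ≤ Complex.arg (1 - u⁻¹) := Complex.arg_nonneg_iff.2 (by simp only [Complex.sub_im, hinv, Complex.one_im]; linarith)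
    have a3 : 0 ≤ Complex.arg (1 + u) := Complex.arg_nonneg_iff.2 (by simp; linarith)
    have a4 : Complex.arg (1 + u⁻¹) < 0 := Complex.arg_neg_iff.2 (by simp only [Complex.add_im, hinv, Complex.one_im]; linarith)
    linarith

theorem chord {α : ℝ → ℂ} {a b : ℝ} (hab : a < b) (hα : ContinuousOn α (Icc a b))
    (hinj : InjOn α (Icc a b)) {p : ℂ} {r : ℝ} (hr : 0 < r) (hda : dist (α a) p = r)
    (hdb : dist (α b) p = r) (hinside : ∀ t ∈ Ioo a b, dist (α t) p < r) :
    ∃ x ∈ ball p r, ∃ y ∈ ball p r, x ∉ α '' Icc a b ∧ y ∉ α '' Icc a b ∧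
      y ∉ connectedComponentIn (sphere p r ∪ α '' Icc a b)ᶜ x := by
  by_contra hcon
  push Not at hcon
  have cK : IsCompact (α '' Icc a b) := isCompact_Icc.image_of_continuousOn hα
  have hrC : (r : ℂ) ≠ 0 := by exact_mod_cast hr.ne'
  obtain ⟨u, hu⟩ := IsAlgClosed.exists_eq_mul_self (((α a - p) / r) * ((α b - p) / r))
  have na : ‖(α a - p) / r‖ = 1 := by
    rw [norm_div, ← dist_eq_norm, hda]; simp [abs_of_pos hr, hr.ne']
  have nb : ‖(α b - p) / r‖ = 1 := by
    rw [norm_div, ← dist_eq_norm, hdb]; simp [abs_of_pos hr, hr.ne']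
  have nu : ‖u‖ = 1 := by
    have := congrArg norm hu
    rw [norm_mul, norm_mul, na, nb] at this
    nlinarith [norm_nonneg u]
  have hu0 : u ≠ 0 := by rw [← norm_pos_iff, nu]; exact one_pos
  have hne : α a ≠ α b := fun e =>
    hab.ne (hinj (left_mem_Icc.2 hab.le) (right_mem_Icc.2 hab.le) e)
  set A := (α a - p) / (r * u) with hA
  set B := (α b - p) / (r * u) with hB
  have hAB : A * B = 1 := by
    have : A * B = (((α a - p) / r) * ((α b - p) / r)) / (u * u) := by
      rw [hA, hB]; field_simp
    rw [this, hu, div_self (mul_ne_zero hu0 hu0)]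
  have hABne : A ≠ B := by
    intro e
    rw [hA, hB, div_left_inj' (mul_ne_zero hrC hu0)] at e
    exact hne (sub_left_injective e)
  have nB : ‖B‖ = 1 := by
    have : B = ((α b - p) / r) / u := by rw [hB]; field_simp
    rw [this, norm_div, nb, nu, div_one]
  have hB0 : B ≠ 0 := by rw [← norm_pos_iff, nB]; exact one_pos
  have hAinv : A = B⁻¹ := eq_inv_of_mul_eq_one_left hAB
  have hBim : B.im ≠ 0 := by
    intro h
    apply hABne
    rw [hAinv]
    apply Complex.ext
    · have h1 : Complex.normSq B = 1 := by rw [Complex.normSq_eq_norm_sq, nB]; norm_num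
      simp [Complex.inv_re, h1]
    · simp [Complex.inv_im, h]
  -- points of the circle off the arc are joined to interior points
  have bdry : ∀ e : ℂ, e.im = 0 → ‖e‖ = 1 → ∃ z ∈ ball p r, z ∉ α '' Icc a b ∧
      JoinedIn (closedBall p r \ α '' Icc a b) (p + r * u * e) z := by
    intro e he he1
    have hc : dist (p + r * u * e) p = r := by
      rw [dist_eq_norm]; simp [nu, he1, abs_of_pos hr]
    have hcα : p + r * u * e ∉ α '' Icc a b := by
      rintro ⟨t, ht, e'⟩
      rcases eq_or_lt_of_le ht.1 with rfl | h1
      · have : A = e := by rw [hA, e']; field_simp; ring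
        apply hBim
        have h2 : B = e⁻¹ := by rw [← this, hAinv, inv_inv]
        rw [h2, Complex.inv_im, he]; simp
      rcases eq_or_lt_of_le ht.2 with rfl | h2
      · have : B = e := by rw [hB, e']; field_simp; ring
        exact hBim (this ▸ he)
      · have := hinside t ⟨h1, h2⟩
        rw [e', hc] at this
        exact lt_irrefl _ this
    obtain ⟨ρ, hρ, hρ'⟩ := Metric.isOpen_iff.1 cK.isClosed.isOpen_compl _ hcα
    have hcl : p + r * u * e ∈ closure (ball p r) := by
      rw [closure_ball p hr.ne']; exact hc.le
    obtain ⟨z, hz1, hz2⟩ := mem_closure_iff.1 hcl _ isOpen_ball (mem_ball_self hρ)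
    refine ⟨z, hz2, hρ' hz1, ?_⟩
    have cv : Convex ℝ (ball (p + r * u * e) ρ ∩ closedBall p r) :=
      (convex_ball _ _).inter (convex_closedBall _ _)
    have := (cv.isPathConnected ⟨z, hz1, ball_subset_closedBall hz2⟩).joinedIn
      (p + r * u * e) ⟨mem_ball_self hρ, hc.le⟩ z ⟨hz1, ball_subset_closedBall hz2⟩
    exact this.mono fun w hw => ⟨hw.2, hρ' hw.1⟩
  obtain ⟨z, hz, hzα, jz⟩ := bdry 1 (by simp) (by simp)
  obtain ⟨w, hw, hwα, jw⟩ := bdry (-1) (by simp) (by simp)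
  have hwz := hcon z hz w hw hzα hwα
  have hKc : IsCompact (sphere p r ∪ α '' Icc a b) := (isCompact_sphere p r).union cK
  set D := connectedComponentIn (sphere p r ∪ α '' Icc a b)ᶜ z with hD
  have hDo : IsOpen D := hKc.isClosed.isOpen_compl.connectedComponentIn
  have hDsub : D ⊆ (sphere p r ∪ α '' Icc a b)ᶜ := connectedComponentIn_subset _ _
  have hzD : z ∈ D := mem_connectedComponentIn (by
    simp only [mem_compl_iff, mem_union, not_or]
    refine ⟨fun h => ?_, hzα⟩
    rw [mem_sphere] at h
    rw [mem_ball] at hz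
    linarith)
  have hDball : D ⊆ ball p r := by
    refine isPreconnected_connectedComponentIn.subset_left_of_subset_union isOpen_ball
      (isClosed_closedBall (x := p) (ε := r)).isOpen_compl ?_ ?_ ⟨z, hzD, hz⟩
    · exact disjoint_compl_right.mono_left ball_subset_closedBall
    · intro v hv
      have h1 := hDsub hv
      simp only [mem_compl_iff, mem_union, not_or, mem_sphere] at h1
      rcases lt_trichotomy (dist v p) r with h | h | h
      · exact Or.inl h
      · exact absurd h h1.1
      · right; simpa using h
  have hDpc : IsPathConnected D :=
    (hDo.isConnected_iff_isPathConnected).1 ⟨⟨z, hzD⟩, isPreconnected_connectedComponentIn⟩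
  have jzw : JoinedIn (closedBall p r \ α '' Icc a b) z w :=
    (hDpc.joinedIn z hzD w hwz).mono fun v hv =>
      ⟨ball_subset_closedBall (hDball hv), fun h => hDsub hv (Or.inr h)⟩
  obtain ⟨γ, hγ⟩ := (jz.trans jzw).trans jw.symm
  have hext : ∀ s, γ.extend s ∈ closedBall p r \ α '' Icc a b := fun s => by
    exact hγ (projIcc 0 1 zero_le_one s)
  have normal : ∀ v, v ∈ closedBall p r → ‖(v - p) / (r * u)‖ ≤ 1 := by
    intro v hv
    rw [norm_div, norm_mul, nu, mul_one, Complex.norm_real, Real.norm_eq_abs, abs_of_pos hr,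
      div_le_one hr, ← dist_eq_norm]
    exact hv
  have hball : ∀ t ∈ Icc a b, α t ∈ closedBall p r := by
    intro t ht
    rcases eq_or_lt_of_le ht.1 with rfl | h1
    · exact hda.le
    rcases eq_or_lt_of_le ht.2 with rfl | h2
    · exact hdb.le
    exact (hinside t ⟨h1, h2⟩).le
  have hα' : Continuous fun t : ℝ => α (projIcc a b hab.le t) :=
    hα.comp_continuous (by fun_prop) (fun t => (projIcc a b hab.le t).2)
  refine no_cross (γ := fun s => (γ.extend s - p) / (r * u))
    (β := fun t => (α (projIcc a b hab.le t) - p) / (r * u)) (a := a) (b := b) (u := B)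
    ?_ ?_ (fun s => normal _ (hext s).1) (fun t => normal _ (hball _ (projIcc a b hab.le t).2))
    nB hBim ?_ ?_ ?_ ?_ ?_
  · exact (γ.continuous_extend.sub continuous_const).div_const _
  · exact (hα'.sub continuous_const).div_const _
  · simp only [Path.extend_zero]; field_simp; ring
  · simp only [Path.extend_one]; field_simp; ring
  · simp only [projIcc_left]; exact hAinv
  · simp only [projIcc_right]; rfl
  · intro s t e
    rw [div_left_inj' (mul_ne_zero hrC hu0)] at e
    exact (hext s).2 ⟨_, (projIcc a b hab.le t).2, (sub_left_injective e).symm⟩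


theorem first_exit {h : ℝ → ℝ} {e r : ℝ} (he : 0 < e) (hc : ContinuousOn h (Icc 0 e))
    (h0 : h 0 < r) (h1 : r ≤ h e) : ∃ t ∈ Ioc 0 e, h t = r ∧ ∀ s ∈ Ico 0 t, h s < r := by
  have hcl : IsClosed (Icc 0 e ∩ h ⁻¹' Ici r) := hc.preimage_isClosed_of_isClosed isClosed_Icc isClosed_Ici
  have hcomp : IsCompact (Icc 0 e ∩ h ⁻¹' Ici r) :=
    isCompact_Icc.of_isClosed_subset hcl inter_subset_left
  obtain ⟨t, ⟨ht, htr⟩, hmin⟩ := hcomp.exists_isLeast ⟨e, ⟨he.le, le_rfl⟩, h1⟩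
  have htr' : r ≤ h t := htr
  have ht0 : 0 < t := lt_of_le_of_ne ht.1 (by rintro rfl; linarith)
  refine ⟨t, ⟨ht0, ht.2⟩, ?_, ?_⟩
  · obtain ⟨s, hs, hsr⟩ := intermediate_value_Icc ht.1
      (hc.mono (Icc_subset_Icc le_rfl ht.2)) ⟨h0.le, htr'⟩
    have : t ≤ s := hmin ⟨⟨hs.1, hs.2.trans ht.2⟩, hsr.ge⟩
    rw [le_antisymm this hs.2, hsr]
  · intro s hs
    by_contra hn
    have : t ≤ s := hmin ⟨⟨hs.1, hs.2.le.trans ht.2⟩, not_lt.1 hn⟩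
    linarith [hs.2]

/-- winding number zero of the loop `g` on `[-1,1]` about `x` -/
def WindZero (g : ℝ → ℂ) (x : ℂ) : Prop :=
  ∃ l : ℝ → ℂ, ContinuousOn l (Icc (-1) 1) ∧ (∀ t ∈ Icc (-1 : ℝ) 1, Complex.exp (l t) = g t - x) ∧
    l (-1) = l 1

theorem exists_ball_disjoint {K : Set ℂ} (hK : IsCompact K) {p : ℂ} (hp : p ∉ K) :
    ∃ r > 0, ∀ z ∈ K, r < dist z p := by
  obtain ⟨r, hr, h⟩ := Metric.isOpen_iff.1 hK.isClosed.isOpen_compl p hp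
  refine ⟨r / 2, by linarith, fun z hz => ?_⟩
  by_contra hn
  exact h (show dist z p < r by linarith) hz

theorem planar {g : ℝ → ℂ} (hg : ContinuousOn g (Icc (-1) 1)) (hloop : g (-1) = g 1) {ε : ℝ}
    (h0 : 0 < ε) (h1 : ε < 1)
    (hinj : ∀ t ∈ Icc (-ε) ε, ∀ s ∈ Icc (-1 : ℝ) 1, g s = g t → s = t) :
    ∃ x ∉ g '' Icc (-1) 1, g 0 ∈ closure (connectedComponentIn (g '' Icc (-1) 1)ᶜ x) ∧
      ¬ WindZero g x := by
  have sε : Icc (-ε) ε ⊆ Icc (-1) 1 := Icc_subset_Icc (by linarith) h1.le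
  have z0 : (0 : ℝ) ∈ Icc (-ε) ε := ⟨by linarith, h0.le⟩
  have cimg : ∀ a b, -1 ≤ a → b ≤ 1 → IsCompact (g '' Icc a b) := fun a b ha hb =>
    isCompact_Icc.image_of_continuousOn (hg.mono (Icc_subset_Icc ha hb))
  -- first ball
  obtain ⟨r, hr, hrB⟩ := exists_ball_disjoint (K := g '' Icc (-1) (-ε) ∪ g '' Icc ε 1) (p := g 0)
    ((cimg _ _ le_rfl (by linarith)).union (cimg _ _ (by linarith) le_rfl)) (by
      rintro (⟨t, ht, e⟩ | ⟨t, ht, e⟩)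
      · have := hinj 0 z0 t ⟨ht.1, by linarith [ht.2]⟩ e
        linarith [ht.2]
      · have := hinj 0 z0 t ⟨by linarith [ht.1], ht.2⟩ e
        linarith [ht.1])
  have hdist : ContinuousOn (fun t => dist (g t) (g 0)) (Icc (-1) 1) := 
    continuous_dist.comp_continuousOn (hg.prodMk continuousOn_const)
  obtain ⟨t2, ht2, e2, i2⟩ := first_exit (h := fun t => dist (g t) (g 0)) (r := r) h0
    (hdist.mono (Icc_subset_Icc (by linarith) h1.le)) (by simpa using hr)
    (hrB _ (Or.inr ⟨ε, ⟨le_rfl, h1.le⟩, rfl⟩)).le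
  obtain ⟨t1, ht1, e1, i1⟩ := first_exit (h := fun t => dist (g (-t)) (g 0)) (r := r) h0
    (hdist.comp (s := Icc 0 ε) (f := fun t : ℝ => -t) (by fun_prop)
      (fun t ht => ⟨by linarith [ht.2], by linarith [ht.1]⟩)) (by simpa using hr)
    (hrB _ (Or.inl ⟨-ε, ⟨by linarith, le_rfl⟩, rfl⟩)).le
  have sα : Icc (-t1) t2 ⊆ Icc (-ε) ε := Icc_subset_Icc (by linarith [ht1.2]) ht2.2
  have sα1 : Icc (-t1) t2 ⊆ Icc (-1) 1 := sα.trans sε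
  have hα := hg.mono sα1
  have iα : InjOn g (Icc (-t1) t2) := fun s hs t ht e => hinj t (sα ht) s (sα1 hs) e
  have hin : ∀ t ∈ Ioo (-t1) t2, dist (g t) (g 0) < r := by
    intro t ht
    rcases le_total 0 t with h | h
    · exact i2 t ⟨h, ht.2⟩
    · have := i1 (-t) ⟨by linarith, by linarith [ht.1]⟩
      rwa [neg_neg] at this
  have t12 : -t1 < t2 := by linarith [ht1.1, ht2.1]
  obtain ⟨x₀, hx₀, y₀, hy₀, hx₀α, hy₀α, hxy⟩ := chord t12 hα iα hr e1 e2 hin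
  -- second ball
  obtain ⟨ρ, hρ, hρB⟩ := exists_ball_disjoint (K := g '' Icc (-1) (-t1) ∪ g '' Icc t2 1) (p := g 0)
    ((cimg _ _ le_rfl (by linarith [ht1.1])).union (cimg _ _ (by linarith [ht2.1]) le_rfl)) (by
      rintro (⟨t, ht, e⟩ | ⟨t, ht, e⟩)
      · have := hinj 0 z0 t ⟨ht.1, by linarith [ht.2, ht1.1]⟩ e
        linarith [ht.2, ht1.1]
      · have := hinj 0 z0 t ⟨by linarith [ht.1, ht2.1], ht.2⟩ e
        linarith [ht.1, ht2.1])
  have hρr : ρ < r := by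
    have := hρB (g t2) (Or.inr ⟨t2, ⟨le_rfl, by linarith [ht2.2]⟩, rfl⟩)
    linarith
  set K1 := sphere (g 0) r ∪ g '' Icc (-t1) t2 with hK1
  have cα : IsCompact (g '' Icc (-t1) t2) := isCompact_Icc.image_of_continuousOn hα
  have near : ∀ x ∈ ball (g 0) r, x ∉ g '' Icc (-t1) t2 →
      ∃ y ∈ connectedComponentIn K1ᶜ x, y ∈ ball (g 0) ρ := by
    intro x hx hxα
    have := adh (isCompact_sphere (g 0) r) (by linarith [ht1.1]) ht2.1 hα iα (r := r) (x := x) (by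
      intro t ht h
      by_contra hc
      push Not at hc
      have := hin t ⟨lt_of_le_of_ne ht.1 (Ne.symm hc.1), lt_of_le_of_ne ht.2 hc.2⟩
      rw [mem_sphere] at h
      linarith) (by
      intro z hz hz'
      rw [mem_sphere] at hz
      rw [mem_ball] at hz'
      linarith) hx hxα
    obtain ⟨y, hy1, hy2⟩ := mem_closure_iff.1 this (ball (g 0) ρ) isOpen_ball (mem_ball_self hρ)
    exact ⟨y, hy2, hy1⟩
  obtain ⟨x, hxC, hxρ⟩ := near x₀ hx₀ hx₀α
  obtain ⟨y, hyC, hyρ⟩ := near y₀ hy₀ hy₀α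
  have hy₀K : y₀ ∈ K1ᶜ := by
    simp only [hK1, mem_compl_iff, mem_union, not_or]
    exact ⟨fun h => by rw [mem_sphere] at h; rw [mem_ball] at hy₀; linarith, hy₀α⟩
  have hxy' : y ∉ connectedComponentIn K1ᶜ x := by
    intro h
    apply hxy
    rw [connectedComponentIn_eq hxC, connectedComponentIn_eq h, ← connectedComponentIn_eq hyC]
    exact mem_connectedComponentIn hy₀K
  have good : ∀ z ∈ ball (g 0) ρ, z ∈ K1ᶜ → z ∉ g '' Icc (-1) 1 ∧
      g 0 ∈ closure (connectedComponentIn (g '' Icc (-1) 1)ᶜ z) := by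
    intro z hz hzK
    have hzα : z ∉ g '' Icc (-t1) t2 := fun h => hzK (Or.inr h)
    rw [mem_ball] at hz
    have hz1 : z ∉ g '' Icc (-1) 1 := by
      rintro ⟨t, ht, rfl⟩
      rcases le_total t (-t1) with h | h
      · have := hρB (g t) (Or.inl ⟨t, ⟨ht.1, h⟩, rfl⟩)
        linarith
      rcases le_total t2 t with h' | h'
      · have := hρB (g t) (Or.inr ⟨t, ⟨h', ht.2⟩, rfl⟩)
        linarith
      exact hzα ⟨t, ⟨h, h'⟩, rfl⟩
    refine ⟨hz1, ?_⟩
    have hK : g '' Icc (-1) 1 = (g '' Icc (-1) (-ε) ∪ g '' Icc ε 1) ∪ g '' Icc (-ε) ε := by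
      rw [← image_union, ← image_union]
      congr 1
      ext t
      simp only [mem_union, mem_Icc]
      constructor
      · intro ht
        rcases le_total t (-ε) with h | h
        · exact Or.inl (Or.inl ⟨ht.1, h⟩)
        rcases le_total ε t with h' | h'
        · exact Or.inl (Or.inr ⟨h', ht.2⟩)
        · exact Or.inr ⟨h, h'⟩
      · rintro ((h | h) | h) <;> constructor <;> linarith [h.1, h.2]
    rw [hK]
    refine adh (r := r) ((cimg _ _ le_rfl (by linarith)).union (cimg _ _ (by linarith) le_rfl))
      (by linarith) h0 (hg.mono sε) (fun s hs t ht e => hinj t ht s (sε hs) e) ?_ ?_ ?_ ?_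
    · rintro t ht (⟨s, hs, e⟩ | ⟨s, hs, e⟩)
      · have := hinj t ht s ⟨hs.1, by linarith [hs.2]⟩ e
        left; linarith [hs.2, ht.1]
      · have := hinj t ht s ⟨by linarith [hs.1], hs.2⟩ e
        right; linarith [hs.1, ht.2]
    · intro w hw hw'
      have := hrB w hw
      rw [mem_ball] at hw'
      linarith
    · rw [mem_ball]; linarith
    · exact fun h => hz1 (image_mono sε h)
  have hxK : x ∈ K1ᶜ := connectedComponentIn_subset _ _ hxC
  have hyK : y ∈ K1ᶜ := connectedComponentIn_subset _ _ hyC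
  by_contra hcon
  push Not at hcon
  obtain ⟨lx, clx, elx, blx⟩ := hcon x (good x hxρ hxK).1 (good x hxρ hxK).2
  obtain ⟨ly, cly, ely, bly⟩ := hcon y (good y hyρ hyK).1 (good y hyρ hyK).2
  obtain ⟨M, cM, eM⟩ := ball_compl_log hxρ hyρ
  have el : ∀ t ∈ Icc (-1 : ℝ) 1, Complex.exp (lx t - ly t) = (g t - x) / (g t - y) := by
    intro t ht
    rw [Complex.exp_sub, elx t ht, ely t ht]
  have cl : ContinuousOn (fun t => lx t - ly t) (Icc (-1) 1) := clx.sub cly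
  have out : ∀ a b, -1 ≤ a → b ≤ 1 → (∀ t ∈ Icc a b, ρ < dist (g t) (g 0)) →
      ∀ s ∈ Icc a b, ∀ t ∈ Icc a b,
      (lx s - ly s) - M (g s) = (lx t - ly t) - M (g t) := by
    intro a b ha hb hab s hs t ht
    have hmt : MapsTo g (Icc a b) (ball (g 0) ρ)ᶜ := fun t ht h => by
      have := hab t ht
      rw [mem_ball] at h
      linarith
    refine exp_log_const isPreconnected_Icc (cl.mono (Icc_subset_Icc ha hb))
      (cM.comp (hg.mono (Icc_subset_Icc ha hb)) hmt) ?_ hs ht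
    intro t ht
    rw [el t (Icc_subset_Icc ha hb ht), Function.comp, eM _ (hmt ht)]
  have o1 := out (-1) (-t1) le_rfl (by linarith [ht1.1])
    (fun t ht => hρB _ (Or.inl ⟨t, ht, rfl⟩)) (-1) ⟨le_rfl, by linarith [ht1.2]⟩
    (-t1) ⟨by linarith [ht1.2], le_rfl⟩
  have o2 := out t2 1 (by linarith [ht2.1]) le_rfl
    (fun t ht => hρB _ (Or.inr ⟨t, ht, rfl⟩)) 1 ⟨by linarith [ht2.2], le_rfl⟩
    t2 ⟨le_rfl, by linarith [ht2.2]⟩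
  rw [blx, bly, hloop, o2] at o1
  obtain ⟨m, cm, em⟩ := arc_transport hα iα (cl.mono sα1)
  apply hxy'
  refine eil ((isCompact_sphere (g 0) r).union cα) hxK hyK ?_
  have ssub : sphere (g 0) r ⊆ (ball (g 0) ρ)ᶜ := fun z hz h => by
    rw [mem_sphere] at hz
    rw [mem_ball] at h
    linarith
  have t2m : t2 ∈ Icc (-t1) t2 := ⟨t12.le, le_rfl⟩
  refine glue_log (l := fun z => M z + ((lx t2 - ly t2) - M (g t2))) (m := m)
    isClosed_sphere cα.isClosed ((cM.mono ssub).add continuousOn_const) cm ?_ ?_ ?_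
  · intro z hz
    have hh : Complex.exp (lx t2 - ly t2) = Complex.exp (M (g t2)) := by
      rw [el t2 (sα1 t2m), eM _ (ssub e2)]
    rw [Complex.exp_add, Complex.exp_sub (lx t2 - ly t2), hh, div_self (Complex.exp_ne_zero _),
      mul_one, eM z (ssub hz)]
  · rintro _ ⟨t, ht, rfl⟩
    rw [em t ht, el t (sα1 ht)]
  · rintro _ hz ⟨t, ht, rfl⟩
    rw [em t ht]
    by_cases ha : t = -t1
    · subst ha
      linear_combination o1
    by_cases hb : t = t2
    · subst hb
      ring
    have := hin t ⟨lt_of_le_of_ne ht.1 (Ne.symm ha), lt_of_le_of_ne ht.2 hb⟩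
    rw [mem_sphere] at hz
    linarith


theorem wz_move {g : ℝ → ℂ} (hg : ContinuousOn g (Icc (-1) 1)) (hloop : g (-1) = g 1) {z z' : ℂ}
    (hd : ∀ t ∈ Icc (-1 : ℝ) 1, dist z' z < dist (g t) z) (h : WindZero g z) : WindZero g z' := by
  obtain ⟨l, cl, el, bl⟩ := h
  have pos : ∀ t ∈ Icc (-1 : ℝ) 1, 0 < ‖g t - z‖ := fun t ht => by
    have := hd t ht
    rw [dist_eq_norm, dist_eq_norm] at this
    linarith [norm_nonneg (z' - z)]
  have hs : ∀ t ∈ Icc (-1 : ℝ) 1, 1 - (z' - z) / (g t - z) ∈ Complex.slitPlane := by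
    intro t ht
    apply slit_aux
    have := hd t ht
    rw [dist_eq_norm, dist_eq_norm] at this
    rw [norm_div, div_lt_one (pos t ht)]
    exact this
  refine ⟨fun t => l t + Complex.log (1 - (z' - z) / (g t - z)), ?_, ?_, ?_⟩
  · refine cl.add (ContinuousOn.clog ?_ hs)
    exact continuousOn_const.sub (continuousOn_const.div (hg.sub continuousOn_const)
      fun t ht => norm_pos_iff.1 (pos t ht))
  · intro t ht
    have := norm_pos_iff.1 (pos t ht)
    rw [Complex.exp_add, el t ht, Complex.exp_log (Complex.slitPlane_ne_zero (hs t ht))]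
    field_simp
    ring
  · simp only [bl, hloop]

theorem wz_local {g : ℝ → ℂ} (hg : ContinuousOn g (Icc (-1) 1)) (hloop : g (-1) = g 1) {z : ℂ}
    (hz : z ∉ g '' Icc (-1) 1) :
    ∃ δ > 0, ∀ z', dist z' z < δ → (WindZero g z' ↔ WindZero g z) := by
  obtain ⟨d, hd, hd'⟩ := exists_ball_disjoint (isCompact_Icc.image_of_continuousOn hg) hz
  refine ⟨d / 2, by linarith, fun z' hz' => ⟨?_, ?_⟩⟩
  · refine wz_move hg hloop fun t ht => ?_
    have := hd' (g t) ⟨t, ht, rfl⟩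
    have := dist_triangle (g t) z' z
    rw [dist_comm z z']
    linarith
  · refine wz_move hg hloop fun t ht => ?_
    have := hd' (g t) ⟨t, ht, rfl⟩
    linarith

theorem wz_far {g : ℝ → ℂ} (hg : ContinuousOn g (Icc (-1) 1)) (hloop : g (-1) = g 1) :
    ∃ R : ℝ, ∀ z, R < ‖z‖ → WindZero g z := by
  obtain ⟨R, hR⟩ := (isCompact_Icc.image_of_continuousOn hg).isBounded.subset_closedBall 0
  refine ⟨|R|, fun z hz => ?_⟩
  have pos : 0 < ‖z‖ := (abs_nonneg R).trans_lt hz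
  have hz0 : z ≠ 0 := norm_pos_iff.1 pos
  have hs : ∀ t ∈ Icc (-1 : ℝ) 1, 1 - g t / z ∈ Complex.slitPlane := by
    intro t ht
    apply slit_aux
    have : ‖g t‖ ≤ R := by simpa using hR ⟨t, ht, rfl⟩
    rw [norm_div, div_lt_one pos]
    linarith [le_abs_self R]
  refine ⟨fun t => Complex.log (-z) + Complex.log (1 - g t / z), ?_, ?_, ?_⟩
  · exact continuousOn_const.add (ContinuousOn.clog (continuousOn_const.sub (hg.div_const _)) hs)
  · intro t ht
    rw [Complex.exp_add, Complex.exp_log (neg_ne_zero.2 hz0),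
      Complex.exp_log (Complex.slitPlane_ne_zero (hs t ht))]
    field_simp
    ring
  · simp only [hloop]

theorem wz_ext {g : ℝ → ℂ} {h : ℂ → ℂ} (hh : ContinuousOn h (closedBall 0 1)) {q : ℂ}
    (hq : ‖q‖ = 1) (hgh : ∀ t : ℝ, g t = h (q * Complex.exp ((Real.pi * t : ℝ) * Complex.I)))
    {z : ℂ} (hz : ∀ w ∈ closedBall (0 : ℂ) 1, h w ≠ z) : WindZero g z := by
  have hpos : ∀ w : ℂ, 0 < max 1 ‖w‖ := fun w => lt_max_of_lt_left one_pos
  let ρ : ℂ → ℂ := fun w => w / (max 1 ‖w‖ : ℝ)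
  have hρ : Continuous ρ := by
    refine continuous_id.div (by fun_prop) fun w => ?_
    exact_mod_cast (hpos w).ne'
  have hρm : ∀ w, ρ w ∈ closedBall (0 : ℂ) 1 := fun w => by
    rw [mem_closedBall_zero_iff, norm_div, Complex.norm_real, Real.norm_eq_abs,
      abs_of_pos (hpos w), div_le_one (hpos w)]
    exact le_max_right _ _
  obtain ⟨L, hL, eL⟩ := exists_log_of_continuous (h := fun w => h (ρ w) - z)
    ((hh.comp_continuous hρ hρm).sub continuous_const) (fun w => sub_ne_zero.2 (hz _ (hρm w)))
  refine ⟨fun t => L (q * Complex.exp ((Real.pi * t : ℝ) * Complex.I)), ?_, ?_, ?_⟩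
  · exact Continuous.continuousOn (hL.comp (by fun_prop))
  · intro t _
    rw [eL, hgh]
    have : ρ (q * Complex.exp ((Real.pi * t : ℝ) * Complex.I)) =
        q * Complex.exp ((Real.pi * t : ℝ) * Complex.I) := by
      have hn : ‖q * Complex.exp ((Real.pi * t : ℝ) * Complex.I)‖ = 1 := by
        rw [norm_mul, Complex.norm_exp_ofReal_mul_I, hq, one_mul]
      simp only [ρ, hn]
      simp
    rw [this]
  · simp only
    congr 2
    push_cast
    rw [mul_one, mul_neg_one, Complex.exp_pi_mul_I, neg_mul, Complex.exp_neg, Complex.exp_pi_mul_I]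
    norm_num

theorem stereo_pair {v : EuclideanSpace ℝ (Fin 3)} (hv : v ∈ sphereS) :
    ∃ (σ : ℂ → EuclideanSpace ℝ (Fin 3)) (τ : EuclideanSpace ℝ (Fin 3) → ℂ),
      Continuous σ ∧ ContinuousOn τ (sphereS \ {v}) ∧ (∀ z, σ z ∈ sphereS \ {v}) ∧
      (∀ z, τ (σ z) = z) ∧ ∀ y ∈ sphereS \ {v}, σ (τ y) = y := by
  classical
  have : Fact (Module.finrank ℝ (EuclideanSpace ℝ (Fin 3)) = 2 + 1) := ⟨by simp⟩
  let P := stereographic' 2 (⟨v, hv⟩ : sphere (0 : EuclideanSpace ℝ (Fin 3)) 1)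
  have hPs : P.source = {⟨v, hv⟩}ᶜ := stereographic'_source _
  have hPt : P.target = univ := stereographic'_target _
  let e : ℂ ≃ₗᵢ[ℝ] EuclideanSpace ℝ (Fin 2) := Complex.orthonormalBasisOneI.repr
  let τ : EuclideanSpace ℝ (Fin 3) → ℂ := fun y =>
    if h : y ∈ sphere (0 : EuclideanSpace ℝ (Fin 3)) 1 then e.symm (P ⟨y, h⟩) else 0
  have hτ : ∀ y : sphere (0 : EuclideanSpace ℝ (Fin 3)) 1, τ y = e.symm (P y) := fun y => by
    simp only [τ]
    rw [dif_pos y.2]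
  refine ⟨fun z => (P.symm (e z) : EuclideanSpace ℝ (Fin 3)), τ, ?_, ?_, ?_, ?_, ?_⟩
  · have : Continuous P.symm := by
      rw [← continuousOn_univ, ← hPt]
      exact P.continuousOn_symm
    exact continuous_subtype_val.comp (this.comp e.continuous)
  · rw [continuousOn_iff_continuous_domRestrict]
    have : (sphereS \ {v}).domRestrict τ = fun y : ↥(sphereS \ {v}) =>
        e.symm (P ⟨y.1, y.2.1⟩) := by
      ext1 y
      exact hτ ⟨y.1, y.2.1⟩
    rw [this]
    refine e.symm.continuous.comp (P.continuousOn.comp_continuous (by fun_prop) ?_)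
    intro y
    rw [hPs]
    intro h
    exact y.2.2 (congrArg Subtype.val h)
  · intro z
    refine ⟨(P.symm (e z)).2, fun h => ?_⟩
    have : P.symm (e z) ∈ P.source := P.map_target (by rw [hPt]; trivial)
    rw [hPs] at this
    exact this (Subtype.ext h)
  · intro z
    rw [hτ, P.right_inv (by rw [hPt]; trivial)]
    simp
  · intro y hy
    have : (⟨y, hy.1⟩ : sphere (0 : EuclideanSpace ℝ (Fin 3)) 1) ∈ P.source := by
      rw [hPs]
      intro h
      exact hy.2 (congrArg Subtype.val h)
    have h2 := hτ ⟨y, hy.1⟩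
    simp only at h2
    simp only [h2, LinearIsometryEquiv.apply_symm_apply]
    rw [P.left_inv this]

theorem exists_missing {k : ℝ → EuclideanSpace ℝ (Fin 3)} (hk : ContinuousOn k (Icc (-1) 1))
    (hkS : ∀ t ∈ Icc (-1 : ℝ) 1, k t ∈ sphereS) {ε : ℝ}
    (h0 : 0 < ε) (h1 : ε < 1)
    (hinj : ∀ t ∈ Icc (-ε) ε, ∀ s ∈ Icc (-1 : ℝ) 1, k s = k t → s = t) :
    ∃ v ∈ sphereS, v ∉ k '' Icc (-1) 1 := by
  by_contra hcon
  push Not at hcon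
  have m : ∀ t, -ε ≤ t → t ≤ ε → t ∈ Icc (-ε) ε ∧ t ∈ Icc (-1 : ℝ) 1 := fun t a b =>
    ⟨⟨a, b⟩, ⟨by linarith, by linarith⟩⟩
  have m0 := m 0 (by linarith) (by linarith)
  have mε := m ε (by linarith) le_rfl
  have mh := m (ε / 2) (by linarith) (by linarith)
  have mn := m (-ε / 2) (by linarith) (by linarith)
  obtain ⟨σ, τ, hσ, hτ, hσm, hτσ, hστ⟩ := stereo_pair (hkS 0 m0.2)
  have hkε : k ε ∈ sphereS \ {k 0} := ⟨hkS ε mε.2, fun h => by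
    have := hinj 0 m0.1 ε mε.2 h
    linarith⟩
  have hT : IsPreconnected (sphereS \ {k 0, k ε}) := by
    have : sphereS \ {k 0, k ε} = σ '' {τ (k ε)}ᶜ := by
      ext y
      constructor
      · rintro ⟨hy, hy'⟩
        simp only [mem_insert_iff, mem_singleton_iff, not_or] at hy'
        refine ⟨τ y, ?_, hστ y ⟨hy, hy'.1⟩⟩
        intro h
        apply hy'.2
        rw [← hστ y ⟨hy, hy'.1⟩, h, hστ _ hkε]
      · rintro ⟨z, hz, rfl⟩
        refine ⟨(hσm z).1, ?_⟩
        simp only [mem_insert_iff, mem_singleton_iff, not_or]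
        refine ⟨(hσm z).2, fun h => hz ?_⟩
        rw [← h, hτσ]; rfl
    rw [this]
    exact (isConnected_compl_singleton_of_one_lt_rank (by simp) _).isPreconnected.image _
      hσ.continuousOn
  have cimg : ∀ a b, -1 ≤ a → b ≤ 1 → IsClosed (k '' Icc a b) := fun a b ha hb =>
    (isCompact_Icc.image_of_continuousOn (hk.mono (Icc_subset_Icc ha hb))).isClosed
  have hne : ∀ t ∈ Icc (-1 : ℝ) 1, t ≠ 0 → t ≠ ε → k t ∈ sphereS \ {k 0, k ε} := by
    intro t ht n0 n1
    refine ⟨hkS t ht, ?_⟩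
    simp only [mem_insert_iff, mem_singleton_iff, not_or]
    exact ⟨fun h => n0 (hinj 0 m0.1 t ht h), fun h => n1 (hinj ε mε.1 t ht h)⟩
  obtain ⟨y, hy, ⟨s, hs, rfl⟩, hy2⟩ := isPreconnected_closed_iff.1 hT (k '' Icc 0 ε)
    (k '' Icc (-1) 0 ∪ k '' Icc ε 1) (cimg _ _ (by linarith) h1.le)
    ((cimg _ _ le_rfl (by linarith)).union (cimg _ _ (by linarith) le_rfl)) (by
      intro y hy
      obtain ⟨t, ht, rfl⟩ := hcon y hy.1
      rcases le_total t 0 with h | h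
      · exact Or.inr (Or.inl ⟨t, ⟨ht.1, h⟩, rfl⟩)
      rcases le_total t ε with h' | h'
      · exact Or.inl ⟨t, ⟨h, h'⟩, rfl⟩
      · exact Or.inr (Or.inr ⟨t, ⟨h', ht.2⟩, rfl⟩))
    ⟨k (ε / 2), hne _ mh.2 (by linarith) (by linarith), ⟨_, ⟨by linarith, by linarith⟩, rfl⟩⟩
    ⟨k (-ε / 2), hne _ mn.2 (by linarith) (by linarith),
      Or.inl ⟨_, ⟨by linarith, by linarith⟩, rfl⟩⟩
  have ms := m s (by linarith [hs.1]) hs.2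
  have : s = 0 ∨ s = ε := by
    rcases hy2 with ⟨t, ht, e⟩ | ⟨t, ht, e⟩
    · have := hinj s ms.1 t ⟨ht.1, by linarith [ht.2]⟩ e
      left; linarith [ht.2, hs.1]
    · have := hinj s ms.1 t ⟨by linarith [ht.1], ht.2⟩ e
      right; linarith [ht.1, hs.2]
  apply hy.2
  rcases this with rfl | rfl <;> simp



lemma circle_param {q' : ℂ} (hq' : ‖q'‖ = 1) {w : ℂ} (hw : ‖w‖ = 1) :
    ∃ t ∈ Icc (-1:ℝ) 1, q' * Complex.exp ((Real.pi * t : ℝ) * Complex.I) = w := by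
  have hq0 : q' ≠ 0 := by
    intro h; simp [h] at hq'
  have hn : ‖w / q'‖ = 1 := by simp [hq', hw]
  have hpi := Real.pi_pos
  refine ⟨Complex.arg (w / q') / Real.pi, ⟨?_, ?_⟩, ?_⟩
  · rw [le_div_iff₀ hpi]; linarith [Complex.neg_pi_lt_arg (w / q')]
  · rw [div_le_iff₀ hpi]; linarith [Complex.arg_le_pi (w / q')]
  · have h1 : Real.pi * (Complex.arg (w / q') / Real.pi) = Complex.arg (w / q') := by
      field_simp
    rw [h1]
    have h2 := Complex.norm_mul_exp_arg_mul_I (w / q')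
    rw [hn] at h2
    simp only [Complex.ofReal_one, one_mul] at h2
    rw [h2]
    field_simp

lemma circle_param_inj {q' : ℂ} (hq' : ‖q'‖ = 1) {s t : ℝ} (hst : |s - t| < 2)
    (h : q' * Complex.exp ((Real.pi * s : ℝ) * Complex.I) =
      q' * Complex.exp ((Real.pi * t : ℝ) * Complex.I)) : s = t := by
  have hq0 : q' ≠ 0 := by
    intro h; simp [h] at hq'
  have h1 := mul_left_cancel₀ hq0 h
  rw [Complex.exp_eq_exp_iff_exists_int] at h1
  obtain ⟨n, hn⟩ := h1
  have h2 := congrArg Complex.im hn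
  simp at h2
  have hpi := Real.pi_pos
  have h3 : s - t = 2 * n := by
    have : Real.pi * (s - t - 2 * n) = 0 := by linarith
    rcases mul_eq_zero.1 this with h | h
    · linarith
    · linarith
  rw [h3, abs_lt] at hst
  have h4 : (-1:ℝ) < n := by linarith
  have h5 : (n:ℝ) < 1 := by linarith
  have h6 : n = 0 := by
    have a : (-1:ℤ) < n := by exact_mod_cast h4
    have b : n < (1:ℤ) := by exact_mod_cast h5
    omega
  rw [h6] at h3
  simp at h3
  linarith

lemma final_cover {f F : EuclideanSpace ℝ (Fin 2) → EuclideanSpace ℝ (Fin 3)}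
    {g : ℝ → ℂ} {v : EuclideanSpace ℝ (Fin 3)}
    {σ : ℂ → EuclideanSpace ℝ (Fin 3)} {τ : EuclideanSpace ℝ (Fin 3) → ℂ}
    (hg : ContinuousOn g (Icc (-1) 1)) (hloop : g (-1) = g 1)
    (hσ : Continuous σ) (hτ : ContinuousOn τ (sphereS \ {v}))
    (hσm : ∀ z, σ z ∈ sphereS \ {v})
    (hστ : ∀ y ∈ sphereS \ {v}, σ (τ y) = y)
    {A : Set (EuclideanSpace ℝ (Fin 3))}
    (hA : A = sphereS \ f '' circleS)
    (hgA : ∀ y ∈ A, y ≠ v → τ y ∉ g '' Icc (-1) 1)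
    {y₀ : EuclideanSpace ℝ (Fin 3)} (hy₀ : y₀ ∈ A) (hy₀v : y₀ ≠ v)
    (hy₀w : ¬ WindZero g (τ y₀))
    (hext : ∀ y ∈ A, y ≠ v → y ∉ F '' diskS → WindZero g (τ y)) :
    connectedComponentIn A y₀ ⊆ F '' diskS := by
  classical
  let χ : EuclideanSpace ℝ (Fin 3) → Bool := fun y => decide (y = v ∨ WindZero g (τ y))
  have hAS : A ⊆ sphereS := by rw [hA]; exact sdiff_subset
  have hχ : ContinuousOn χ A := by
    intro y hy
    have key : ∀ᶠ y' in nhdsWithin y A, χ y' = χ y := by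
      by_cases hyv : y = v
      · obtain ⟨R, hR⟩ := wz_far hg hloop
        have hcl : IsClosed (σ '' closedBall 0 R) :=
          ((isCompact_closedBall 0 R).image hσ).isClosed
        have hnot : y ∈ (σ '' closedBall 0 R)ᶜ := by
          rintro ⟨z, _, hz⟩
          exact (hσm z).2 (by simp [hz, hyv])
        filter_upwards [self_mem_nhdsWithin,
          mem_nhdsWithin_of_mem_nhds (hcl.isOpen_compl.mem_nhds hnot)] with y' h1 h2
        have e1 : χ y = true := by simp [χ, hyv]
        rw [e1]
        simp only [χ, decide_eq_true_eq]
        by_cases h : y' = v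
        · exact Or.inl h
        · right
          apply hR
          by_contra hle
          apply h2
          exact ⟨τ y', by simpa using hle, hστ y' ⟨hAS h1, h⟩⟩
      · obtain ⟨δ, hδ, hloc⟩ := wz_local hg hloop (hgA y hy hyv)
        have hct : ContinuousWithinAt τ (sphereS \ {v}) y := hτ y ⟨hAS hy, hyv⟩
        have hv' : ∀ᶠ y' in nhdsWithin y A, y' ≠ v :=
          mem_nhdsWithin_of_mem_nhds (isOpen_ne.mem_nhds hyv)
        have hct' : ContinuousWithinAt τ A y := by
          have : ContinuousWithinAt τ (A \ {v}) y :=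
            hct.mono (fun a ha => ⟨hAS ha.1, ha.2⟩)
          have hmem : {v}ᶜ ∈ nhds y := isOpen_ne.mem_nhds hyv
          rw [sdiff_eq] at this
          exact (continuousWithinAt_inter hmem).1 this
        have hd : ∀ᶠ y' in nhdsWithin y A, dist (τ y') (τ y) < δ :=
          hct' (ball_mem_nhds _ hδ)
        filter_upwards [hv', hd] with y' h1 h2
        simp only [χ, h1, hyv, false_or, hloc _ h2]
    exact (tendsto_const_nhds (x := χ y)).congr' (key.mono fun _ h => h.symm)
  intro y hy
  by_contra hyF
  have hsub := connectedComponentIn_subset A y₀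
  have hc := isPreconnected_connectedComponentIn.constant (hχ.mono hsub) hy
    (mem_connectedComponentIn hy₀)
  have h0 : χ y₀ = false := by simp [χ, hy₀v, hy₀w]
  have h1 : χ y = true := by
    simp only [χ, decide_eq_true_eq]
    by_cases h : y = v
    · exact Or.inl h
    · exact Or.inr (hext y (hsub hy) h hyF)
  rw [h0, h1] at hc
  exact absurd hc (by decide)

/-- **Strong Jordan separation, extension part.**  If the set of injective points of a
continuous `f : S¹ → S²` contains a nonempty relatively open set `U`, `q ∈ U`, `p = f q`, and
`F : D² → S²` is a continuous extension of `f` to the closed disk, then some connected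
component `C` of `S² \ f(S¹)` with `p ∈ closure C` satisfies `C ⊆ F(D²)`. -/
theorem strong_jordan_separation_extension
    (f : EuclideanSpace ℝ (Fin 2) → EuclideanSpace ℝ (Fin 3))
    (hf : ContinuousOn f circleS) (hmaps : MapsTo f circleS sphereS)
    (U : Set (EuclideanSpace ℝ (Fin 2))) (hUne : U.Nonempty) (hUI : U ⊆ injPts f)
    (hUopen : ∃ V, IsOpen V ∧ U = V ∩ circleS)
    (q : EuclideanSpace ℝ (Fin 2)) (hq : q ∈ U)
    (F : EuclideanSpace ℝ (Fin 2) → EuclideanSpace ℝ (Fin 3))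
    (hF : ContinuousOn F diskS) (hFmaps : MapsTo F diskS sphereS)
    (hFf : ∀ x ∈ circleS, F x = f x) :
    ∃ C : Set (EuclideanSpace ℝ (Fin 3)),
      IsCompOf C (sphereS \ f '' circleS) ∧ f q ∈ closure C ∧ C ⊆ F '' diskS := by
  classical
  obtain ⟨V, hVo, hUV⟩ := hUopen
  have hqV : q ∈ V ∩ circleS := hUV ▸ hq
  let e : ℂ ≃ₗᵢ[ℝ] EuclideanSpace ℝ (Fin 2) := Complex.orthonormalBasisOneI.repr
  let q' : ℂ := e.symm q
  have hq' : ‖q'‖ = 1 := by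
    have : ‖q‖ = 1 := by simpa [circleS] using hqV.2
    simpa [q'] using this
  let c : ℝ → ℂ := fun t => q' * Complex.exp ((Real.pi * t : ℝ) * Complex.I)
  have hcn : ∀ t, ‖c t‖ = 1 := by
    intro t
    simp only [c, norm_mul, hq', Complex.norm_exp_ofReal_mul_I, mul_one]
  have hec : ∀ t, e (c t) ∈ circleS := by
    intro t; simp [circleS, hcn]
  have hcc : Continuous c := by fun_prop
  have hecc : Continuous (fun t => e (c t)) := e.continuous.comp hcc
  have hc0 : e (c 0) = q := by simp [c, q']
  have hc1 : c (-1) = c 1 := by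
    have h1 : Complex.exp ((Real.pi * (-1) : ℝ) * Complex.I) = -1 := by
      have : ((Real.pi * (-1) : ℝ) : ℂ) * Complex.I = -(Real.pi * Complex.I) := by
        push_cast; ring
      rw [this, Complex.exp_neg, Complex.exp_pi_mul_I]; norm_num
    have h2 : Complex.exp ((Real.pi * 1 : ℝ) * Complex.I) = -1 := by
      rw [mul_one, Complex.exp_pi_mul_I]
    simp only [c, h1, h2]
  let k : ℝ → EuclideanSpace ℝ (Fin 3) := fun t => f (e (c t))
  have hkc : Continuous k := hf.comp_continuous hecc hec
  have hkS : ∀ t, k t ∈ sphereS := fun t => hmaps (hec t)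
  have hk1 : k (-1) = k 1 := by simp only [k, hc1]
  have himg : f '' circleS = k '' Icc (-1) 1 := by
    ext y
    constructor
    · rintro ⟨w, hw, rfl⟩
      have hw1 : ‖e.symm w‖ = 1 := by
        have : ‖w‖ = 1 := by simpa [circleS] using hw
        simpa using this
      obtain ⟨t, ht, htw⟩ := circle_param hq' hw1
      refine ⟨t, ht, ?_⟩
      have : c t = e.symm w := htw
      simp [k, this]
    · rintro ⟨t, _, rfl⟩
      exact ⟨_, hec t, rfl⟩
  obtain ⟨ε, h0, h1, hεV⟩ : ∃ ε : ℝ, 0 < ε ∧ ε < 1 ∧ ∀ t ∈ Icc (-ε) ε, e (c t) ∈ V := by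
    have hop : IsOpen ((fun t => e (c t)) ⁻¹' V) := hVo.preimage hecc
    have hm : (0:ℝ) ∈ (fun t => e (c t)) ⁻¹' V := by
      change e (c 0) ∈ V
      rw [hc0]; exact hqV.1
    obtain ⟨r, hr, hb⟩ := Metric.isOpen_iff.1 hop 0 hm
    refine ⟨min (r / 2) (1 / 2), by positivity, ?_, ?_⟩
    · exact (min_le_right _ _).trans_lt (by norm_num)
    · intro t ht
      apply hb
      rw [mem_ball, dist_zero_right, Real.norm_eq_abs]
      have := abs_le.2 ht
      linarith [min_le_left (r / 2) (1 / 2)]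
  have hinj : ∀ t ∈ Icc (-ε) ε, ∀ s ∈ Icc (-1:ℝ) 1, k s = k t → s = t := by
    intro t ht s hs hst
    have hU : e (c t) ∈ injPts f := hUI (hUV ▸ ⟨hεV t ht, hec t⟩)
    have h2 := e.injective (hU.2 _ (hec s) hst)
    refine circle_param_inj hq' ?_ h2
    rw [abs_lt]
    constructor <;> linarith [ht.1, ht.2, hs.1, hs.2]
  obtain ⟨v, hvS, hvf, hvF⟩ : ∃ v ∈ sphereS, v ∉ f '' circleS ∧
      (v ∉ F '' diskS ∨ sphereS ⊆ F '' diskS) := by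
    by_cases hs : sphereS ⊆ F '' diskS
    · obtain ⟨v, hv, hvk⟩ := exists_missing hkc.continuousOn (fun t _ => hkS t) h0 h1 hinj
      exact ⟨v, hv, himg ▸ hvk, Or.inr hs⟩
    · obtain ⟨v, hv, hvF⟩ := Set.not_subset.1 hs
      refine ⟨v, hv, ?_, Or.inl hvF⟩
      rintro ⟨w, hw, rfl⟩
      exact hvF ⟨w, sphere_subset_closedBall hw, hFf w hw⟩
  obtain ⟨σ, τ, hσ, hτ, hσm, hτσ, hστ⟩ := stereo_pair hvS
  have hkv : ∀ t, k t ∈ sphereS \ {v} := by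
    intro t
    refine ⟨hkS t, ?_⟩
    intro h
    exact hvf ⟨_, hec t, h⟩
  let g : ℝ → ℂ := fun t => τ (k t)
  have hgc : Continuous g := hτ.comp_continuous hkc hkv
  have hloop : g (-1) = g 1 := by simp only [g, hk1]
  have hσg : ∀ t, σ (g t) = k t := fun t => hστ _ (hkv t)
  have hginj : ∀ t ∈ Icc (-ε) ε, ∀ s ∈ Icc (-1:ℝ) 1, g s = g t → s = t := by
    intro t ht s hs hst
    apply hinj t ht s hs
    rw [← hσg, ← hσg, hst]
  obtain ⟨x, hx, hxcl, hxw⟩ := planar hgc.continuousOn hloop h0 h1 hginj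
  have hσA : ∀ z ∉ g '' Icc (-1) 1, σ z ∈ sphereS \ f '' circleS := by
    intro z hz
    refine ⟨(hσm z).1, ?_⟩
    rw [himg]
    rintro ⟨t, ht, h⟩
    apply hz
    refine ⟨t, ht, ?_⟩
    simp only [g, h, hτσ]
  refine ⟨connectedComponentIn (sphereS \ f '' circleS) (σ x), ⟨σ x, hσA x hx, rfl⟩, ?_, ?_⟩
  · have hsub : σ '' connectedComponentIn (g '' Icc (-1) 1)ᶜ x ⊆
        connectedComponentIn (sphereS \ f '' circleS) (σ x) := by
      apply IsPreconnected.subset_connectedComponentIn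
      · exact isPreconnected_connectedComponentIn.image _ hσ.continuousOn
      · exact mem_image_of_mem _ (mem_connectedComponentIn hx)
      · rintro _ ⟨z, hz, rfl⟩
        exact hσA z (connectedComponentIn_subset _ _ hz)
    have h3 : f q = σ (g 0) := by
      rw [hσg]; simp only [k, hc0]
    rw [h3]
    exact closure_mono hsub (image_closure_subset_closure_image hσ (mem_image_of_mem _ hxcl))
  · rcases hvF with hvF | hall
    · refine final_cover hgc.continuousOn hloop hσ hτ hσm hστ rfl ?_ (hσA x hx)
        (fun h => (hσm x).2 (by simp [h])) (by rw [hτσ]; exact hxw) ?_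
      · rintro y hy hyv ⟨t, ht, h⟩
        apply hy.2
        rw [himg]
        refine ⟨t, ht, ?_⟩
        rw [← hσg, h, hστ y ⟨hy.1, hyv⟩]
      · intro y hy hyv hyF
        have hed : ∀ w ∈ closedBall (0:ℂ) 1, e w ∈ diskS := by
          intro w hw
          simpa [diskS] using hw
        have hFv : ∀ w ∈ diskS, F w ∈ sphereS \ {v} :=
          fun w hw => ⟨hFmaps hw, fun h => hvF ⟨w, hw, h⟩⟩
        refine wz_ext (h := fun w => τ (F (e w))) ?_ hq' ?_ ?_
        · exact hτ.comp (hF.comp e.continuous.continuousOn hed) (fun w hw => hFv _ (hed w hw))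
        · intro t
          change τ (f (e (c t))) = τ (F (e (c t)))
          rw [hFf _ (hec t)]
        · intro w hw h
          apply hyF
          refine ⟨e w, hed w hw, ?_⟩
          have h5 := congrArg σ h
          rw [hστ _ (hFv _ (hed w hw)), hστ y ⟨hy.1, hyv⟩] at h5
          exact h5
    · exact fun y hy => hall (connectedComponentIn_subset _ _ hy).1
end
end

section
/- Non-surjectivity lemma: Let f : S¹ → S² be a continuous map whose set of injective points I(f) = {p ∈ S¹ : f⁻¹({f(p)}) = {p}} contains a nonempty open subset of S¹. Then f is not surjective, i.e. f(S¹) ≠ S². -/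
open Metric Set

noncomputable section

/-- A punctured spherical cap is preconnected. -/
theorem cap_preconnected (x : EuclideanSpace ℝ (Fin 3)) (hx : ‖x‖ = 1) (c : ℝ) (hc : 0 ≤ c) :
    IsPreconnected {y : EuclideanSpace ℝ (Fin 3) | ‖y‖ = 1 ∧ c < inner ℝ x y ∧ y ≠ x} := by
  have hx0 : x ≠ 0 := by
    intro h
    simp [h] at hx
  have : Fact (Module.finrank ℝ (EuclideanSpace ℝ (Fin 3)) = 2 + 1) := ⟨by simp⟩
  have hfr : Module.finrank ℝ (ℝ ∙ x)ᗮ = 2 := Submodule.finrank_orthogonal_span_singleton hx0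
  have hrank : 1 < Module.rank ℝ (ℝ ∙ x)ᗮ := by
    rw [← Module.finrank_eq_rank, hfr]
    norm_num
  have hS : IsPreconnected (Metric.sphere (0 : (ℝ ∙ x)ᗮ) 1) := isPreconnected_sphere hrank 0 1
  have hP : IsPreconnected ((Ioo c 1) ×ˢ (Metric.sphere (0 : (ℝ ∙ x)ᗮ) 1)) :=
    isPreconnected_Ioo.prod hS
  let g : ℝ × (ℝ ∙ x)ᗮ → EuclideanSpace ℝ (Fin 3) :=
    fun z => z.1 • x + Real.sqrt (1 - z.1 ^ 2) • (z.2 : EuclideanSpace ℝ (Fin 3))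
  have hg : Continuous g := by
    have h2 : Continuous fun z : ℝ × (ℝ ∙ x)ᗮ => (z.2 : EuclideanSpace ℝ (Fin 3)) :=
      continuous_subtype_val.comp continuous_snd
    have h3 : Continuous fun z : ℝ × (ℝ ∙ x)ᗮ => Real.sqrt (1 - z.1 ^ 2) := by fun_prop
    exact (continuous_fst.smul continuous_const).add (h3.smul h2)
  have key : {y : EuclideanSpace ℝ (Fin 3) | ‖y‖ = 1 ∧ c < inner ℝ x y ∧ y ≠ x}
      = g '' ((Ioo c 1) ×ˢ (Metric.sphere (0 : (ℝ ∙ x)ᗮ) 1)) := by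
    have hxx : inner ℝ x x = (1 : ℝ) := by rw [real_inner_self_eq_norm_sq, hx]; norm_num
    ext y
    constructor
    · rintro ⟨hy, hcy, hne⟩
      set s : ℝ := inner ℝ x y with hs
      have hs1 : s < 1 := by
        have h := (inner_lt_one_iff_real_of_norm_eq_one hx hy).2 (Ne.symm hne)
        exact h
      have hw : y - s • x ∈ (ℝ ∙ x)ᗮ := by
        rw [Submodule.mem_orthogonal_singleton_iff_inner_right, inner_sub_right,
          inner_smul_right, hxx, ← hs]
        ring
      have hsq : 0 < 1 - s ^ 2 := by nlinarith
      have hr : 0 < Real.sqrt (1 - s ^ 2) := Real.sqrt_pos.2 hsq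
      have hn : ‖y - s • x‖ = Real.sqrt (1 - s ^ 2) := by
        rw [eq_comm, Real.sqrt_eq_iff_mul_self_eq hsq.le (norm_nonneg _), ← sq,
          norm_sub_sq_real, inner_smul_right, real_inner_comm, ← hs, hy, norm_smul, hx]
        simp
        ring
      refine ⟨(s, (Real.sqrt (1 - s ^ 2))⁻¹ • ⟨y - s • x, hw⟩), ⟨⟨hcy, hs1⟩, ?_⟩, ?_⟩
      · rw [mem_sphere_zero_iff_norm, norm_smul, Submodule.coe_norm, hn, Real.norm_eq_abs,
          abs_of_pos (inv_pos.2 hr), inv_mul_cancel₀ hr.ne']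
      · simp only [g, Submodule.coe_smul]
        rw [smul_smul, mul_inv_cancel₀ hr.ne', one_smul]
        abel
    · rintro ⟨⟨s, u⟩, ⟨⟨hs0, hs1⟩, hu⟩, rfl⟩
      simp only at hs0 hs1 hu
      have hu1 : ‖(u : EuclideanSpace ℝ (Fin 3))‖ = 1 := by simpa using hu
      have hxu : inner ℝ x (u : EuclideanSpace ℝ (Fin 3)) = (0 : ℝ) :=
        (Submodule.mem_orthogonal_singleton_iff_inner_right).1 u.2
      have hsq : 0 < 1 - s ^ 2 := by nlinarith
      have hin : inner ℝ x (g (s, u)) = s := by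
        simp only [g]
        rw [inner_add_right, inner_smul_right, inner_smul_right, hxx, hxu]
        ring
      refine ⟨?_, ?_, ?_⟩
      · have : ‖g (s, u)‖ ^ 2 = 1 := by
          simp only [g]
          rw [norm_add_sq_real, inner_smul_left, inner_smul_right, hxu, norm_smul, norm_smul,
            hx, hu1, mul_one, mul_one, Real.norm_eq_abs, Real.norm_eq_abs, sq_abs, sq_abs,
            Real.sq_sqrt hsq.le]
          ring
        nlinarith [norm_nonneg (g (s, u))]
      · rw [hin]; exact hs0
      · intro h
        rw [h, hxx] at hin
        linarith
  rw [key]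
  exact hP.image g hg.continuousOn

/-- Angular parametrization of the circle. -/
def circParam (t : ℝ) : EuclideanSpace ℝ (Fin 2) := !₂[Real.cos t, Real.sin t]

theorem circParam_continuous : Continuous circParam := by
  unfold circParam
  fun_prop

theorem circParam_mem (t : ℝ) : circParam t ∈ circleS := by
  simp [circleS, circParam, EuclideanSpace.norm_eq]

theorem circParam_surj (p : EuclideanSpace ℝ (Fin 2)) (hp : p ∈ circleS) (a : ℝ) :
    ∃ t ∈ Ico a (a + 2 * Real.pi), circParam t = p := by
  have h1 : p 0 ^ 2 + p 1 ^ 2 = 1 := by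
    have : ‖p‖ = 1 := by simpa [circleS] using hp
    have h2 : ‖p‖ ^ 2 = 1 := by rw [this]; norm_num
    rw [EuclideanSpace.norm_sq_eq] at h2
    simpa using h2
  have hz : ‖(⟨p 0, p 1⟩ : ℂ)‖ = 1 := by
    rw [Complex.norm_def, Complex.normSq_mk, ← sq, ← sq, h1, Real.sqrt_one]
  have hz0 : (⟨p 0, p 1⟩ : ℂ) ≠ 0 := by
    intro h
    rw [h] at hz
    simp at hz
  set θ := Complex.arg ⟨p 0, p 1⟩ with hθ
  have hc : Real.cos θ = p 0 := by rw [hθ, Complex.cos_arg hz0, hz]; simp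
  have hs : Real.sin θ = p 1 := by rw [hθ, Complex.sin_arg, hz]; simp
  refine ⟨toIcoMod Real.two_pi_pos a θ, toIcoMod_mem_Ico _ _ _, ?_⟩
  have : toIcoMod Real.two_pi_pos a θ = θ - (toIcoDiv Real.two_pi_pos a θ : ℤ) * (2 * Real.pi) := by
    rw [toIcoMod]; simp
  rw [this]
  unfold circParam
  rw [Real.cos_sub_int_mul_two_pi, Real.sin_sub_int_mul_two_pi, hc, hs]
  ext i
  fin_cases i <;> simp

theorem circParam_inj (s t : ℝ) (h : circParam s = circParam t)
    (h1 : s - t < 2 * Real.pi) (h2 : t - s < 2 * Real.pi) : s = t := by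
  have hc : Real.cos s = Real.cos t := by
    have := congrArg (fun v : EuclideanSpace ℝ (Fin 2) => v 0) h
    simpa [circParam] using this
  have hs : Real.sin s = Real.sin t := by
    have := congrArg (fun v : EuclideanSpace ℝ (Fin 2) => v 1) h
    simpa [circParam] using this
  obtain ⟨k, hk⟩ := Real.Angle.angle_eq_iff_two_pi_dvd_sub.1 (Real.Angle.cos_sin_inj hc hs)
  have hp := Real.pi_pos
  have hk1 : (k : ℝ) < 1 := by nlinarith
  have hk2 : (-1 : ℝ) < k := by nlinarith
  have hk1' : k < 1 := by exact_mod_cast hk1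
  have hk2' : -1 < k := by exact_mod_cast hk2
  have : k = 0 := by omega
  rw [this] at hk
  simp at hk
  linarith

/-- **Non-surjectivity lemma.**  If the set of injective points of a continuous `f : S¹ → S²`
contains a nonempty relatively open subset of `S¹`, then `f(S¹) ≠ S²`. -/
theorem injective_points_not_surjective
    (f : EuclideanSpace ℝ (Fin 2) → EuclideanSpace ℝ (Fin 3))
    (hf : ContinuousOn f circleS) (hmaps : MapsTo f circleS sphereS)
    (U : Set (EuclideanSpace ℝ (Fin 2))) (hUne : U.Nonempty) (hUI : U ⊆ injPts f)
    (hUopen : ∃ V, IsOpen V ∧ U = V ∩ circleS) :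
    f '' circleS ≠ sphereS := by
  intro hsurj
  obtain ⟨V, hV, rfl⟩ := hUopen
  obtain ⟨p, hpV, hpc⟩ := hUne
  obtain ⟨t0, -, rfl⟩ := circParam_surj p hpc 0
  have hpi := Real.pi_pos
  obtain ⟨δ, hδ0, hδπ, hδ⟩ : ∃ δ > 0, δ < Real.pi ∧
      ∀ s, |s - t0| < δ → circParam s ∈ V := by
    obtain ⟨ε, hε, h⟩ := Metric.isOpen_iff.1 (hV.preimage circParam_continuous) t0 hpV
    refine ⟨min ε (Real.pi / 2), by positivity, (min_le_right _ _).trans_lt (by linarith), ?_⟩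
    intro s hs
    exact h (by rw [Metric.mem_ball, Real.dist_eq]; exact hs.trans_le (min_le_left _ _))
  set F : ℝ → EuclideanSpace ℝ (Fin 3) := fun t => f (circParam t) with hFdef
  have hF : Continuous F := hf.comp_continuous circParam_continuous circParam_mem
  have hinj : ∀ s t, |s - t0| < δ → F t = F s → s - t < 2 * Real.pi → t - s < 2 * Real.pi →
      t = s := by
    intro s t hs hE h1 h2
    have h := (hUI ⟨hδ s hs, circParam_mem s⟩).2 _ (circParam_mem t) hE
    exact circParam_inj t s h h2 h1
  have hinj' : ∀ s t, |s - t0| < δ → F t = F s → circParam t = circParam s := by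
    intro s t hs hE
    exact (hUI ⟨hδ s hs, circParam_mem s⟩).2 _ (circParam_mem t) hE
  have hFs : ∀ t, ‖F t‖ = 1 := by
    intro t
    simpa [sphereS] using hmaps (circParam_mem t)
  have hper : ∀ t, F (t + 2 * Real.pi) = F t := by
    intro t
    simp [hFdef, circParam]
  have hsur : ∀ y : EuclideanSpace ℝ (Fin 3), ‖y‖ = 1 → ∃ t ∈ Ico t0 (t0 + 2 * Real.pi), F t = y := by
    intro y hy
    have : y ∈ f '' circleS := by rw [hsurj]; simpa [sphereS] using hy
    obtain ⟨q, hq, rfl⟩ := this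
    obtain ⟨t, ht, rfl⟩ := circParam_surj q hq t0
    exact ⟨t, ht, rfl⟩
  set x := F t0 with hx
  have h00 : |t0 - t0| < δ := by simpa using hδ0
  -- the compact set to be avoided
  obtain ⟨c, hc0, hc1, hcK⟩ : ∃ c : ℝ, 0 ≤ c ∧ c < 1 ∧
      ∀ t ∈ Icc (t0 + δ) (t0 + 2 * Real.pi - δ), inner ℝ x (F t) ≤ c := by
    have hne : (Icc (t0 + δ) (t0 + 2 * Real.pi - δ)).Nonempty := nonempty_Icc.2 (by linarith)
    have hcont : Continuous fun t => (inner ℝ x (F t) : ℝ) := continuous_const.inner hF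
    obtain ⟨m, hm, hmax⟩ := isCompact_Icc.exists_isMaxOn hne hcont.continuousOn
    refine ⟨max 0 (inner ℝ x (F m)), le_max_left _ _, max_lt one_pos ?_, ?_⟩
    · refine (inner_lt_one_iff_real_of_norm_eq_one (hFs _) (hFs _)).2 ?_
      intro h
      have := hinj t0 m h00 h.symm (by linarith [hm.1]) (by linarith [hm.2])
      linarith [hm.1]
    · intro t ht
      exact (hmax ht).trans (le_max_right _ _)
  have hpre := cap_preconnected x (hFs t0) c hc0
  have hA : IsClosed (F '' Icc t0 (t0 + 2 * Real.pi - δ)) := (isCompact_Icc.image hF).isClosed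
  have hB : IsClosed (F '' Icc (t0 + δ) (t0 + 2 * Real.pi)) := (isCompact_Icc.image hF).isClosed
  -- points near t0 lie in the cap
  obtain ⟨η, hη0, hη⟩ : ∃ η > 0, ∀ s, |s - t0| < η → c < inner ℝ x (F s) := by
    have hcont : Continuous fun t => (inner ℝ x (F t) : ℝ) := continuous_const.inner hF
    have hopen : IsOpen {t | c < inner ℝ x (F t)} := isOpen_lt continuous_const hcont
    have hmem : t0 ∈ {t | c < inner ℝ x (F t)} := by
      change c < inner ℝ x x
      rw [real_inner_self_eq_norm_sq, hFs]
      simpa using hc1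
    obtain ⟨ε, hε, h⟩ := Metric.isOpen_iff.1 hopen t0 hmem
    exact ⟨ε, hε, fun s hs => h (by rw [Metric.mem_ball, Real.dist_eq]; exact hs)⟩
  obtain ⟨e, he0, heη, heδ⟩ : ∃ e > 0, e < η ∧ e < δ :=
    ⟨min η δ / 2, by positivity, by linarith [min_le_left η δ, lt_min hη0 hδ0],
      by linarith [min_le_right η δ, lt_min hη0 hδ0]⟩
  have habs1 : |t0 - e - t0| = e := by
    rw [show t0 - e - t0 = -e by ring, abs_neg, abs_of_pos he0]
  have habs2 : |t0 + e - t0| = e := by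
    rw [show t0 + e - t0 = e by ring, abs_of_pos he0]
  have hcap : ∀ s, |s - t0| = e → F s ∈
      {y : EuclideanSpace ℝ (Fin 3) | ‖y‖ = 1 ∧ c < inner ℝ x y ∧ y ≠ x} := by
    intro s hs
    refine ⟨hFs s, hη s (hs ▸ heη), ?_⟩
    intro h
    have hb := abs_le.1 hs.le
    have := hinj t0 s h00 h (by linarith [hb.1]) (by linarith [hb.2])
    rw [this] at hs
    simp at hs
    linarith
  obtain ⟨y, ⟨hy1, -, -⟩, hyA, hyB⟩ := hpre _ _ hA.isOpen_compl hB.isOpen_compl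
    (by
      rintro y ⟨hy1, hyc, hyx⟩
      by_contra hcon
      simp only [mem_union, mem_compl_iff, not_or, not_not] at hcon
      obtain ⟨⟨s, hs, hsy⟩, ⟨t, ht, hty⟩⟩ := hcon
      have hs' : s < t0 + δ := by
        by_contra! h
        have := hcK s ⟨h, hs.2⟩
        rw [hsy] at this
        linarith
      have ht' : t0 + 2 * Real.pi - δ < t := by
        by_contra! h
        have := hcK t ⟨ht.1, h⟩
        rw [hty] at this
        linarith
      have hst : s ≠ t0 := by
        rintro rfl
        exact hyx hsy.symm
      have hs0 : t0 < s := lt_of_le_of_ne hs.1 (Ne.symm hst)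
      have := hinj s t (by rw [abs_lt]; constructor <;> linarith) (hty.trans hsy.symm)
        (by linarith [ht.1]) (by linarith [ht.2])
      linarith)
    ⟨F (t0 - e), hcap _ habs1, by
      rintro ⟨s, hs, hsE⟩
      have := hinj (t0 - e) s (by rw [habs1]; exact heδ) hsE (by linarith [hs.1])
        (by linarith [hs.2])
      linarith [hs.1]⟩
    ⟨F (t0 + e), hcap _ habs2, by
      rintro ⟨s, hs, hsE⟩
      have := hinj (t0 + e) s (by rw [habs2]; exact heδ) hsE (by linarith [hs.1])
        (by linarith [hs.2])
      linarith [hs.1]⟩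
  obtain ⟨t, ht, rfl⟩ := hsur y hy1
  rcases le_total t (t0 + 2 * Real.pi - δ) with h | h
  · exact hyA ⟨t, ⟨ht.1, h⟩, rfl⟩
  · exact hyB ⟨t, ⟨by linarith, ht.2.le⟩, rfl⟩
end
end

section
/- Small-disk density claim: Let (Uᵢ)_{i ∈ ℕ} be a countable family of pairwise disjoint nonempty open round disks in S² (each Uᵢ a metric ball for the metric on S² induced from ℝ³) whose union ⋃ᵢ Uᵢ is dense in S². Let p ∈ S² be a point with p ∉ closure(Uᵢ) for every i. Then for every neighborhood N of p in S² there exists an index i with Uᵢ ⊆ N; equivalently, for every ε > 0 there exists i with Uᵢ contained in the open ball of radius ε about p. -/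
open Metric Set

noncomputable section

/-- The unit sphere in Euclidean 3-space, as a metric space with the metric induced from ℝ³. -/
abbrev Sph : Type := (Metric.sphere (0 : EuclideanSpace ℝ (Fin 3)) 1 : Set (EuclideanSpace ℝ (Fin 3)))

/-- **Small-disk density claim.**  Given a countable family of pairwise disjoint nonempty open
round disks in `S²` whose union is dense, and a point `p` lying in the closure of none of them,
every neighborhood of `p` contains one of the disks. -/
theorem small_disks_near_point
    (U : ℕ → Set Sph) (c : ℕ → Sph) (r : ℕ → ℝ)
    (hr : ∀ i, 0 < r i) (hball : ∀ i, U i = Metric.ball (c i) (r i))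
    (hne : ∀ i, (U i).Nonempty)
    (hdisj : Pairwise (Function.onFun Disjoint U))
    (hdense : Dense (⋃ i, U i))
    (p : Sph) (hp : ∀ i, p ∉ closure (U i)) :
    ∀ N ∈ nhds p, ∃ i, U i ⊆ N := by
  intro N hN
  obtain ⟨ε, hε, hεN⟩ := Metric.mem_nhds_iff.1 hN
  by_contra hcon
  push Not at hcon
  -- disks of radius at least ε / 4 are finite in number
  have hfin : {i | ε / 4 ≤ r i}.Finite := by
    obtain ⟨t, -, htf, hcov⟩ := finite_cover_balls_of_compact
      (isCompact_univ : IsCompact (univ : Set Sph)) (show (0 : ℝ) < ε / 8 by positivity)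
    have hc : ∀ i, ∃ y ∈ t, dist (c i) y < ε / 8 := by
      intro i
      have h := hcov (mem_univ (c i))
      simp only [mem_iUnion, Metric.mem_ball, exists_prop] at h
      exact h
    choose f hft hf using hc
    refine Set.Finite.of_finite_image (f := f) (htf.subset ?_) ?_
    · rintro _ ⟨i, -, rfl⟩
      exact hft i
    · intro i hi j hj hij
      by_contra hne'
      have hd : Disjoint (U i) (U j) := hdisj hne'
      have h1 : dist (c j) (c i) < r i := by
        have a := hf i
        have b := hf j
        have hi' : ε / 4 ≤ r i := hi
        have hij' : f i = f j := hij
        rw [hij', dist_comm] at a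
        rw [dist_comm] at b
        have := dist_triangle_left (c j) (c i) (f j)
        linarith
      refine (Set.disjoint_left.1 hd : ∀ ⦃a⦄, a ∈ U i → a ∉ U j) (a := c j) ?_ ?_
      · rw [hball]; exact h1
      · rw [hball]; exact Metric.mem_ball_self (hr j)
  have hclosed : IsClosed (⋃ i ∈ {i | ε / 4 ≤ r i}, closure (U i)) :=
    hfin.isClosed_biUnion (fun i _ => isClosed_closure)
  have hopen : IsOpen (Metric.ball p (ε / 2) ∩ (⋃ i ∈ {i | ε / 4 ≤ r i}, closure (U i))ᶜ) :=
    Metric.isOpen_ball.inter hclosed.isOpen_compl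
  obtain ⟨x, ⟨hxb, hxc⟩, hxU⟩ := hdense.inter_open_nonempty _ hopen
    ⟨p, Metric.mem_ball_self (by positivity), by
      simp only [mem_compl_iff, mem_iUnion, not_exists]
      exact fun i _ => hp i⟩
  obtain ⟨i, hxi⟩ := mem_iUnion.1 hxU
  apply hxc
  refine mem_iUnion₂.2 ⟨i, ?_, subset_closure hxi⟩
  obtain ⟨y, hy, hyN⟩ := Set.not_subset.1 (hcon i)
  have hyp : ε ≤ dist y p := by
    by_contra h
    exact hyN (hεN (not_le.1 h))
  rw [hball] at hxi hy
  rw [Metric.mem_ball] at hxi hy hxb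
  have h1 := dist_triangle y x p
  have h2 := dist_triangle_right y x (c i)
  show ε / 4 ≤ r i
  linarith
end
end

section
/- Disk-in-connected-open-set claim: Let (Uᵢ)_{i ∈ ℕ} be a countable family of nonempty open round disks in S² whose closures are pairwise disjoint and whose union ⋃ᵢ Uᵢ is dense in S². Let p ∈ S² be a point with p ∉ closure(Uᵢ) for every i, and let V ⊆ S² be a connected open set containing p in its closure. Then there exists an index j with U_j ⊆ V. -/
open Metric Set

noncomputable section

lemma meets_frontier {X : Type*} [TopologicalSpace X] {W A : Set X} (hW : IsPreconnected W)
    {x y : X} (hx : x ∈ W) (hxA : x ∈ A) (hy : y ∈ W) (hyA : y ∉ A) :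
    ∃ z ∈ W, z ∈ frontier A := by
  by_contra! hcon
  have h1 : W ⊆ interior A ∪ (closure A)ᶜ := by
    intro z hz
    by_cases h : z ∈ closure A
    · left
      by_contra h2
      exact hcon z hz ⟨h, h2⟩
    · right; exact h
  have h2 := hW.subset_left_of_subset_union isOpen_interior isClosed_closure.isOpen_compl
    (disjoint_left.2 fun z hz hz' => hz' (subset_closure (interior_subset hz))) h1 ?_
  · exact hyA (interior_subset (h2 hy))
  · refine ⟨x, hx, ?_⟩
    rcases h1 hx with h | h
    · exact h
    · exact absurd (subset_closure hxA) h

lemma sierpinski_open {X : Type*} [TopologicalSpace X] [LocallyCompactSpace X] [T2Space X]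
    [LocallyConnectedSpace X] (C : ℕ → Set X) (hC : ∀ i, IsClosed (C i))
    (hdisj : Pairwise fun i j => Disjoint (C i) (C j))
    (V : Set X) (hVo : IsOpen V) (hV : IsConnected V) (hsub : ∀ v ∈ V, ∃ i, v ∈ C i) :
    ∃ i, V ⊆ C i := by
  have huniq : ∀ {i j z}, z ∈ C i → z ∈ C j → i = j := by
    intro i j z hi hj
    by_contra hne
    exact disjoint_left.1 (hdisj hne) hi hj
  have hfr : ∀ {j z}, z ∈ frontier (interior (C j)) →
      z ∈ C j ∧ ∀ k, z ∉ interior (C k) := by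
    intro j z hz
    have hz1 : z ∈ C j := closure_minimal interior_subset (hC j) hz.1
    refine ⟨hz1, fun k hk => ?_⟩
    have := huniq hz1 (interior_subset hk)
    subst this
    rw [isOpen_interior.frontier_eq] at hz
    exact hz.2 hk
  set Y : Set X := V ∩ (⋃ i, interior (C i))ᶜ with hY
  rcases Y.eq_empty_or_nonempty with hemp | hnon
  · have hcov : ∀ v ∈ V, ∃ i, v ∈ interior (C i) := by
      intro v hv
      by_contra hcon
      have : v ∈ Y := ⟨hv, by simpa using hcon⟩
      rw [hemp] at this
      exact this
    obtain ⟨v, hv⟩ := hV.nonempty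
    obtain ⟨i, hi⟩ := hcov v hv
    refine ⟨i, fun y hy => interior_subset ?_⟩
    by_contra hyi
    obtain ⟨z, hzV, hz⟩ := meets_frontier hV.isPreconnected hv hi hy hyi
    obtain ⟨k, hk⟩ := hcov z hzV
    exact (hfr hz).2 k hk
  · exfalso
    have hlc : IsLocallyClosed Y :=
      hVo.isLocallyClosed.inter
        (isOpen_iUnion fun i => isOpen_interior).isClosed_compl.isLocallyClosed
    have : LocallyCompactSpace Y := hlc.locallyCompactSpace
    have : Nonempty Y := hnon.to_subtype
    obtain ⟨i, ⟨x, hx⟩⟩ := nonempty_interior_of_iUnion_of_closed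
      (f := fun i => ((↑) : Y → X) ⁻¹' C i)
      (fun i => (hC i).preimage continuous_subtype_val)
      (by
        ext y
        simpa using hsub y y.2.1)
    rw [mem_interior_iff_mem_nhds, _root_.mem_nhds_iff] at hx
    obtain ⟨t, ht, hto, hxt⟩ := hx
    obtain ⟨O, hO, rfl⟩ := isOpen_induced_iff.1 hto
    obtain ⟨W, hWs, hWo, hxW, hWc⟩ :=
      locallyConnectedSpace_iff_subsets_isOpen_isConnected.1 ‹_› (x : X) (O ∩ V)
        ((hO.inter hVo).mem_nhds ⟨hxt, x.2.1⟩)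
    have hkey : ∀ z ∈ W, (∀ k, z ∉ interior (C k)) → z ∈ C i := by
      intro z hz hk
      have hzY : z ∈ Y := ⟨(hWs hz).2, by simpa using hk⟩
      exact ht (show (⟨z, hzY⟩ : Y) ∈ _ from (hWs hz).1)
    have hxn : ∀ k, (x : X) ∉ interior (C k) := by
      have := x.2.2
      simpa using this
    have hWC : W ⊆ C i := by
      intro y hy
      by_contra hyi
      have : ∃ j, y ∈ interior (C j) := by
        by_contra! hcon
        exact hyi (hkey y hy hcon)
      obtain ⟨j, hj⟩ := this
      obtain ⟨z, hzW, hz⟩ := meets_frontier hWc.isPreconnected hy hj hxW (hxn j)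
      have h1 := hkey z hzW (hfr hz).2
      have := huniq h1 (hfr hz).1
      subst this
      exact hyi (interior_subset hj)
    exact hxn i (mem_interior.2 ⟨W, hWC, hWo, hxW⟩)

lemma finite_large {X : Type*} [PseudoMetricSpace X] [CompactSpace X] (c : ℕ → X) (r : ℕ → ℝ)
    (hr : ∀ i, 0 < r i)
    (hdisj : Pairwise fun i j => Disjoint (ball (c i) (r i)) (ball (c j) (r j)))
    (ε : ℝ) (hε : 0 < ε) : {i | ε ≤ r i}.Finite := by
  obtain ⟨t, -, htf, ht⟩ := (isCompact_univ (X := X)).finite_cover_balls (half_pos hε)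
  have hch : ∀ i, ∃ x ∈ t, dist (c i) x < ε / 2 := by
    intro i
    simpa using ht (mem_univ (c i))
  choose f hf hfd using hch
  refine Set.Finite.of_finite_image (f := f) (htf.subset ?_) ?_
  · rintro _ ⟨i, -, rfl⟩
    exact hf i
  · intro i hi j hj hij
    by_contra hne
    refine disjoint_left.1 (hdisj hne) (mem_ball_self (hr i)) ?_
    have h1 := hfd i
    have h2 := hfd j
    rw [← hij] at h2
    have h3 := dist_triangle_right (c i) (c j) (f i)
    have : ε ≤ r j := hj
    rw [mem_ball]
    linarith

/-- **Disk-in-connected-open-set claim.**  Given a countable family of nonempty open round disks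
in `S²` with pairwise disjoint closures and dense union, a point `p` lying in the closure of
none of them, and a connected open set `V` containing `p` in its closure, some disk is
contained in `V`. -/
theorem disk_in_connected_open_set
    (U : ℕ → Set Sph) (c : ℕ → Sph) (r : ℕ → ℝ)
    (hr : ∀ i, 0 < r i) (hball : ∀ i, U i = Metric.ball (c i) (r i))
    (hne : ∀ i, (U i).Nonempty)
    (hdisj : Pairwise fun i j => Disjoint (closure (U i)) (closure (U j)))
    (hdense : Dense (⋃ i, U i))
    (p : Sph) (hp : ∀ i, p ∉ closure (U i))
    (V : Set Sph) (hVopen : IsOpen V) (hVconn : IsConnected V) (hpV : p ∈ closure V) :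
    ∃ j, U j ⊆ V := by
  by_contra! hcon
  have : Fact (Module.finrank ℝ (EuclideanSpace ℝ (Fin 3)) = 2 + 1) := ⟨by simp⟩
  have : LocallyConnectedSpace Sph :=
    ChartedSpace.locallyConnectedSpace (EuclideanSpace ℝ (Fin 2)) Sph
  have : CompactSpace Sph := isCompact_iff_compactSpace.1 (isCompact_sphere _ _)
  have hcov : ∀ v ∈ V, ∃ i, v ∈ closure (U i) := by
    intro q hq
    by_contra! hqn
    obtain ⟨ε, hε, hεV⟩ := Metric.isOpen_iff.1 hVopen q hq
    have hfin : {i | ε / 4 ≤ r i}.Finite := by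
      refine finite_large c r hr (fun i j hij => ?_) _ (by linarith)
      have := hdisj hij
      beta_reduce
      rw [← hball, ← hball]
      exact this.mono subset_closure subset_closure
    have hcl : IsClosed (⋃ i ∈ {i | ε / 4 ≤ r i}, closure (U i)) :=
      hfin.isClosed_biUnion fun i _ => isClosed_closure
    have hO : IsOpen ((⋃ i ∈ {i | ε / 4 ≤ r i}, closure (U i))ᶜ ∩ ball q (ε / 4)) :=
      hcl.isOpen_compl.inter isOpen_ball
    obtain ⟨y, hy, hyU⟩ := hdense.inter_open_nonempty _ hO
      ⟨q, by simpa using fun i _ => hqn i, mem_ball_self (by linarith)⟩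
    obtain ⟨j, hj⟩ := mem_iUnion.1 hyU
    have hrj : r j < ε / 4 := by
      by_contra! h
      exact hy.1 (mem_biUnion (show j ∈ {i | ε / 4 ≤ r i} from h) (subset_closure hj))
    refine hcon j fun z hz => hεV ?_
    rw [hball, mem_ball] at hz hj
    have h1 := hy.2
    rw [mem_ball] at h1 ⊢
    have h2 := dist_triangle z (c j) q
    have h3 := dist_triangle_left (c j) q y
    linarith
  obtain ⟨i, hi⟩ := sierpinski_open (fun i => closure (U i)) (fun i => isClosed_closure)
    hdisj V hVopen hVconn hcov
  exact hp i (closure_minimal hi isClosed_closure hpV)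
end
end
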